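/- arXiv:0709.0564 — 2 statements merged into one kernel-verified Lean document; each statement's English description precedes it below -/
import Mathlib

section
/- Let Γ be a distance-regular graph with classical parameters (D, b, α, β), D ≥ 3, and intersection numbers a₁ = 0 and a₂ ≠ 0. Fix vertices x, y with ∂(x,y) = 3, set C = {z ∈ Γ₃(x) : B(x,z) = B(x,y)} and Δ = [x,C] = {v ∈ X : ∃ z ∈ C with ∂(x,v)+∂(v,z)=∂(x,z)}. Then the subgraph of Γ induced on Δ is regular with valency a₃ + c₃, is weak-geodetically closed, has diameter 3, and contains x and y. -/
/-!
Common definitions: distance-regular graphs (via an intersection-number function `p`),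
classical parameters, and the sets `B(x,y)`, `A(x,y)`, `C(x,y)`.
The distance `∂` is `SimpleGraph.dist`.
-/

variable {V : Type*}

/-- `Γ` is distance-regular with intersection numbers `p h i j = p^h_{ij}`
(for indices up to the diameter `D`). -/
def SimpleGraph.IsDistRegularWith (G : SimpleGraph V) (D : ℕ) (p : ℕ → ℕ → ℕ → ℕ) : Prop :=
  ∀ h i j : ℕ, h ≤ D → i ≤ D → j ≤ D → ∀ x y : V, G.dist x y = h →
    {z : V | G.dist x z = i ∧ G.dist y z = j}.ncard = p h i j

/-- The Gaussian bracket `[i] = 1 + b + b² + ⋯ + b^{i-1}`. -/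
def gaussBracket (b : ℝ) (i : ℕ) : ℝ := ∑ k ∈ Finset.range i, b ^ k

/-- A distance-regular graph with intersection numbers `p` has classical parameters
`(D, b, α, β)`: `b ∉ {0, -1}`, `c_i = [i](1 + α[i-1])` and `b_i = ([D]-[i])(β - α[i])`
for `0 ≤ i ≤ D`, where `c_i = p^i_{1,i-1}` and `b_i = p^i_{1,i+1}`. -/
def HasClassicalParams (D : ℕ) (p : ℕ → ℕ → ℕ → ℕ) (b α β : ℝ) : Prop :=
  b ≠ 0 ∧ b ≠ -1 ∧
    (∀ i ≤ D, (p i 1 (i - 1) : ℝ) = gaussBracket b i * (1 + α * gaussBracket b (i - 1))) ∧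
    (∀ i ≤ D, (p i 1 (i + 1) : ℝ) =
      (gaussBracket b D - gaussBracket b i) * (β - α * gaussBracket b i))

/-- `B(x,y) = Γ₁(x) ∩ Γ_{∂(x,y)+1}(y)`. -/
def Bset (G : SimpleGraph V) (x y : V) : Set V :=
  {v | G.dist x v = 1 ∧ G.dist y v = G.dist x y + 1}

/-- `A(x,y) = Γ₁(x) ∩ Γ_{∂(x,y)}(y)`. -/
def Aset (G : SimpleGraph V) (x y : V) : Set V :=
  {v | G.dist x v = 1 ∧ G.dist y v = G.dist x y}

/-- `C(x,y) = Γ₁(x) ∩ Γ_{∂(x,y)-1}(y)`. -/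
def Cset (G : SimpleGraph V) (x y : V) : Set V :=
  {v | G.dist x v = 1 ∧ G.dist y v = G.dist x y - 1}

/-- `C = {z ∈ Γ₃(x) : B(x,z) = B(x,y)}`. -/
def Cclass (G : SimpleGraph V) (x y : V) : Set V :=
  {z | G.dist x z = 3 ∧ Bset G x z = Bset G x y}

/-- `Δ = [x, C] = {v : ∃ z ∈ C, ∂(x,v) + ∂(v,z) = ∂(x,z)}`. -/
def Delta (G : SimpleGraph V) (x y : V) : Set V :=
  {v | ∃ z ∈ Cclass G x y, G.dist x v + G.dist v z = G.dist x z}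


class DRG (V : Type*) [Fintype V] where
  d : V → V → ℕ
  d0 : ∀ {x y : V}, d x y = 0 → x = y
  dd : ∀ x : V, d x x = 0
  cm : ∀ x y : V, d x y = d y x
  tr : ∀ x y z : V, d x z ≤ d x y + d y z
  stp : ∀ {x y : V} {n : ℕ}, d x y = n + 1 → ∃ z, d x z = 1 ∧ d z y = n
  b : ℝ
  c : ℕ
  a : ℕ
  c3 : ℕ
  a3 : ℕ
  hb : b ≤ -2
  hc : 1 ≤ c
  ha : 0 < a
  pa : (a : ℝ) = (1 + b) * (1 + b - c)
  pa3 : (a3 : ℝ) = (1 + b + b ^ 2) * a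
  pc3 : (c3 : ℝ) = (1 + b + b ^ 2) * (c - b)
  nt : ∀ {x y z : V}, d x y = 1 → d y z = 1 → d x z = 1 → False
  P : ∀ (i : ℕ), (i = 2 ∨ i = 3) → ∀ {x y z u : V}, d x y = 1 → d z u = 1 → d x u = i + 1 →
    d x z = i → d y z = i → d y u = i → False
  kC2 : ∀ {x y : V}, d x y = 2 →
    (Finset.univ.filter fun v => d x v = 1 ∧ d y v = 1).card = c
  kA2 : ∀ {x y : V}, d x y = 2 →
    (Finset.univ.filter fun v => d x v = 1 ∧ d y v = 2).card = a
  kC3 : ∀ {x y : V}, d x y = 3 →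
    (Finset.univ.filter fun v => d x v = 1 ∧ d y v = 2).card = c3
  kA3 : ∀ {x y : V}, d x y = 3 →
    (Finset.univ.filter fun v => d x v = 1 ∧ d y v = 3).card = a3
  kB : ∀ {x y x' y' : V}, d x y = d x' y' →
    (Finset.univ.filter fun v => d x v = 1 ∧ d y v = d x y + 1).card =
    (Finset.univ.filter fun v => d x' v = 1 ∧ d y' v = d x' y' + 1).card
  R2 : ∀ {x y : V} (w : V), d x y = 2 → d w x ≤ 4 → d w y ≤ 4 →
    (∑ v with (d x v = 1 ∧ d y v = 2), b ^ (5 - d w v)) -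
      (∑ v with (d y v = 1 ∧ d x v = 2), b ^ (5 - d w v))
      = (1 + b - c) * (b ^ (5 - d w x) - b ^ (5 - d w y))
  R3 : ∀ {x y : V} (w : V), d x y = 3 → d w x ≤ 4 → d w y ≤ 4 →
    (∑ v with (d y v = 1 ∧ d x v = 2), b ^ (5 - d w v)) -
      (∑ v with (d x v = 1 ∧ d y v = 2), b ^ (5 - d w v))
      = (c - b) * b * (b ^ (5 - d w y) - b ^ (5 - d w x))
  R3A : ∀ {x y : V} (w : V), d x y = 3 → d w x ≤ 4 → d w y ≤ 4 →
    (∑ v with (d x v = 1 ∧ d y v = 3), b ^ (5 - d w v)) -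
      (∑ v with (d y v = 1 ∧ d x v = 3), b ^ (5 - d w v))
      = a * (b + 1) * (b ^ (5 - d w x) - b ^ (5 - d w y))

namespace DRG

grind_pattern tr => d x y, d y z
grind_pattern cm => d x y
grind_pattern dd => d x x

variable {V : Type*} [Fintype V] [DRG V]

def Le (x y s : V) : Prop := ∀ g, d x g = 1 → d y g = d x y + 1 → d s g = d x s + 1

theorem le_refl (x y : V) : Le x y y := fun _ _ h => h

theorem le_trans {x y s r : V} (h : Le x y s) (h2 : Le x s r) : Le x y r := by
  intro g h1 h3
  exact h2 g h1 (h g h1 h3)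

theorem le_out {x y s g : V} (h : Le x y s) (h1 : d x g = 1) (h2 : d s g ≤ d x s) :
    d y g ≤ d x y := by
  have := h g h1
  grind

theorem le_symm {x y s : V} (h : Le x y s) (e : d x y = d x s) : Le x s y := by
  have hs : (Finset.univ.filter fun v => d x v = 1 ∧ d y v = d x y + 1) ⊆
      (Finset.univ.filter fun v => d x v = 1 ∧ d s v = d x s + 1) := by
    intro g hg
    simp only [Finset.mem_filter, Finset.mem_univ, true_and] at hg ⊢
    exact ⟨hg.1, h g hg.1 hg.2⟩
  have := Finset.eq_of_subset_of_card_le hs (kB e.symm).le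
  intro g h1 h2
  have h3 : g ∈ (Finset.univ.filter fun v => d x v = 1 ∧ d s v = d x s + 1) := by simp [h1, h2]
  rw [← this] at h3
  simp only [Finset.mem_filter, Finset.mem_univ, true_and] at h3
  exact h3.2

theorem bconst {x z w : V} (h : d z w = 1) (h2 : d x z = d x w) (h3 : d x z ≤ 3) : Le x z w := by
  intro g hg hz
  by_cases d x z = 0
  · grind [d0]
  by_cases d x z = 1
  · grind [nt]
  have := P (d x z) (by omega) (x := g) (y := x) (z := w) (u := z)
  grind

theorem bgeo {x z y : V} (h : d x z + d z y = d x y) : Le x y z := by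
  intro g hg hz
  grind

def Om (x y s : V) : Prop := d x s ≤ d x y ∧ Le x y s

theorem om_self (x y : V) : Om x y y := ⟨_root_.le_rfl, le_refl x y⟩

theorem om_step {x y s r : V} (h3 : d x y ≤ 3) (h : Om x y s) (h1 : d s r = 1)
    (h2 : d x r ≤ d x s) : Om x y r := by
  refine ⟨h2.trans h.1, ?_⟩
  rcases h2.eq_or_lt with e | e
  · exact le_trans h.2 (bconst h1 e.symm (h.1.trans h3))
  · exact le_trans h.2 (bgeo (by grind))

def BC (V : Type*) [Fintype V] [DRG V] (k : ℕ) : Prop :=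
  ∀ {x v y s : V}, d x v = 1 → d x y = k → d v y = k → Om x y s → Om v y s
def EE (V : Type*) [Fintype V] [DRG V] (k : ℕ) : Prop :=
  ∀ {x v y : V}, d x v = 1 → d x y = k → d v y + 1 = k →
    ∃ y', d y y' = 1 ∧ d x y' = k ∧ d v y' = k

theorem om_congr {x y y' : V} (h3 : d x y ≤ 3) (h : d y y' = 1) (e : d x y = d x y') (r : V) :
    Om x y r ↔ Om x y' r := by
  have h1 := bconst h e h3
  have h2 := le_symm h1 e
  constructor
  · intro ⟨p, q⟩; exact ⟨by omega, le_trans h2 q⟩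
  · intro ⟨p, q⟩; exact ⟨by omega, le_trans h1 q⟩

theorem MM {k : ℕ} (hk : k ≤ 3) (hBC : BC V k) (hE : EE V k) (n : ℕ) : ∀ {x y s : V}, d x y = k →
    Om x y s → d x s = n → ∃ ys, d s ys = k ∧ ∀ r, Om x y r ↔ Om s ys r := by
  induction n with
  | zero =>
    intro x y s h1 h2 h3
    have := d0 h3
    subst this
    exact ⟨y, h1, fun r => Iff.rfl⟩
  | succ n ih =>
    intro x y s h1 h2 h3
    obtain ⟨v, hv, hvs⟩ := stp h3
    have h4 : d v y ≤ k := by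
      have := le_out (g := v) (le_trans h2.2 (le_refl x s)) hv (by grind)
      grind
    obtain ⟨y', e1, e2, e3⟩ : ∃ y', d x y' = k ∧ d v y' = k ∧ ∀ r, Om x y r ↔ Om x y' r := by
      by_cases e : d v y = k
      · exact ⟨y, h1, e, fun r => Iff.rfl⟩
      · obtain ⟨y', e1, e2, e3⟩ := hE hv h1 (by grind)
        exact ⟨y', e2, e3, om_congr (by omega) e1 (by omega)⟩
    obtain ⟨ys, f1, f2⟩ := ih e2 (hBC hv e1 e2 ((e3 s).1 h2)) hvs
    refine ⟨ys, f1, fun r => ?_⟩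
    rw [e3, ← f2]
    exact ⟨hBC hv e1 e2, hBC (by rw [cm]; exact hv) e2 e1⟩

theorem Mdiam {k : ℕ} (hk : k ≤ 3) (hBC : BC V k) (hE : EE V k) {x y s r : V} (h : d x y = k)
    (hs : Om x y s) (hr : Om x y r) : d s r ≤ k := by
  obtain ⟨ys, e, f⟩ := MM hk hBC hE _ h hs rfl
  have := ((f r).1 hr).1
  omega

theorem wgc0 (n : ℕ) : ∀ {u y v w : V}, d u y ≤ 3 → Om u y w → d v w = n →
    d u v + d v w ≤ d u w + 1 → Om u y v := by
  induction n with
  | zero =>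
    intro u y v w h hw e _
    have := d0 e
    subst this
    exact hw
  | succ n ih =>
    intro u y v w h hw e f
    obtain ⟨w', h1, h2⟩ := stp (x := w) (y := v) (n := n) (by grind)
    have := tr u v w'
    have := tr u w' w
    have := cm w' v
    have := cm w' w
    exact ih h (om_step h hw h1 (by omega)) (by omega) (by omega)

theorem Mwgc {k : ℕ} (hk : k ≤ 3) (hBC : BC V k) (hE : EE V k) {x y u v w : V} (h : d x y = k)
    (hu : Om x y u) (hw : Om x y w) (f : d u v + d v w ≤ d u w + 1) : Om x y v := by
  obtain ⟨ys, e, g⟩ := MM hk hBC hE _ h hu rfl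
  rw [g] at hw ⊢
  exact wgc0 _ (by omega) hw rfl f

theorem D2 {x s y : V} (hs : d x s = 2) (hy : d x y = 2) (h : Le x s y) : d s y ≤ 2 := by
  obtain ⟨r, r1, r2⟩ := stp hs
  obtain ⟨q, q1, q2⟩ := stp hy
  have h' := le_symm h (by omega)
  have f1 := le_out h q1 (by grind)
  have f2 := le_out h' r1 (by grind)
  by_contra hcon
  have f3 : d r q = 2 := by
    have := @nt V _ _ r x q
    have := @d0 V _ _ r q
    grind
  have := P 2 (by simp) (x := s) (y := r) (z := q) (u := y)
  grind

theorem le_eq {x y s : V} (h : Le x y s) (e : d x y = d x s) (g : V) (hg : d x g = 1) :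
    d y g = d x y + 1 ↔ d s g = d x s + 1 :=
  ⟨h g hg, le_symm h e g hg⟩

theorem L2 {x y t : V} (h1 : d x y = 2) (h2 : d x t = 2) (h3 : d t y = 2) (h : Le t x y) :
    Le x y t := by
  intro g hg hy
  by_contra hc
  have h' := le_symm h (by grind)
  by_cases e : d g t = 1
  · have := h' g
    grind
  · have e2 : d g t = 2 := by grind
    have k1 : Le t g x := bconst (by grind) (by grind) (by grind)
    have k2 := D2 (by grind) (by grind) (le_trans k1 h)
    grind

theorem exA {x y : V} (h : d x y = 2) : ∃ v, d x v = 1 ∧ d y v = 2 := by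
  have h1 := kA2 h
  have h2 := ha (V := V)
  rw [← h1, Finset.card_pos] at h2
  obtain ⟨v, hv⟩ := h2
  exact ⟨v, by simpa using hv⟩

theorem EE2 : EE V 2 := by
  intro x v y h1 h2 h3
  obtain ⟨w, w1, w2⟩ := exA (x := y) (y := x) (by grind)
  refine ⟨w, w1, w2, ?_⟩
  have := @nt V _ _ v y w
  grind

theorem BC2 : BC V 2 := by
  intro x v y s h1 h2 h3 ⟨h4, h5⟩
  have hvs : d v s ≤ 2 := by
    by_cases d x s = 2
    · have := le_out (le_symm h5 (by omega)) h1 (by grind)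
      grind
    · grind
  refine ⟨by omega, ?_⟩
  have hsy : d s y ≤ 2 := by
    by_cases d x s = 2
    · have := D2 h2 (by assumption) h5
      grind
    · by_cases d x s = 0
      · have := d0 ‹d x s = 0›
        grind
      · have := le_out (g := s) h5 (by grind) (by grind)
        grind
  by_cases c0 : d x s = 0
  · have := d0 c0
    subst this
    intro g g1 g2
    have := @nt V _ _ x v g
    have := @d0 V _ _ x g
    grind
  by_cases c1 : d v s = 0
  · have := d0 c1
    subst this
    intro g g1 g2
    grind
  by_cases c2 : d x s = 1
  · have hvs2 : d v s = 2 := by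
      have := @nt V _ _ x v s
      grind
    by_cases c3 : d s y = 1
    · exact bconst (by grind) (by grind) (by grind)
    by_cases c4 : d s y = 2
    · have k1 : Le y v x := bconst (by grind) (by grind) (by grind)
      have k2 : Le y x s := bconst (by grind) (by grind) (by grind)
      exact le_symm (L2 hvs2 h3 (by grind) (le_trans k1 k2)) (by grind)
    have := @d0 V _ _ s y
    grind
  have c2 : d x s = 2 := by grind
  by_cases c3 : d s y = 0
  · have := d0 c3
    subst this
    exact le_refl _ _
  by_cases c4 : d s y = 1
  · by_cases d v s = 2
    · exact bconst (by grind) (by grind) (by grind)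
    · exact bgeo (by grind)
  have c5 : d s y = 2 := by grind
  by_cases c6 : d v s = 1
  · intro g g1 g2
    have := @nt V _ _ s v g
    have := @d0 V _ _ s g
    grind
  have c7 : d v s = 2 := by grind
  have k1 : Le s x y := le_symm (L2 (by grind) (by grind) (by grind) (le_symm h5 (by grind)))
    (by grind)
  have k2 : Le s v x := bconst (by grind) (by grind) (by grind)
  exact L2 h3 c7 (by grind) (le_trans k2 k1)

end DRG


namespace DRG
variable {V : Type*} [Fintype V] [DRG V]

theorem s1 (p : V → Prop) [DecidablePred p] (w : V) (m : ℕ) (h : ∀ v, p v → d w v = m) :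
    (∑ v with p v, (b V) ^ (5 - d w v)) = (Finset.univ.filter p).card * (b V) ^ (5 - m) := by
  rw [Finset.sum_congr rfl (g := fun _ => (b V) ^ (5 - m))]
  · simp
  · intro v hv
    rw [h v (by simpa using hv)]

theorem s2 (p : V → Prop) [DecidablePred p] (w : V) (m n : ℕ) (hmn : m ≠ n)
    (h : ∀ v, p v → d w v = m ∨ d w v = n) :
    ∃ i : ℕ, i = (Finset.univ.filter fun v => p v ∧ d w v = m).card ∧
    (∑ v with p v, (b V) ^ (5 - d w v)) = i * ((b V) ^ (5 - m) - (b V) ^ (5 - n)) +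
      (Finset.univ.filter p).card * (b V) ^ (5 - n) ∧ i ≤ (Finset.univ.filter p).card ∧
    (i = 0 → ∀ v, p v → d w v = n) ∧ (i = (Finset.univ.filter p).card → ∀ v, p v → d w v = m) := by
  refine ⟨_, rfl, ?_, ?_, ?_, ?_⟩
  · have h1 : ∀ v ∈ Finset.univ.filter p, (b V) ^ (5 - d w v) =
        (if d w v = m then ((b V) ^ (5 - m) - (b V) ^ (5 - n)) else 0) + (b V) ^ (5 - n) := by
      intro v hv
      rcases h v (by simpa using hv) with e | e
      · simp [e]
      · simp [e, hmn.symm]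
    rw [Finset.sum_congr rfl h1, Finset.sum_add_distrib, ← Finset.sum_filter, Finset.filter_filter]
    simp
    ring
  · apply Finset.card_le_card
    intro v
    simp +contextual
  · intro h0 v hv
    rw [Finset.card_eq_zero, Finset.filter_eq_empty_iff] at h0
    have := h0 (Finset.mem_univ v)
    have := h v hv
    tauto
  · intro h0 v hv
    have h1 : (Finset.univ.filter fun v => p v ∧ d w v = m) ⊆ Finset.univ.filter p := by
      intro v
      simp +contextual
    have := Finset.eq_of_subset_of_card_le h1 h0.ge
    have h3 : v ∈ Finset.univ.filter p := by simpa using hv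
    rw [← this] at h3
    simp at h3
    exact h3.2

theorem s3 (p : V → Prop) [DecidablePred p] (w : V) (m n k : ℕ) (hmn : m ≠ n) (hmk : m ≠ k)
    (hnk : n ≠ k) (h : ∀ v, p v → d w v = m ∨ d w v = n ∨ d w v = k) :
    (∑ v with p v, (b V) ^ (5 - d w v)) =
      (Finset.univ.filter fun v => p v ∧ d w v = m).card * ((b V) ^ (5 - m) - (b V) ^ (5 - k)) +
      (Finset.univ.filter fun v => p v ∧ d w v = n).card * ((b V) ^ (5 - n) - (b V) ^ (5 - k)) +
      (Finset.univ.filter p).card * (b V) ^ (5 - k) := by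
  have h1 : ∀ v ∈ Finset.univ.filter p, (b V) ^ (5 - d w v) =
      (if d w v = m then ((b V) ^ (5 - m) - (b V) ^ (5 - k)) else 0) +
      (if d w v = n then ((b V) ^ (5 - n) - (b V) ^ (5 - k)) else 0) + (b V) ^ (5 - k) := by
    intro v hv
    rcases h v (by simpa using hv) with e | e | e
    · simp [e, hmn]
    · simp [e, hmn.symm]
    · simp [e, hmk.symm, hnk.symm]
  rw [Finset.sum_congr rfl h1, Finset.sum_add_distrib, Finset.sum_add_distrib,
    ← Finset.sum_filter, ← Finset.sum_filter, Finset.filter_filter, Finset.filter_filter]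
  simp
  ring

theorem bne : (b V) * ((b V) - 1) ≠ 0 := by
  have := hb (V := V)
  nlinarith

theorem gate {w u g : V} (h1 : d w u = 2) (h2 : d w g = 4) (h3 : d u g = 2) :
    (∀ v, d u v = 1 ∧ d g v = 2 → d w v = 3) ∧ (∀ v, d g v = 1 ∧ d u v = 2 → d w v = 4) := by
  have r := R2 w h3 (by omega) (by omega)
  obtain ⟨i, -, e1, e2, e3, -⟩ := s2 (fun v => d u v = 1 ∧ d g v = 2) w 2 3 (by simp) (by
    intro v hv; grind)
  obtain ⟨j, -, f1, f2, f3, -⟩ := s2 (fun v => d g v = 1 ∧ d u v = 2) w 3 4 (by simp) (by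
    intro v hv; grind)
  rw [e1, f1, kA2 h3, kA2 (by rw [cm]; exact h3), h1, h2] at r
  simp only [Nat.reduceSub] at r
  have hb := hb (V := V)
  have pa := pa (V := V)
  have key : (i : ℝ) * b V - j = 0 := by
    apply mul_left_cancel₀ (bne (V := V))
    linear_combination r - (b V * (b V - 1)) * pa
  have hi : (0 : ℝ) ≤ i := by positivity
  have hj : (0 : ℝ) ≤ j := by positivity
  have : (i : ℝ) = 0 := by nlinarith
  have : (j : ℝ) = 0 := by nlinarith
  exact ⟨e3 (by exact_mod_cast ‹(i : ℝ) = 0›), f3 (by exact_mod_cast this)⟩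

theorem lam_neg : 1 + b V - (c V : ℝ) < 0 := by
  have := hb (V := V)
  have : (0 : ℝ) ≤ c V := by positivity
  linarith

theorem D3b {t y g : V} (h1 : d t y = 3) (h2 : d t g = 2) (h : Le t y g) : d g y ≤ 3 := by
  obtain ⟨q, q1, q2⟩ := stp h2
  have h4 := le_out h q1 (by grind)
  by_contra hcon
  have h5 : d y g = 4 := by grind
  have r := R2 y h2 (by grind) (by grind)
  have E : ∀ v, d t v = 1 ∧ d g v = 2 → d y v = 3 := by
    intro v ⟨v1, v2⟩
    have := le_out h v1 (by grind)
    by_contra hv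
    have := (gate (w := y) (u := v) (g := g) (by grind) h5 (by grind)).2 q
    have := @nt V _ _ q t v
    have := @d0 V _ _ q v
    grind
  obtain ⟨j, -, f1, f2, f3, -⟩ := s2 (fun v => d g v = 1 ∧ d t v = 2) y 3 4 (by simp) (by
    intro v hv
    obtain ⟨q, q1, q2⟩ := stp hv.2
    have h4 := le_out h q1 (by grind)
    grind)
  rw [s1 _ _ _ E, f1, kA2 h2, kA2 (by rw [cm]; exact h2), cm y t, h1, h5] at r
  rw [kA2 (by rw [cm]; exact h2)] at f2
  simp only [Nat.reduceSub] at r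
  have key : (a V : ℝ) - j = 1 + b V - c V := by
    apply mul_left_cancel₀ (bne (V := V))
    linear_combination r
  have := lam_neg (V := V)
  have : (j : ℝ) ≤ a V := by exact_mod_cast f2
  linarith

theorem D3a0 {x s y : V} (hs : d x s = 3) (hy : d x y = 3) (h : Le x s y) : d s y ≤ 4 := by
  obtain ⟨u, u1, u2⟩ := stp (x := y) (y := x) (n := 2) (by grind)
  have := D3b hs (g := u) (by grind) (le_trans h (bgeo (by grind)))
  grind

theorem D3a {x s y : V} (hs : d x s = 3) (hy : d x y = 3) (h : Le x s y) : d s y ≤ 3 := by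
  have h0 := D3a0 hs hy h
  have h' := le_symm h (by omega)
  by_contra hcon
  have h4 : d s y = 4 := by omega
  have hsx : d s x = 3 := by grind
  have hyx : d y x = 3 := by grind
  have E : ∀ u, d y u = 1 ∧ d x u = 2 → d s u = 3 := by
    intro u hu
    have := D3b hs (g := u) (by grind) (le_trans h (bgeo (by grind)))
    grind
  have r := R3 s hy (by grind) (by grind)
  obtain ⟨i, ei, e1, e2, -, -⟩ := s2 (fun v => d x v = 1 ∧ d y v = 2) s 2 3 (by simp) (by
    intro v hv
    have := le_out h hv.1 (by grind)
    grind)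
  rw [s1 _ _ _ E, e1, kC3 hy, kC3 hyx, h4, hsx] at r
  simp only [Nat.reduceSub] at r
  have hi : (i : ℝ) = c V - b V := by
    apply mul_left_cancel₀ (bne (V := V))
    apply mul_left_cancel₀ (a := b V) (by have := hb (V := V); linarith)
    linear_combination -r
  have r' := R3A s hy (by grind) (by grind)
  obtain ⟨k, ek, f1, f2, -, -⟩ := s2 (fun v => d x v = 1 ∧ d y v = 3) s 2 3 (by simp) (by
    intro v hv
    have := le_out h hv.1 (by grind)
    grind)
  obtain ⟨m, em, g1, g2, -, -⟩ := s2 (fun v => d y v = 1 ∧ d x v = 3) s 3 4 (by simp) (by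
    intro v hv
    have := D3a0 hs hv.2 (le_trans h (bconst hv.1 (by grind) (by grind)))
    grind)
  rw [f1, g1, kA3 hy, kA3 hyx, h4, hsx] at r'
  simp only [Nat.reduceSub] at r'
  have hk : (i : ℝ) + k = c3 V := by
    have : i + k = c3 V := by
      classical
      rw [← kC3 hs, ei, ek, ← Finset.card_union_of_disjoint]
      · congr 1
        ext v
        simp only [Finset.mem_union, Finset.mem_filter, Finset.mem_univ, true_and]
        constructor
        · grind
        · intro hv
          have := le_out h' hv.1 (by grind)
          grind
      · rw [Finset.disjoint_filter]
        grind
    exact_mod_cast this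
  have key : (m : ℝ) = b V ^ 2 * (1 + b V) := by
    apply mul_left_cancel₀ (bne (V := V))
    linear_combination -r' + (b V*(b V-1)) * (pa3 (V := V) + b V * hk - b V * hi + b V*pc3 (V := V)+ b V^2 * pa (V := V))
  have : (0 : ℝ) ≤ m := by positivity
  have := hb (V := V)
  nlinarith [sq_nonneg (b V)]

theorem D3 {t y g : V} (h1 : d t y = 3) (h : Om t y g) : d g y ≤ 3 := by
  obtain ⟨h2, h⟩ := h
  by_cases c3 : d t g = 3
  · have := D3a h1 c3 h
    grind
  by_cases c2 : d t g = 2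
  · exact D3b h1 c2 h
  by_cases c1 : d t g = 1
  · have := le_out h c1 (by grind)
    grind
  have := @d0 V _ _ t g
  grind

theorem L3 {x y t : V} (h1 : d x y = 3) (h2 : d x t = 3) (h3 : d t y = 3) (h : Le t x y) :
    Le x y t := by
  intro g g1 g2
  by_contra hc
  have h' := le_symm h (by grind)
  have := om_step (x := t) (y := x) (s := x) (r := g) (by grind) (om_self _ _) g1 (by grind)
  have := D3 (g := g) h3 ⟨by grind, le_trans h' this.2⟩
  grind

end DRG


namespace DRG
variable {V : Type*} [Fintype V] [DRG V]

theorem QC {x s y : V} (hs : d x s = 3) (hy : d x y = 3) (h : Le x s y) (hsy : d s y = 2) :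
    Le s x y := by
  intro p p1 p2
  by_contra hcon
  have h' := le_symm h (by omega)
  have hsx : d s x = 3 := by grind
  have hyx : d y x = 3 := by grind
  have hys : d y s = 2 := by grind
  have par : ∀ q, d x q = 1 → d q s = 3 → d p q = 3 → False := by
    intro q q1 q2 q3
    have := P 3 (by simp) (x := x) (y := q) (z := s) (u := p)
    grind
  have cnt : d p y = 2 → ∀ q, ((d x q = 1 ∧ d y q = 2) ∧ d p q = 3) ↔
      ((d x q = 1 ∧ d s q = 2) ∧ d y q = 2) := by
    intro hpy q
    constructor
    · intro hq
      have := par q hq.1.1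
      have := le_out h hq.1.1 (by grind)
      grind
    · intro hq
      grind
  have cnt1 : d p y = 1 → ∀ q, ((d x q = 1 ∧ d s q = 2) ∧ d y q = 2) ↔
      (d x q = 1 ∧ d y q = 2) := by
    intro hpy q
    constructor
    · tauto
    · intro hq
      have := par q hq.1
      have := le_out h hq.1 (by grind)
      grind
  have hb := hb (V := V)
  have r := R3 y hs (by grind) (by grind)
  rw [s3 (fun v => d s v = 1 ∧ d x v = 2) y 1 2 3 (by simp) (by simp) (by simp) (by
    intro v hv; grind)] at r
  obtain ⟨i, ei, e1, e2, -, -⟩ := s2 (fun v => d x v = 1 ∧ d s v = 2) y 2 3 (by simp) (by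
    intro v hv
    have := le_out h' hv.1 (by grind)
    grind)
  rw [e1, kC3 hs, kC3 hsx, hys, hyx] at r
  generalize hi1 : (Finset.univ.filter fun v => (d s v = 1 ∧ d x v = 2) ∧ d y v = 1).card = i1 at r
  generalize hi2 : (Finset.univ.filter fun v => (d s v = 1 ∧ d x v = 2) ∧ d y v = 2).card = i2 at r
  have l1 : (i1 : ℝ) ≤ c V := by
    rw [← hi1, ← kC2 hsy]
    apply Nat.cast_le.2 (Finset.card_le_card _)
    intro v
    simp only [Finset.mem_filter, Finset.mem_univ, true_and]
    tauto
  have l2 : (i2 : ℝ) ≤ a V := by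
    rw [← hi2, ← kA2 hsy]
    apply Nat.cast_le.2 (Finset.card_le_card _)
    intro v
    simp only [Finset.mem_filter, Finset.mem_univ, true_and]
    tauto
  have z1 : (0 : ℝ) ≤ i1 := by positivity
  have z2 : (0 : ℝ) ≤ i2 := by positivity
  have z3 : (1 : ℝ) ≤ c V := by exact_mod_cast hc (V := V)
  simp only [Nat.reduceSub] at r
  have key : (i : ℝ) = i1 * (b V + 1) + i2 - (c V - b V) * b V := by
    apply mul_left_cancel₀ (bne (V := V))
    apply mul_left_cancel₀ (a := b V) (by linarith)
    linear_combination -r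
  by_cases hpy : d p y = 1
  · have : i = c3 V := by
      rw [ei, ← kC3 hy]
      congr 1
      ext q
      simp only [Finset.mem_filter, Finset.mem_univ, true_and]
      exact cnt1 hpy q
    have : (i : ℝ) = c3 V := by exact_mod_cast this
    have e := pc3 (V := V)
    have e' := pa (V := V)
    nlinarith [sq_nonneg (1 + b V), mul_nonneg (by linarith : 0 ≤ -(1 + b V)) (by linarith : 0 ≤ -(2 + b V)), mul_nonneg z1 (by linarith : 0 ≤ -(1 + b V)), mul_nonneg (mul_nonneg (by linarith : 0 ≤ -(1 + b V)) (by linarith : 0 ≤ -(2 + b V))) (by linarith : (0:ℝ) ≤ c V)]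
  · have hpy2 : d p y = 2 := by
      have := @d0 V _ _ p y
      grind
    have hpx : d p x = 4 := by grind
    have r' := R3 p hy (by grind) (by grind)
    obtain ⟨i', ei', f1, f2, -, -⟩ := s2 (fun v => d x v = 1 ∧ d y v = 2) p 3 4 (by simp) (by
      intro v hv
      grind)
    obtain ⟨j, ej, g1, g2, -, -⟩ := s2 (fun v => d y v = 1 ∧ d x v = 2) p 2 3 (by simp) (by
      intro v hv
      grind)
    rw [f1, g1, kC3 hy, kC3 hyx, hpy2, hpx] at r'
    have : i' = i := by
      rw [ei', ei]
      congr 1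
      ext q
      simp only [Finset.mem_filter, Finset.mem_univ, true_and]
      exact cnt hpy2 q
    rw [this] at r'
    simp only [Nat.reduceSub] at r'
    have key2 : (i : ℝ) - j * b V = c V - b V := by
      apply mul_left_cancel₀ (bne (V := V))
      linear_combination -r' + b V * (b V - 1) * pc3 (V := V)
    have : (0 : ℝ) ≤ j := by positivity
    nlinarith

theorem s3z (p : V → Prop) [DecidablePred p] (w : V) (k : ℕ) (hk : k = 2 ∨ k = 3)
    (h : ∀ v, p v → d w v + 1 = k ∨ d w v = k ∨ d w v = k + 1)
    (hs : (∑ v with p v, (b V) ^ (5 - d w v)) = (Finset.univ.filter p).card * (b V) ^ (5 - k)) :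
    ∀ v, p v → d w v = k := by
  have r := s3 p w (k - 1) (k + 1) k (by omega) (by omega) (by omega) (by
    intro v hv
    have := h v hv
    omega)
  rw [hs] at r
  generalize hi : (Finset.univ.filter fun v => p v ∧ d w v = k - 1).card = i at r
  generalize hj : (Finset.univ.filter fun v => p v ∧ d w v = k + 1).card = j at r
  have hb := hb (V := V)
  have z1 : (0 : ℝ) ≤ i := by positivity
  have z2 : (0 : ℝ) ≤ j := by positivity
  have key : (i : ℝ) * (-b V) + j = 0 := by
    rcases hk with rfl | rfl
    · simp only [Nat.reduceSub, Nat.reduceAdd] at r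
      apply mul_left_cancel₀ (bne (V := V))
      apply mul_left_cancel₀ (a := b V) (by linarith)
      linear_combination r
    · simp only [Nat.reduceSub, Nat.reduceAdd] at r
      apply mul_left_cancel₀ (bne (V := V))
      linear_combination r
  have i0 : i = 0 := by
    have : (i : ℝ) = 0 := by nlinarith
    exact_mod_cast this
  have j0 : j = 0 := by
    have : (j : ℝ) = 0 := by nlinarith
    exact_mod_cast this
  rw [i0, Finset.card_eq_zero, Finset.filter_eq_empty_iff] at hi
  rw [j0, Finset.card_eq_zero, Finset.filter_eq_empty_iff] at hj
  intro v hv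
  have h1 := hi (Finset.mem_univ v)
  have h2 := hj (Finset.mem_univ v)
  have h3 := h v hv
  have h4 : d w v ≠ k - 1 := fun h => h1 ⟨hv, h⟩
  have h5 : d w v ≠ k + 1 := fun h => h2 ⟨hv, h⟩
  omega

theorem BCmain {x v s y : V} (h1 : d x v = 1) (xs : d x s = 3) (xy : d x y = 3) (vs : d v s = 3)
    (vy : d v y = 3) (h : Le x s y) : Le v s y := by
  have sy := D3a xs xy h
  have h' := le_symm h (by omega)
  by_cases c0 : d s y = 0
  · rw [d0 c0]
    exact le_refl _ _
  by_cases c1 : d s y = 1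
  · exact bconst c1 (by omega) (by omega)
  by_cases c3 : d s y = 3
  · have k1 : Le s y x := L3 c3 (by grind) (by grind) h
    have k2 : Le s x v := bconst h1 (by grind) (by grind)
    have k3 := le_symm (le_trans k1 k2) (by grind)
    exact le_symm (L3 vy vs c3 k3) (by grind)
  have c2 : d s y = 2 := by omega
  have q1 := QC xs xy h c2
  have q2 : Le s v x := bconst (by grind) (by grind) (by grind)
  have q3 := le_trans q2 q1
  refine le_symm ?_ (by omega)
  by_contra hcon
  unfold Le at hcon
  push Not at hcon
  obtain ⟨g, g1, g2, g3⟩ := hcon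
  by_cases e : d g s = 3
  · have k1 : Le s g v := bconst (by grind) (by grind) (by grind)
    have := D3b (t := s) (y := g) (g := y) (by grind) c2 (le_trans k1 q3)
    grind
  have e2 : d g s = 2 := by grind
  have G := gate (w := g) (u := s) (g := y) e2 (by grind) c2
  have A1 : ∀ p, d y p = 1 ∧ d s p = 2 → d v p = 3 := by
    intro p hp
    have := G.2 p hp
    have hxp : d x p ≤ 3 := by
      obtain ⟨r, r1, r2⟩ := stp hp.2
      have := le_out q1 r1 (by grind)
      have hsr : d x r ≤ 3 := by grind
      have := om_step (x := x) (y := s) (s := s) (r := r) (by omega) (om_self _ _) r1 (by omega)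
      by_contra hc
      have hxp : d x p = 4 := by grind
      have := QC xy xs h' (by grind) p
      grind
    have := om_step (x := x) (y := y) (s := y) (r := p) (by omega) (om_self _ _) hp.1 (by omega)
    have : d v p ≤ 3 := by
      by_cases d x p = 3
      · have := le_out (le_symm this.2 (by omega)) h1 (by grind)
        grind
      · grind
    grind
  have r := R2 v c2 (by omega) (by omega)
  rw [s1 _ _ _ A1, kA2 (by grind), vs, vy] at r
  obtain ⟨p, hp⟩ := exA c2
  have A2 := s3z (fun v => d s v = 1 ∧ d y v = 2) v 3 (by simp) (by
    clear r
    intro u hu; grind) (by rw [kA2 c2]; linarith) p hp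
  clear r
  obtain ⟨p', p1, p2⟩ := stp (x := p) (y := y) (n := 1) (by grind)
  have A3 := A1 p' (by
    have := @nt V _ _ s p p'
    grind)
  have k1 : Le v y p' := bconst (by grind) (by grind) (by grind)
  have k2 : Le v p' p := bconst (by grind) (by grind) (by grind)
  have k3 : Le v p s := bconst (by grind) (by grind) (by grind)
  exact g3 (le_trans (le_trans k1 k2) k3 g g1 g2)

end DRG


namespace DRG
variable {V : Type*} [Fintype V] [DRG V]

theorem cb_pos : (0 : ℝ) < c V - b V := by
  have := hb (V := V)
  have : (0 : ℝ) ≤ c V := by positivity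
  linarith

theorem EE3 : EE V 3 := by
  intro x v y h1 h2 h3
  by_contra hcon
  push Not at hcon
  have hs : (Finset.univ.filter fun u => d y u = 1 ∧ d x u = 3) ⊆
      (Finset.univ.filter fun u => d y u = 1 ∧ d v u = 2) := by
    intro u
    simp only [Finset.mem_filter, Finset.mem_univ, true_and]
    intro hu
    have := hcon u
    grind
  have h := Finset.card_le_card hs
  rw [kA3 (by grind), kA2 (by grind)] at h
  have h' : (a3 V : ℝ) ≤ a V := by exact_mod_cast h
  have := hb (V := V)
  have e := pa3 (V := V)
  have : (0 : ℝ) < a V := by exact_mod_cast ha (V := V)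
  nlinarith [mul_nonneg (by linarith : 0 ≤ -(b V + 2)) (by linarith : 0 ≤ -(b V + 1))]

theorem BCl3 {x v y s : V} (h1 : d x v = 1) (xy : d x y = 3) (vy : d v y = 3) (xs : d x s = 3)
    (h : Le x y s) : Om v y s := by
  have h' := le_symm h (by omega)
  have := le_out h' h1 (by grind)
  by_cases c3 : d v s = 3
  · exact ⟨by omega, BCmain h1 xy xs vy c3 h⟩
  · obtain ⟨y', f1, f2, f3⟩ := EE3 h1 xs (by grind)
    have k1 : Le x s y' := bconst f1 (by omega) (by omega)
    exact ⟨by grind, le_trans (BCmain h1 xy f2 vy f3 (le_trans h k1)) (bgeo (by grind))⟩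

theorem NN {x v y : V} (h1 : d x v = 1) (xy : d x y = 3) (vy : d v y = 3) :
    ((Finset.univ.filter fun u => (d y u = 1 ∧ d x u = 2) ∧ d v u = 2).card : ℝ) = c V - b V := by
  have hyx : d y x = 3 := by grind
  have hvx : d v x = 1 := by grind
  have E : ∀ q, d x q = 1 ∧ d y q = 2 → d v q = 2 := by
    intro q hq
    have := @nt V _ _ v x q
    have := @d0 V _ _ v q
    grind
  obtain ⟨i, ei, e1, e2, -, -⟩ := s2 (fun u => d y u = 1 ∧ d x u = 2) v 2 3 (by simp) (by
    intro v hv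
    grind)
  have r := R3 v xy (by omega) (by omega)
  rw [e1, s1 _ _ _ E, kC3 xy, kC3 hyx, vy, hvx] at r
  rw [← ei]
  simp only [Nat.reduceSub] at r
  apply mul_left_cancel₀ (bne (V := V))
  apply mul_left_cancel₀ (a := b V) (by have := hb (V := V); linarith)
  linear_combination r + b V * (b V * (b V - 1)) * pc3 (V := V)

theorem II {x v y g q : V} (h1 : d x v = 1) (xy : d x y = 3) (vy : d v y = 3) (g1 : d v g = 1)
    (g2 : d y g = 4) (q1 : d x q = 1) (q2 : d y q = 2) : d g q = 3 := by
  have hyx : d y x = 3 := by grind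
  have hgy : d g y = 4 := by grind
  have hgx : d g x = 2 := by
    have := @nt V _ _ g v x
    grind
  have E : ∀ u, ((d y u = 1 ∧ d x u = 2) ∧ d g u = 3) ↔ ((d y u = 1 ∧ d x u = 2) ∧ d v u = 2) := by
    intro u
    constructor
    · intro hu
      have := P 3 (by simp) (x := g) (y := v) (z := u) (u := y)
      grind
    · intro hu
      grind
  obtain ⟨j, ej, f1, f2, f3, -⟩ := s2 (fun v => d x v = 1 ∧ d y v = 2) g 2 3 (by simp) (by
    intro v hv
    grind)
  obtain ⟨i, ei, e1, e2, -, -⟩ := s2 (fun u => d y u = 1 ∧ d x u = 2) g 3 4 (by simp) (by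
    intro v hv
    grind)
  have r := R3 g xy (by omega) (by omega)
  rw [e1, f1, kC3 xy, kC3 hyx, hgy, hgx] at r
  simp only [Nat.reduceSub] at r
  have hi : (i : ℝ) = c V - b V := by
    rw [← NN h1 xy vy, ei]
    congr 2
    ext u
    simpa using E u
  have hj : (j : ℝ) = 0 := by
    apply mul_left_cancel₀ (bne (V := V))
    apply mul_left_cancel₀ (a := b V) (by have := hb (V := V); linarith)
    linear_combination -r - (b V * (b V - 1)) * pc3 (V := V) + (b V * (b V - 1)) * hi
  exact f3 (by exact_mod_cast hj) q ⟨q1, q2⟩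

theorem X1 {x s y : V} (h1 : d x s = 1) (xy : d x y = 3) (sy : d s y = 3) :
    ∃ z, d y z = 1 ∧ d s z = 2 ∧ d x z = 3 := by
  by_contra hcon
  push Not at hcon
  have hs : (Finset.univ.filter fun u => d y u = 1 ∧ d s u = 2) ⊆
      (Finset.univ.filter fun u => (d y u = 1 ∧ d x u = 2) ∧ d s u = 2) := by
    intro u
    simp only [Finset.mem_filter, Finset.mem_univ, true_and]
    intro hu
    have := hcon u
    grind
  have h := Finset.card_le_card hs
  have h' := NN h1 xy sy
  rw [kC3 (by grind)] at h
  have h2 : (c3 V : ℝ) ≤ c V - b V := by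
    rw [← h']
    exact_mod_cast h
  have := hb (V := V)
  have e := pc3 (V := V)
  have := cb_pos (V := V)
  nlinarith [mul_nonneg (by linarith : 0 ≤ -(b V + 2)) (by linarith : 0 ≤ -(b V + 1))]

theorem X2 {x s v z : V} (hs : d x s = 1) (hv : d x v = 1) (sv : s ≠ v) (xz : d x z = 3)
    (sz : d s z = 2) (vz : d v z = 2) : ∃ z', d z z' = 1 ∧ d s z' = 2 ∧ d x z' = 3 ∧ d v z' = 3 := by
  have hvs : d v s = 2 := by
    have := @nt V _ _ v x s
    have := @d0 V _ _ s v
    grind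
  by_contra hcon
  push Not at hcon
  have A1 : ∀ u, d z u = 1 ∧ d s u = 2 → d v u = 2 := by
    intro u hu
    have := hcon u
    have := P 2 (by simp) (x := x) (y := s) (z := u) (u := z)
    grind
  obtain ⟨p, hp⟩ := exA sz
  have A0 : ∀ u, d s u = 1 ∧ d z u = 2 → d v u + 1 = 2 ∨ d v u = 2 ∨ d v u = 2 + 1 := by
    intro u hu; grind
  have r := R2 v sz (by omega) (by omega)
  rw [s1 _ _ _ A1, kA2 (by grind), hvs, vz] at r
  have A2 := s3z (fun u => d s u = 1 ∧ d z u = 2) v 2 (by simp) A0 (by rw [kA2 sz]; linarith) p hp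
  clear r
  obtain ⟨p', p1, p2⟩ := stp (x := p) (y := z) (n := 1) (by grind)
  have A3 := A1 p' (by
    have := @nt V _ _ s p p'
    grind)
  have k1 : Le v z p' := bconst (by grind) (by grind) (by grind)
  have k2 : Le v p' p := bconst (by grind) (by grind) (by grind)
  have k3 : Le v p s := bconst (by grind) (by grind) (by grind)
  have := le_trans (le_trans k1 k2) k3 x
  grind

theorem ZZ {x v s y : V} (hs : d x s = 1) (hv : d x v = 1) (sv : s ≠ v) (xy : d x y = 3)
    (vy : d v y = 3) (sy : d s y ≤ 3) :
    ∃ z, d x z = 3 ∧ d v z = 3 ∧ d s z = 2 ∧ Le x y z ∧ Le v y z := by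
  obtain ⟨z0, a1, a2, a3⟩ : ∃ z, d x z = 3 ∧ d s z = 2 ∧ Le x y z := by
    by_cases d s y = 2
    · exact ⟨y, xy, by assumption, le_refl _ _⟩
    · obtain ⟨z, z1, z2, z3⟩ := X1 hs xy (by grind)
      exact ⟨z, z3, z2, bconst z1 (by omega) (by omega)⟩
  obtain ⟨z, e1, e2, e3, e4⟩ : ∃ z, d x z = 3 ∧ d v z = 3 ∧ d s z = 2 ∧ Le x y z := by
    have := le_out (le_symm a3 (by omega)) hv (by grind)
    by_cases d v z0 = 3
    · exact ⟨z0, a1, by assumption, a2, a3⟩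
    · obtain ⟨z, z1, z2, z3, z4⟩ := X2 hs hv sv a1 a2 (by grind)
      exact ⟨z, z3, z4, z2, le_trans a3 (bconst z1 (by omega) (by omega))⟩
  exact ⟨z, e1, e2, e3, e4, BCmain hv xy e1 vy e2 e4⟩

theorem BCl1 {x v y s : V} (hv : d x v = 1) (xy : d x y = 3) (vy : d v y = 3) (hs : d x s = 1)
    (sy : d s y ≤ 3) : Om v y s := by
  refine ⟨by grind, ?_⟩
  by_cases e : s = v
  · subst e
    intro g g1 g2
    grind
  obtain ⟨z, z1, z2, z3, z4, z5⟩ := ZZ hs hv e xy vy sy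
  intro g g1 g2
  have := z5 g g1 g2
  have := II hv z1 z2 g1 (by grind) hs (by grind)
  have := @nt V _ _ v x s
  have := @d0 V _ _ s v
  grind

end DRG


namespace DRG
variable {V : Type*} [Fintype V] [DRG V]

theorem Y1 {x y s r y' : V} (xy : d x y = 3) (xs : d x s = 2) (h : Le x y s) (xr : d x r = 1)
    (rs : d r s = 1) (xy' : d x y' = 3) (hy : Le x y y') (ry : d r y' = 3) : d s y' ≤ 3 := by
  by_contra hcon
  obtain ⟨w, w1, w2⟩ := exA xs
  have hw : d r w = 2 := by
    have := @nt V _ _ w x r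
    have := @d0 V _ _ w r
    grind
  by_cases e : d y w = 4
  · have := h w w1
    grind
  · have k1 : d y' w ≤ 3 := by
      have := le_symm hy (by omega) w w1
      grind
    have k2 := (BCl1 xr xy' ry w1 (by grind)).2 s
    grind

theorem Y2 {x y s : V} (xy : d x y = 3) (xs : d x s = 2) (h : Le x y s) :
    ∃ z, d x z = 3 ∧ d s z = 2 ∧ Le x y z := by
  obtain ⟨r, xr, rs⟩ := stp xs
  have k0 := le_out h xr (by grind)
  obtain ⟨y', f1, f2, f3⟩ : ∃ y', d x y' = 3 ∧ d r y' = 3 ∧ Le x y y' := by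
    by_cases d r y = 3
    · exact ⟨y, xy, by assumption, le_refl _ _⟩
    · obtain ⟨y', e1, e2, e3⟩ := EE3 xr xy (by grind)
      exact ⟨y', e2, e3, bconst e1 (by omega) (by omega)⟩
  have k1 := Y1 xy xs h xr rs f1 f3 f2
  obtain ⟨z, z1, z2, z3, z4, z5⟩ := ZZ (x := r) (v := x) (s := s) (y := y') rs (by grind)
    (by rintro rfl; grind) f2 f1 k1
  exact ⟨z, z2, z3, le_trans f3 z5⟩

theorem Y3 {x y s : V} (xy : d x y = 3) (xs : d x s = 2) (h : Le x y s) :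
    ∃ z, d x z = 3 ∧ d s z = 1 ∧ Le x y z := by
  obtain ⟨z, xz, sz, hz⟩ := Y2 xy xs h
  by_cases hex : ∃ t, d s t = 1 ∧ d t z = 1 ∧ d x t = 3
  · obtain ⟨t, t1, t2, t3⟩ := hex
    exact ⟨t, t3, t1, le_trans hz (bconst (by grind) (by omega) (by omega))⟩
  push Not at hex
  obtain ⟨t0, a1, a2⟩ := stp sz
  have a3 : d x t0 = 2 := by
    have := hex t0 a1 a2
    grind
  have zs : d z s = 2 := by grind
  have A : ∀ t, d s t = 1 ∧ d z t = 2 → d x t = 3 := by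
    intro t ht
    have e : d t t0 = 2 := by
      have := @nt V _ _ t s t0
      have := @d0 V _ _ t t0
      grind
    by_contra hcon
    by_cases e1 : d x t = 1
    · have := P 2 (by simp) (x := x) (y := t) (z := t0) (u := z)
      grind
    · have k0 := om_self x s
      have k1 := om_step (r := t) (by omega) k0 ht.1 (by grind)
      have k2 := om_step (r := t0) (by omega) k0 a1 (by grind)
      have := (Mwgc (v := z) (by simp) BC2 EE2 xs k1 k2 (by grind)).1
      omega
  have Bx : ∀ p, d z p = 1 ∧ d s p = 2 → d x p = 2 ∨ d x p = 3 := by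
    intro p hp
    have := @gate V _ _ x s p xs
    have := fun h1 h2 => (this h1 h2).2 z
    grind
  obtain ⟨j, ej, e1, -, -, -⟩ := s2 (fun p => d z p = 1 ∧ d s p = 2) x 2 3 (by simp) Bx
  have r := R2 x sz (by omega) (by omega)
  rw [s1 _ _ _ A, e1, kA2 sz, kA2 zs, xs, xz] at r
  simp only [Nat.reduceSub] at r
  have hj : (j : ℝ) = -(1 + b V - c V) := by
    apply mul_left_cancel₀ (bne (V := V))
    apply mul_left_cancel₀ (a := b V) (by have := hb (V := V); linarith)
    linear_combination -r
  clear r e1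
  obtain ⟨t, ht⟩ := exA sz
  refine ⟨t, A t ht, ht.1, ?_⟩
  intro w w1 w2
  have ws : d w s = 3 := by
    have := h w w1
    grind
  have wz : d w z = 4 := by
    have := hz w w1
    grind
  have Bw1 : ∀ p, d z p = 1 ∧ d s p = 2 → d w p = d x p + 1 := by
    intro p hp
    have h1 := Bx p hp
    have h2 : Le x z p := by
      rcases h1 with h1 | h1
      · exact bgeo (by grind)
      · exact bconst (by grind) (by grind) (by grind)
    have := h2 w w1
    grind
  have Bw : ∀ p, ((d z p = 1 ∧ d s p = 2) ∧ d w p = 3) ↔ ((d z p = 1 ∧ d s p = 2) ∧ d x p = 2) := by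
    intro p
    have := Bw1 p
    omega
  have Bw2 : ∀ p, d z p = 1 ∧ d s p = 2 → d w p = 3 ∨ d w p = 4 := by
    intro p hp
    have h1 := Bx p hp
    have := Bw1 p hp
    omega
  have Aw : ∀ u, d s u = 1 ∧ d z u = 2 → d w u = 3 ∨ d w u = 4 := by
    intro u hu
    have h1 := A u hu
    have := @gate V _ _ w u z
    have := fun h1 h2 h3 => (this h1 h2 h3).2 t0
    have := @nt V _ _ u s t0
    have := @d0 V _ _ u t0
    grind
  obtain ⟨j', ej', f1, -, -, -⟩ := s2 (fun p => d z p = 1 ∧ d s p = 2) w 3 4 (by simp) Bw2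
  obtain ⟨i, ei, g1, -, g3, -⟩ := s2 (fun p => d s p = 1 ∧ d z p = 2) w 3 4 (by simp) Aw
  have r := R2 w sz (by omega) (by omega)
  have : j' = j := by
    rw [ej', ej]
    congr 1
    ext p
    simpa using Bw p
  rw [f1, g1, kA2 sz, kA2 zs, ws, wz, this] at r
  simp only [Nat.reduceSub] at r
  have hi : (i : ℝ) = 0 := by
    apply mul_left_cancel₀ (bne (V := V))
    linear_combination r + (b V * (b V - 1)) * hj
  have := g3 (by exact_mod_cast hi) t ht
  have := A t ht
  clear r f1 g1
  grind

theorem SC {x r z p : V} (rx : d r x = 1) (rz : d r z = 2) (xz : d x z = 3) (hp : Om r z p)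
    (rp : d r p = 2) : d x p = 3 ∧ Le x z p := by
  have K : ∀ {e}, Om r z e → d r e = 2 → d x e = 3 := by
    intro e he h2
    have := he.2 x rx
    grind
  have xp := K hp rp
  refine ⟨xp, ?_⟩
  have W : ∀ {u v w}, Om r z u → Om r z w → d u v + d v w ≤ d u w + 1 → Om r z v :=
    fun h1 h2 h3 => Mwgc (by simp) BC2 EE2 rz h1 h2 h3
  have J : ∀ {u w : V}, d x u = 3 → d x w = 3 → d u w = 1 → Le x u w := by
    intro u w h1 h2 h3
    exact bconst h3 (by omega) (by omega)
  have zp := Mdiam (by simp) BC2 EE2 rz (om_self r z) hp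
  by_cases c0 : d z p = 0
  · rw [d0 c0]
    exact le_refl _ _
  by_cases c1 : d z p = 1
  · exact J xz xp c1
  have c2 : d z p = 2 := by omega
  by_cases hex : ∃ e, d z e = 1 ∧ d e p = 1 ∧ d r e ≠ 1
  · obtain ⟨e, e1, e2, e3⟩ := hex
    have he := W (v := e) (om_self r z) hp (by grind)
    have := he.1
    have xe := K he (by grind)
    exact le_trans (J xz xe e1) (J xe xp e2)
  push Not at hex
  obtain ⟨s0, a1, a2⟩ := stp c2
  have a3 := hex s0 a1 a2
  obtain ⟨t, t1, t2⟩ := exA (x := z) (y := r) (by grind)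
  have ht : Om r z t := om_step (by omega) (om_self r z) t1 (by omega)
  have xt := K ht t2
  have tp := Mdiam (by simp) BC2 EE2 rz ht hp
  by_cases b0 : d t p = 0
  · have := d0 b0
    grind
  by_cases b1 : d t p = 1
  · exact le_trans (J xz xt t1) (J xt xp b1)
  have b2 : d t p = 2 := by omega
  by_cases hex' : ∃ e, d p e = 1 ∧ d t e = 1 ∧ d r e ≠ 1
  · obtain ⟨e, e1, e2, e3⟩ := hex'
    have he := W (v := e) ht hp (by grind)
    have := he.1
    have xe := K he (by grind)
    exact le_trans (J xz xt t1) (le_trans (J xt xe e2) (J xe xp (by grind)))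
  push Not at hex'
  exfalso
  have hs : (Finset.univ.filter fun e => d p e = 1 ∧ d t e = 1) ⊆
      (Finset.univ.filter fun e => d p e = 1 ∧ d r e = 1) := by
    intro e
    simp only [Finset.mem_filter, Finset.mem_univ, true_and]
    intro he
    exact ⟨he.1, hex' e he.1 he.2⟩
  have hE := Finset.eq_of_subset_of_card_le hs (by rw [kC2 (by grind), kC2 (by grind)])
  have : s0 ∈ (Finset.univ.filter fun e => d p e = 1 ∧ d r e = 1) := by
    simp only [Finset.mem_filter, Finset.mem_univ, true_and]
    grind
  rw [← hE] at this
  simp only [Finset.mem_filter, Finset.mem_univ, true_and] at this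
  exact nt (x := s0) (y := t) (z := z) (by grind) (by grind) (by grind)

def HH (v g u : V) : ℝ := b V * b V ^ (5 - d g u) - b V ^ (5 - d v u)

theorem R2H {v g p q : V} (pq : d p q = 2) (h1 : d v p ≤ 4) (h2 : d v q ≤ 4) (h3 : d g p ≤ 4)
    (h4 : d g q ≤ 4) : (∑ u with (d p u = 1 ∧ d q u = 2), HH v g u) -
      (∑ u with (d q u = 1 ∧ d p u = 2), HH v g u) = (1 + b V - c V) * (HH v g p - HH v g q) := by
  have r1 := R2 v pq h1 h2
  have r2 := R2 g pq h3 h4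
  unfold HH
  simp only [Finset.sum_sub_distrib, ← Finset.mul_sum]
  linear_combination b V * r2 - r1

theorem H0 {v g u : V} (h : d g u = d v u + 1) (h2 : d v u ≤ 4) : HH v g u = 0 := by
  unfold HH
  rw [h, ← pow_succ', show 5 - (d v u + 1) + 1 = 5 - d v u by omega, sub_self]

theorem H0' {v g u : V} (vg : d v g = 1) (h : HH v g u = 0) (h2 : d v u ≤ 4) :
    d g u = d v u + 1 := by
  have h3 : d g u ≤ d v u + 1 := by grind
  have h4 : d v u ≤ d g u + 1 := by grind
  unfold HH at h
  rw [← pow_succ'] at h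
  have hb := hb (V := V)
  have hne : (b V) ^ (5 - d v u) ≠ 0 := pow_ne_zero _ (by linarith)
  by_contra hc
  rcases (by omega : d g u = d v u ∨ d g u + 1 = d v u) with e | e
  · rw [show 5 - d g u + 1 = (5 - d v u) + 1 by omega, pow_succ] at h
    have : (b V) ^ (5 - d v u) * (b V - 1) = 0 := by linear_combination h
    rcases mul_eq_zero.1 this with h | h
    · exact hne h
    · linarith
  · rw [show 5 - d g u + 1 = (5 - d v u) + 2 by omega, pow_add] at h
    have : (b V) ^ (5 - d v u) * (b V ^ 2 - 1) = 0 := by linear_combination h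
    rcases mul_eq_zero.1 this with h | h
    · exact hne h
    · nlinarith

theorem Y4 {x v y s : V} (xv : d x v = 1) (xy : d x y = 3) (vy : d v y = 3) (xs : d x s = 2)
    (h : Le x y s) : Om v y s := by
  refine ⟨by grind, ?_⟩
  intro g g1 g2
  obtain ⟨r, xr, rs⟩ := stp xs
  obtain ⟨z, xz, sz, hz⟩ := Y3 xy xs h
  have rz : d r z = 2 := by grind
  have hr : HH v g r = 0 := by
    have := le_out h xr (by grind)
    have := (BCl1 xv xy vy xr (by grind)).2 g g1 g2
    exact H0 (by grind) (by grind)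
  have hcl : ∀ u, d x u = 3 → Le x z u → HH v g u = 0 := by
    intro u h1 h2
    have := (BCl3 xv xy vy h1 (le_trans hz h2)).2 g g1 g2
    exact H0 (by grind) (by grind)
  have gz : d g z ≤ 4 := by
    have := (BCl3 xv xy vy xz hz).1
    grind
  have hQ : ∀ u, Om r z u → d r u = 2 → HH v g u = 0 := by
    intro u h1 h2
    obtain ⟨h3, h4⟩ := SC (by grind) rz xz h1 h2
    exact hcl u h3 h4
  have W : ∀ {u v w}, Om r z u → Om r z w → d u v + d v w ≤ d u w + 1 → Om r z v :=
    fun h1 h2 h3 => Mwgc (by simp) BC2 EE2 rz h1 h2 h3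
  have Qz := om_self r z
  have Qs : Om r z s := om_step (by omega) Qz (by grind) (by grind)
  have Qr : Om r z r := om_step (by omega) Qs (by grind) (by grind)
  have e1 := R2H (v := v) (g := g) rz (by grind) (by grind) (by grind) (by grind)
  rw [hr, hcl z xz (le_refl _ _), Finset.sum_eq_zero (s := Finset.univ.filter fun u => d z u = 1 ∧ d r u = 2) (by
    clear e1
    intro u hu
    simp only [Finset.mem_filter, Finset.mem_univ, true_and] at hu
    exact hQ u (om_step (by omega) Qz hu.1 (by omega)) hu.2)] at e1
  have e2 : ∀ u ∈ (Finset.univ.filter fun u => d r u = 1 ∧ d z u = 2), HH v g u = HH v g s := by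
    clear e1
    intro u hu
    simp only [Finset.mem_filter, Finset.mem_univ, true_and] at hu
    have Qu : Om r z u := W Qr Qz (by grind)
    have su : d s u = 2 := by
      have := @nt V _ _ s r u
      have := @d0 V _ _ s u
      grind
    have rr := R2H (v := v) (g := g) su (by grind) (by grind) (by grind) (by grind)
    rw [Finset.sum_eq_zero, Finset.sum_eq_zero] at rr
    · have : (1 + b V - c V) * (HH v g s - HH v g u) = 0 := by linarith
      rcases mul_eq_zero.1 this with h | h
      · have := lam_neg (V := V)
        linarith
      · linarith
    · clear rr
      intro e he
      simp only [Finset.mem_filter, Finset.mem_univ, true_and] at he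
      refine hQ e (W Qu Qs (by grind)) ?_
      have := @nt V _ _ r s e
      have := @nt V _ _ r u e
      have := @d0 V _ _ r e
      grind
    · clear rr
      intro e he
      simp only [Finset.mem_filter, Finset.mem_univ, true_and] at he
      refine hQ e (W Qu Qs (by grind)) ?_
      have := @nt V _ _ r s e
      have := @nt V _ _ r u e
      have := @d0 V _ _ r e
      grind
  rw [Finset.sum_congr rfl e2] at e1
  simp only [Finset.sum_const, kA2 rz] at e1
  have : (0 : ℝ) < a V := by exact_mod_cast ha (V := V)
  have h0 : HH v g s = 0 := by
    have : (a V : ℝ) * HH v g s = 0 := by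
      rw [nsmul_eq_mul] at e1
      linarith
    rcases mul_eq_zero.1 this with h | h
    · linarith
    · exact h
  clear e1 e2
  have := H0' g1 h0 (by grind)
  grind

theorem BC3 : BC V 3 := by
  intro x v y s h1 h2 h3 h
  have := h.1
  by_cases c3 : d x s = 3
  · exact BCl3 h1 h2 h3 c3 h.2
  by_cases c2 : d x s = 2
  · exact Y4 h1 h2 h3 c2 h.2
  by_cases c1 : d x s = 1
  · have := le_out h.2 c1 (by grind)
    exact BCl1 h1 h2 h3 c1 (by grind)
  have c0 : d x s = 0 := by omega
  have := d0 c0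
  subst this
  refine ⟨by grind, ?_⟩
  intro g g1 g2
  have := @nt V _ _ x v g
  have := @d0 V _ _ x g
  grind

theorem om_iff {x y u : V} (xy : d x y = 3) :
    (∃ z, d x z = 3 ∧ Le x y z ∧ d x u + d u z = 3) ↔ Om x y u := by
  constructor
  · rintro ⟨z, z1, z2, z3⟩
    exact ⟨by omega, le_trans z2 (bgeo (by omega))⟩
  · intro h
    have := h.1
    by_cases c3 : d x u = 3
    · exact ⟨u, c3, h.2, by grind⟩
    by_cases c2 : d x u = 2
    · obtain ⟨z, z1, z2, z3⟩ := Y3 xy c2 h.2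
      exact ⟨z, z1, z3, by omega⟩
    by_cases c1 : d x u = 1
    · have := le_out h.2 c1 (by grind)
      by_cases e : d u y = 2
      · exact ⟨y, xy, le_refl _ _, by omega⟩
      · obtain ⟨z, z1, z2, z3⟩ := X1 c1 xy (by grind)
        exact ⟨z, z3, bconst z1 (by omega) (by omega), by omega⟩
    have c0 : d x u = 0 := by omega
    have := d0 c0
    subst this
    exact ⟨y, xy, le_refl _ _, by omega⟩

end DRG


namespace DRG
variable {V : Type*} [Fintype V] [DRG V]

theorem mem_delta (G : SimpleGraph V) (hd : ∀ x y : V, G.dist x y = d x y) {x y u : V}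
    (xy : d x y = 3) : u ∈ Delta G x y ↔ Om x y u := by
  rw [← om_iff xy]
  unfold Delta Cclass Bset
  simp only [Set.mem_ofPred_eq, hd]
  constructor
  · rintro ⟨z, ⟨z1, z2⟩, z3⟩
    refine ⟨z, z1, ?_, by omega⟩
    intro g g1 g2
    have : g ∈ {v | d x v = 1 ∧ d y v = d x y + 1} := ⟨g1, g2⟩
    rw [← z2] at this
    exact this.2
  · rintro ⟨z, z1, z2, z3⟩
    refine ⟨z, ⟨z1, ?_⟩, by omega⟩
    have z4 := le_symm z2 (by omega)
    ext g
    exact ⟨fun h => ⟨h.1, z4 g h.1 h.2⟩, fun h => ⟨h.1, z2 g h.1 h.2⟩⟩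

theorem deg_om {x y u : V} (xy : d x y = 3) (h : Om x y u) :
    {w | Om x y w ∧ d u w = 1}.ncard = a3 V + c3 V := by
  classical
  obtain ⟨z, z1, z2⟩ := MM (by norm_num) BC3 EE3 _ xy h rfl
  have e : {w | Om x y w ∧ d u w = 1} =
      (((Finset.univ.filter fun v => d u v = 1 ∧ d z v = 3) ∪
        (Finset.univ.filter fun v => d u v = 1 ∧ d z v = 2) : Finset V) : Set V) := by
    ext w
    simp only [Set.mem_ofPred_eq, Finset.coe_union, Finset.coe_filter, Finset.mem_univ, true_and,
      Set.mem_union, z2]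
    constructor
    · rintro ⟨w1, w2⟩
      have := D3 z1 w1
      grind
    · rintro (⟨w1, w2⟩ | ⟨w1, w2⟩)
      · refine ⟨Mwgc (by norm_num) BC3 EE3 z1 (u := u) (w := z) ⟨by grind, ?_⟩ (om_self _ _)
          (by grind), w1⟩
        exact bgeo (by grind)
      · exact ⟨⟨by grind, bgeo (by grind)⟩, w1⟩
  rw [e, Set.ncard_coe_finset, Finset.card_union_of_disjoint, kA3 z1, kC3 z1]
  rw [Finset.disjoint_filter]
  grind

theorem ind_walk (G : SimpleGraph V) (hd : ∀ x y : V, G.dist x y = d x y) {x y : V}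
    (xy : d x y = 3) (n : ℕ) : ∀ u v : Delta G x y, d (u : V) (v : V) = n →
    ∃ w : (G.induce (Delta G x y)).Walk u v, w.length = n := by
  induction n with
  | zero =>
    intro u v h
    have : u = v := Subtype.ext (d0 h)
    subst this
    exact ⟨SimpleGraph.Walk.nil, rfl⟩
  | succ n ih =>
    intro u v h
    obtain ⟨z, z1, z2⟩ := stp h
    have hz : z ∈ Delta G x y := by
      rw [mem_delta G hd xy]
      exact Mwgc (by norm_num) BC3 EE3 xy ((mem_delta G hd xy).1 u.2) ((mem_delta G hd xy).1 v.2)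
        (by omega)
    obtain ⟨w, hw⟩ := ih ⟨z, hz⟩ v z2
    have ad : (G.induce (Delta G x y)).Adj u ⟨z, hz⟩ := by
      have : G.dist u z = 1 := by rw [hd]; exact z1
      have := SimpleGraph.dist_eq_one_iff_adj.1 this
      simpa using this
    exact ⟨SimpleGraph.Walk.cons ad w, by simp [hw]⟩

theorem final (G : SimpleGraph V) (hd : ∀ x y : V, G.dist x y = d x y) (x y : V)
    (xy : d x y = 3) :
    (∀ u ∈ Delta G x y, {w | w ∈ Delta G x y ∧ G.Adj u w}.ncard = a3 V + c3 V) ∧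
    (∀ u v w : V, u ∈ Delta G x y → w ∈ Delta G x y →
      G.dist u v + G.dist v w ≤ G.dist u w + 1 → v ∈ Delta G x y) ∧
    (∀ u v : Delta G x y, (G.induce (Delta G x y)).dist u v ≤ 3) ∧
    (∃ u v : Delta G x y, (G.induce (Delta G x y)).dist u v = 3) ∧
    x ∈ Delta G x y ∧ y ∈ Delta G x y := by
  have hx : x ∈ Delta G x y := by
    rw [mem_delta G hd xy]
    exact ⟨by grind, bgeo (by grind)⟩
  have hy : y ∈ Delta G x y := by
    rw [mem_delta G hd xy]
    exact om_self _ _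
  have h3 : ∀ u v : Delta G x y, (G.induce (Delta G x y)).dist u v ≤ 3 := by
    intro u v
    obtain ⟨w, hw⟩ := ind_walk G hd xy _ u v rfl
    have := SimpleGraph.dist_le w
    have := Mdiam (by norm_num) BC3 EE3 xy ((mem_delta G hd xy).1 u.2) ((mem_delta G hd xy).1 v.2)
    omega
  refine ⟨?_, ?_, h3, ⟨⟨x, hx⟩, ⟨y, hy⟩, ?_⟩, hx, hy⟩
  · intro u hu
    rw [mem_delta G hd xy] at hu
    rw [← deg_om xy hu]
    congr 1
    ext w
    simp only [Set.mem_ofPred_eq, mem_delta G hd xy, ← hd, SimpleGraph.dist_eq_one_iff_adj]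
  · intro u v w hu hw h
    rw [mem_delta G hd xy] at *
    simp only [hd] at h
    exact Mwgc (by norm_num) BC3 EE3 xy hu hw h
  · apply _root_.le_antisymm (h3 _ _)
    obtain ⟨w, hw⟩ := ind_walk G hd xy _ ⟨x, hx⟩ ⟨y, hy⟩ rfl
    obtain ⟨w', hw'⟩ := (SimpleGraph.Walk.reachable w).exists_walk_length_eq_dist
    rw [← hw']
    have := SimpleGraph.dist_le (w'.map (SimpleGraph.Embedding.induce (Delta G x y)).toHom)
    rw [SimpleGraph.Walk.length_map] at this
    have h := hd x y
    have h2 : G.dist x y ≤ w'.length := this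
    omega

end DRG


namespace TD
open Matrix

def TT {V : Type*} [Fintype V] [DecidableEq V] (A : Matrix V V ℝ) (q : ℕ → ℕ → ℝ) (κ : V → ℝ) :
    Matrix V V ℝ :=
  ∑ m ∈ Finset.range 4, ∑ n ∈ Finset.range 4, q m n • (A ^ m * diagonal κ * A ^ n)

def EI {V : Type*} [Fintype V] [DecidableEq V] (A : Matrix V V ℝ) (q : ℕ → ℕ → ℝ) (s u v : V) : ℝ :=
  ∑ m ∈ Finset.range 4, ∑ n ∈ Finset.range 4, q m n * ((A ^ m) u s * (A ^ n) s v)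

theorem TT_apply {V : Type*} [Fintype V] [DecidableEq V] (A : Matrix V V ℝ) (q : ℕ → ℕ → ℝ)
    (κ : V → ℝ) (u v : V) : TT A q κ u v = ∑ s, κ s * EI A q s u v := by
  unfold TT EI
  simp only [Matrix.sum_apply, Matrix.smul_apply, Matrix.mul_apply (M := _ * _),
    Matrix.mul_diagonal, smul_eq_mul, Finset.mul_sum]
  rw [Finset.sum_comm (s := Finset.univ)]
  apply Finset.sum_congr rfl
  intro m _
  rw [Finset.sum_comm]
  apply Finset.sum_congr rfl
  intro n _
  apply Finset.sum_congr rfl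
  intro s _
  ring

theorem tz {V : Type*} [Fintype V] [DecidableEq V] (A : Matrix V V ℝ) (q : ℕ → ℕ → ℝ)
    (hA : A.IsSymm) (Θ : V → V → ℝ) (hs : ∀ u v, Θ u v = Θ v u) (c μ : ℝ) (hc : c ≠ 0)
    (h : ∀ u v, c * ∑ s, Θ u s * Θ s v = μ * Θ u v)
    (h0 : ∀ w n u, ∑ v, TT A q (Θ w) u v * (A ^ n) v w = 0) (w u v : V) :
    TT A q (Θ w) u v = 0 := by
  have key : c * ∑ u, ∑ v, ∑ w, TT A q (Θ w) u v * TT A q (Θ w) u v = 0 := by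
    have e1 : ∀ u v, c * ∑ w, TT A q (Θ w) u v * TT A q (Θ w) u v
        = ∑ s, μ * (TT A q (Θ s) u v * EI A q s u v) := by
      intro u v
      have : ∀ s, c * ∑ w, TT A q (Θ w) u v * Θ w s = μ * TT A q (Θ s) u v := by
        intro s
        simp only [TT_apply, Finset.sum_mul, Finset.mul_sum]
        rw [Finset.sum_comm]
        apply Finset.sum_congr rfl
        intro t _
        have := h t s
        rw [hs s t]
        rw [← mul_assoc, ← this, Finset.mul_sum, Finset.sum_mul]
        apply Finset.sum_congr rfl
        intro w _
        rw [hs t w]; ring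
      calc c * ∑ w, TT A q (Θ w) u v * TT A q (Θ w) u v
          = c * ∑ w, ∑ s, TT A q (Θ w) u v * Θ w s * EI A q s u v := by
            congr 1
            apply Finset.sum_congr rfl
            intro w _
            nth_rewrite 2 [TT_apply]
            rw [Finset.mul_sum]
            apply Finset.sum_congr rfl
            intro s _
            ring
        _ = ∑ s, (c * ∑ w, TT A q (Θ w) u v * Θ w s) * EI A q s u v := by
            rw [Finset.sum_comm, Finset.mul_sum]
            apply Finset.sum_congr rfl
            intro s _
            rw [← Finset.sum_mul]; ring
        _ = _ := by
            apply Finset.sum_congr rfl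
            intro s _
            rw [this]; ring
    simp only [Finset.mul_sum] at e1 ⊢
    simp only [e1]
    have e2 : ∀ s u, ∑ v, μ * (TT A q (Θ s) u v * EI A q s u v) = 0 := by
      intro s u
      unfold EI
      have hn : ∀ n, ∑ v, TT A q (Θ s) u v * (A ^ n) s v = 0 := by
        intro n
        have hp : (A ^ n).IsSymm := by
          unfold IsSymm
          rw [Matrix.transpose_pow, hA]
        rw [← h0 s n u]
        apply Finset.sum_congr rfl
        intro v _
        rw [hp.apply]
      simp only [Finset.mul_sum]
      rw [Finset.sum_comm]
      apply Finset.sum_eq_zero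
      intro m _
      rw [Finset.sum_comm]
      apply Finset.sum_eq_zero
      intro n _
      have := hn n
      calc _ = μ * q m n * (A ^ m) u s * ∑ v, TT A q (Θ s) u v * (A ^ n) s v := by
            rw [Finset.mul_sum]
            apply Finset.sum_congr rfl
            intro v _
            ring
        _ = 0 := by rw [this, mul_zero]
    apply Finset.sum_eq_zero
    intro u _
    rw [Finset.sum_comm]
    exact Finset.sum_eq_zero fun s _ => e2 s u
  have key := (mul_eq_zero.1 key).resolve_left hc
  have n1 := (Finset.sum_eq_zero_iff_of_nonneg (fun u _ => Finset.sum_nonneg fun v _ =>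
    Finset.sum_nonneg fun w _ => mul_self_nonneg _)).1 key u (Finset.mem_univ _)
  have n2 := (Finset.sum_eq_zero_iff_of_nonneg (fun v _ =>
    Finset.sum_nonneg fun w _ => mul_self_nonneg _)).1 n1 v (Finset.mem_univ _)
  have n3 := (Finset.sum_eq_zero_iff_of_nonneg (fun w _ => mul_self_nonneg _)).1 n2 w
    (Finset.mem_univ _)
  exact mul_self_eq_zero.1 n3

end TD


namespace TD
open Matrix

def Bop (k : ℝ) (C B : ℤ → ℝ) (φ : ℤ → ℝ) (i : ℤ) : ℝ :=
  k * φ i + C i * (φ (i - 1) - φ i) + B i * (φ (i + 1) - φ i)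

def qq (t g r : ℝ) (m n : ℕ) : ℝ :=
  if m = 3 ∧ n = 0 then 1 else if m = 2 ∧ n = 1 then - t else if m = 1 ∧ n = 2 then t
  else if m = 0 ∧ n = 3 then -1 else if m = 2 ∧ n = 0 then - g else if m = 0 ∧ n = 2 then g
  else if m = 1 ∧ n = 0 then - r else if m = 0 ∧ n = 1 then r else 0

theorem qq_sum (t g r : ℝ) (f : ℕ → ℕ → ℝ) :
    ∑ m ∈ Finset.range 4, ∑ n ∈ Finset.range 4, qq t g r m n * f m n =
    f 3 0 - t * f 2 1 + t * f 1 2 - f 0 3 - g * (f 2 0 - f 0 2) - r * (f 1 0 - f 0 1) := by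
  simp [Finset.sum_range_succ, qq]
  ring

theorem L3 (b t : ℝ) (hb : b ≠ 0) (ht : t = b + b⁻¹ + 1) : 1 - t * b + t * b ^ 2 - b ^ 3 = 0 := by
  subst ht
  field_simp
  ring

theorem L2 (b α s k t g : ℝ) (hb : b ≠ 0) (x x0 x1 x2 c0 c1 c2 b0 b1 b2 : ℝ)
    (h0 : x0 = 1 + b * x) (h1 : x1 = 1 + b * x0) (h2 : x2 = 1 + b * x1)
    (hc0 : c0 = x0 * (1 + α * x)) (hc1 : c1 = x1 * (1 + α * x0)) (hc2 : c2 = x2 * (1 + α * x1))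
    (hb0 : b0 = (s - x0) * (1 + α - α * s - α * x0))
    (hb1 : b1 = (s - x1) * (1 + α - α * s - α * x1))
    (hb2 : b2 = (s - x2) * (1 + α - α * s - α * x2))
    (hk : k = s * (1 + α - α * s)) (ht : t = b + b⁻¹ + 1) (hg : g = α * (1 + b) / b) :
    (1 + b - t * b) * (k - c0 - b0) + (1 + b) * (k - c1 - b1) + (1 + b - t) * (k - c2 - b2)
      - g * (1 + b) = 0 := by
  subst h0 h1 h2 hc0 hc1 hc2 hb0 hb1 hb2 hk ht hg
  field_simp
  ring

theorem L1 (b α s k t g r : ℝ) (hb : b ≠ 0) (x x0 x1 x2 c0 c1 c2 b' b0 b1 : ℝ)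
    (h0 : x0 = 1 + b * x) (h1 : x1 = 1 + b * x0) (h2 : x2 = 1 + b * x1)
    (hc0 : c0 = x0 * (1 + α * x)) (hc1 : c1 = x1 * (1 + α * x0)) (hc2 : c2 = x2 * (1 + α * x1))
    (hb' : b' = (s - x) * (1 + α - α * s - α * x))
    (hb0 : b0 = (s - x0) * (1 + α - α * s - α * x0))
    (hb1 : b1 = (s - x1) * (1 + α - α * s - α * x1))
    (hk : k = s * (1 + α - α * s)) (ht : t = b + b⁻¹ + 1) (hg : g = α * (1 + b) / b)
    (hr : r = k * (t + 1) + (s - 1) * (1 - α * s) * ((1 + b) * (1 + α)) * (1 - t / b)) :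
    b * (k - c0 - b0) ^ 2 + b * (1 - t) * (k - c0 - b0) * (k - c1 - b1) + b * (k - c1 - b1) ^ 2
      + b * (1 - t * b) * c0 * b' + b * (1 + t) * b0 * c1 + (b - t) * b1 * c2
      - b * g * ((k - c0 - b0) + (k - c1 - b1)) - b * r = 0 := by
  subst hr
  subst h0 h1 h2 hc0 hc1 hc2 hb' hb0 hb1 hk ht hg
  field_simp
  ring

set_option maxHeartbeats 2000000 in
theorem alg (b α s k t g r : ℝ) (hb : b ≠ 0) (C B X K φ : ℤ → ℝ)
    (hX : ∀ i, X (i + 1) = 1 + b * X i) (hK : ∀ i, K i = b * K (i + 1))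
    (hC : ∀ i, C i = X i * (1 + α * X (i - 1)))
    (hB : ∀ i, B i = (s - X i) * (1 + α - α * s - α * X i))
    (hk : k = s * (1 + α - α * s)) (ht : t = b + b⁻¹ + 1) (hg : g = α * (1 + b) / b)
    (hr : r = k * (t + 1) + (s - 1) * (1 - α * s) * ((1 + b) * (1 + α)) * (1 - t / b)) (i : ℤ) :
    ∑ m ∈ Finset.range 4, ∑ n ∈ Finset.range 4,
      qq t g r m n * ((Bop k C B)^[m] (fun j => K j * (Bop k C B)^[n] φ j) i) = 0 := by
  rw [qq_sum]
  simp only [Function.iterate_succ, Function.iterate_zero, Function.comp_apply, id_eq]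
  simp only [Bop]
  have e1 : ∀ j : ℤ, j - 1 + 1 = j := by intro j; ring
  have e2 : ∀ j : ℤ, j + 1 - 1 = j := by intro j; ring
  simp only [e1, e2]
  obtain ⟨j, rfl⟩ : ∃ j, i = j + 1 + 1 + 1 := ⟨i - 3, by ring⟩
  simp only [e1, e2]
  have E := hK j
  have E1 := hK (j + 1)
  have E2 := hK (j + 1 + 1)
  have E3 := hK (j + 1 + 1 + 1)
  have E4 := hK (j + 1 + 1 + 1 + 1)
  have E5 := hK (j + 1 + 1 + 1 + 1 + 1)
  rw [E4, E5] at E3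
  rw [E5] at E4
  rw [E3] at E2
  rw [E2] at E1
  rw [E1] at E
  rw [E, E1, E2, E3, E4, E5]
  clear E E1 E2 E3 E4 E5 hK
  generalize K (j + 1 + 1 + 1 + 1 + 1 + 1) = K6
  have hX5 := hX (j+1+1+1+1)
  have hX4 := hX (j+1+1+1)
  have hX3 := hX (j+1+1)
  have hX2 := hX (j+1)
  have hX1 := hX j
  have C5 := hC (j+1+1+1+1+1)
  have C4 := hC (j+1+1+1+1)
  have C3 := hC (j+1+1+1)
  have C2 := hC (j+1+1)
  have C1 := hC (j+1)
  simp only [e2] at C1 C2 C3 C4 C5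
  have B1 := hB (j+1)
  have B2 := hB (j+1+1)
  have B3 := hB (j+1+1+1)
  have B4 := hB (j+1+1+1+1)
  have B5 := hB (j+1+1+1+1+1)
  have T0 := L3 b t hb ht
  have T2u := L2 b α s k t g hb _ _ _ _ _ _ _ _ _ _ hX3 hX4 hX5 C3 C4 C5 B3 B4 B5 hk ht hg
  have T2d := L2 b α s k t g hb _ _ _ _ _ _ _ _ _ _ hX1 hX2 hX3 C1 C2 C3 B1 B2 B3 hk ht hg
  have T1u := L1 b α s k t g r hb _ _ _ _ _ _ _ _ _ _ hX3 hX4 hX5 C3 C4 C5 B2 B3 B4 hk ht hg hr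
  have T1d := L1 b α s k t g r hb _ _ _ _ _ _ _ _ _ _ hX2 hX3 hX4 C2 C3 C4 B1 B2 B3 hk ht hg hr
  clear hX hC hB hX1 hX2 hX3 hX4 hX5 C1 C2 C3 C4 C5 B1 B2 B3 B4 B5 hk ht hg hr e1 e2
  generalize C (j+1) = C1 at *
  generalize C (j+1+1) = C2 at *
  generalize C (j+1+1+1) = C3 at *
  generalize C (j+1+1+1+1) = C4 at *
  generalize C (j+1+1+1+1+1) = C5 at *
  generalize B (j+1) = B1 at *
  generalize B (j+1+1) = B2 at *
  generalize B (j+1+1+1) = B3 at *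
  generalize B (j+1+1+1+1) = B4 at *
  generalize B (j+1+1+1+1+1) = B5 at *
  generalize φ j = P0
  generalize φ (j+1) = P1
  generalize φ (j+1+1) = P2
  generalize φ (j+1+1+1) = P3
  generalize φ (j+1+1+1+1) = P4
  generalize φ (j+1+1+1+1+1) = P5
  generalize φ (j+1+1+1+1+1+1) = P6
  linear_combination K6 * (B3 * B4 * B5 * P6 * T0 - b ^ 3 * C3 * C2 * C1 * P0 * T0
    + (1 - b) * b * B3 * B4 * P5 * T2u - (1 - b) * b ^ 3 * C3 * C2 * P1 * T2d
    + (1 - b) * b * B3 * P4 * T1u - (1 - b) * b ^ 2 * C3 * P2 * T1d)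

end TD


namespace TD
open Matrix

structure Sph {V : Type*} [Fintype V] (d : V → V → ℕ) (D : ℕ) (p : ℕ → ℕ → ℕ → ℕ) (k : ℝ)
    (C B : ℤ → ℝ) : Prop where
  d0 : ∀ {x y : V}, d x y = 0 → x = y
  dd : ∀ x : V, d x x = 0
  cm : ∀ x y : V, d x y = d y x
  tr : ∀ x y z : V, d x z ≤ d x y + d y z
  hk : ∀ u : V, ((Finset.univ.filter fun v => d u v = 1).card : ℝ) = k
  hC : ∀ u y : V, ((Finset.univ.filter fun v => d u v = 1 ∧ d y v + 1 = d y u).card : ℝ) = C (d y u)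
  hB : ∀ u y : V, ((Finset.univ.filter fun v => d u v = 1 ∧ d y v = d y u + 1).card : ℝ) = B (d y u)
  hle : ∀ x y : V, d x y ≤ D
  hp : ∀ (x y : V) (i j : ℕ), i ≤ D → j ≤ D →
    (Finset.univ.filter fun z => d x z = i ∧ d y z = j).card = p (d x y) i j
  hex : ∀ i ≤ D, ∃ x y : V, d x y = i
  hB0 : ∀ i : ℕ, i < D → B i ≠ 0

def Am {V : Type*} (d : V → V → ℕ) : Matrix V V ℝ := fun u v => if d u v = 1 then 1 else 0

variable {V : Type*} [Fintype V] {d : V → V → ℕ} {D : ℕ} {p : ℕ → ℕ → ℕ → ℕ} {k : ℝ} {C B : ℤ → ℝ}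

theorem sph (h : Sph d D p k C B) (φ : ℤ → ℝ) (y u : V) :
    ∑ v, Am d u v * φ (d y v) = Bop k C B φ (d y u) := by
  have e : ∀ v, Am d u v * φ (d y v) = (if d u v = 1 then φ (d y u) else 0)
      + (if d u v = 1 ∧ d y v + 1 = d y u then φ (d y u - 1) - φ (d y u) else 0)
      + (if d u v = 1 ∧ d y v = d y u + 1 then φ (d y u + 1) - φ (d y u) else 0) := by
    intro v
    unfold Am
    by_cases h1 : d u v = 1
    · have t1 := h.tr y u v
      have t2 := h.tr y v u
      have t3 := h.cm u v
      rcases (show d y v + 1 = d y u ∨ d y v = d y u ∨ d y v = d y u + 1 by omega) with c | c | c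
      · have : ((d y u : ℤ) - 1) = d y v := by omega
        have n : d y v ≠ d y u + 1 := by omega
        simp [h1, c, n, this]
      · simp [h1, c]
      · have : ((d y u : ℤ) + 1) = d y v := by omega
        have n : ¬ (d y u + 1 + 1 = d y u) := by omega
        simp [h1, n, c]
    · simp [h1]
  simp only [e, Finset.sum_add_distrib, ← Finset.sum_filter, Finset.sum_const, nsmul_eq_mul, h.hk,
    h.hC, h.hB]
  rfl

variable [DecidableEq V]

theorem sph_pow (h : Sph d D p k C B) (y : V) (m : ℕ) : ∀ (φ : ℤ → ℝ) (u : V),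
    ∑ v, (Am d ^ m) u v * φ (d y v) = (Bop k C B)^[m] φ (d y u) := by
  induction m with
  | zero =>
    intro φ u
    simp [Matrix.one_apply]
  | succ m ih =>
    intro φ u
    rw [Function.iterate_succ_apply, ← ih]
    simp only [← sph h, pow_succ, Matrix.mul_apply, Finset.sum_mul, Finset.mul_sum]
    rw [Finset.sum_comm]
    apply Finset.sum_congr rfl
    intro s _
    apply Finset.sum_congr rfl
    intro v _
    ring

def δ (i : ℤ) : ℝ := if i = 0 then 1 else 0

theorem pow_entry (h : Sph d D p k C B) (w : V) (m : ℕ) (u : V) :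
    (Am d ^ m) u w = (Bop k C B)^[m] δ (d w u) := by
  rw [← sph_pow h, Finset.sum_eq_single w]
  · simp [δ, h.dd]
  · intro v _ hv
    have : d w v ≠ 0 := fun e => hv (h.d0 e).symm
    simp [δ, this]
  · simp

theorem TT_sph (h : Sph d D p k C B) (q : ℕ → ℕ → ℝ) (K φ : ℤ → ℝ) (w u : V) :
    ∑ v, TT (Am d) q (fun s => K (d w s)) u v * φ (d w v) =
    ∑ m ∈ Finset.range 4, ∑ n ∈ Finset.range 4,
      q m n * ((Bop k C B)^[m] (fun j => K j * (Bop k C B)^[n] φ j) (d w u)) := by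
  unfold TT
  simp only [← sph_pow h, Matrix.sum_apply, Matrix.smul_apply, Matrix.mul_apply (M := _ * _),
    Matrix.mul_diagonal, smul_eq_mul, Finset.sum_mul, Finset.mul_sum]
  rw [Finset.sum_comm]
  apply Finset.sum_congr rfl
  intro m _
  rw [Finset.sum_comm]
  apply Finset.sum_congr rfl
  intro n _
  rw [Finset.sum_comm]
  apply Finset.sum_congr rfl
  intro s _
  apply Finset.sum_congr rfl
  intro v _
  ring

theorem EI_sum (t g r : ℝ) (A : Matrix V V ℝ) (u v : V) : ∑ s, EI A (qq t g r) s u v = 0 := by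
  have : ∑ s, EI A (qq t g r) s u v = ∑ m ∈ Finset.range 4, ∑ n ∈ Finset.range 4,
      qq t g r m n * (A ^ (m + n)) u v := by
    unfold EI
    rw [Finset.sum_comm]
    apply Finset.sum_congr rfl
    intro m _
    rw [Finset.sum_comm]
    apply Finset.sum_congr rfl
    intro n _
    rw [pow_add, Matrix.mul_apply, Finset.mul_sum]
  rw [this, qq_sum]
  norm_num

theorem sq_dep (h : Sph d D p k C B) (Θ : ℤ → ℝ) : ∃ f : ℤ → ℝ, ∀ u v : V,
    ∑ s, Θ (d u s) * Θ (d v s) = f (d u v) := by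
  refine ⟨fun z => ∑ i ∈ Finset.range (D + 1), ∑ j ∈ Finset.range (D + 1),
    (p z.toNat i j : ℝ) * (Θ i * Θ j), ?_⟩
  intro u v
  have e : ∀ s, Θ (d u s) * Θ (d v s) = ∑ i ∈ Finset.range (D + 1), ∑ j ∈ Finset.range (D + 1),
      if d u s = i ∧ d v s = j then Θ i * Θ j else 0 := by
    intro s
    have h1 := h.hle u s
    have h2 := h.hle v s
    rw [Finset.sum_eq_single (d u s), Finset.sum_eq_single (d v s)]
    · simp
    · intro j _ hj
      simp [hj.symm]
    · intro hj
      simp at hj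
      omega
    · intro j _ hj
      simp [hj.symm]
    · intro hj
      simp at hj
      omega
  simp only [e, Int.toNat_natCast]
  rw [Finset.sum_comm]
  apply Finset.sum_congr rfl
  intro i hi
  rw [Finset.sum_comm]
  apply Finset.sum_congr rfl
  intro j hj
  simp only [Finset.mem_range] at hi hj
  rw [← Finset.sum_filter, Finset.sum_const, h.hp u v i j (by omega) (by omega), nsmul_eq_mul]

theorem eig_sq (h : Sph d D p k C B) (Θ : ℤ → ℝ) (θ : ℝ)
    (hΘ : ∀ i, Bop k C B Θ i = θ * Θ i) : ∃ μ : ℝ, ∀ u v : V,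
    Θ 0 * ∑ s, Θ (d u s) * Θ (d v s) = μ * Θ (d u v) := by
  obtain ⟨f, hf⟩ := sq_dep h Θ
  refine ⟨f 0, ?_⟩
  have hBf : ∀ i : ℕ, i ≤ D → Bop k C B f i = θ * f i := by
    intro i hi
    obtain ⟨y, u, rfl⟩ := h.hex i hi
    rw [← sph h, ← hf]
    simp only [← hf, Finset.mul_sum]
    rw [Finset.sum_comm]
    apply Finset.sum_congr rfl
    intro s _
    have := sph h Θ s u
    rw [hΘ] at this
    rw [h.cm u s, mul_left_comm, ← this, Finset.mul_sum]
    apply Finset.sum_congr rfl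
    intro v _
    rw [h.cm s v]
    ring
  have key : ∀ i : ℕ, i ≤ D → Θ 0 * f i = f 0 * Θ i := by
    intro i
    induction i using Nat.strong_induction_on with
    | _ i ih =>
      intro hi
      rcases i with _ | i
      · simp [mul_comm]
      have e1 := hBf i (by omega)
      have e2 := hΘ i
      have i1 := ih i (by omega) (by omega)
      have hb := h.hB0 i (by omega)
      have i2 : C i * (Θ 0 * f ((i : ℤ) - 1)) = C i * (f 0 * Θ ((i : ℤ) - 1)) := by
        rcases i with _ | i
        · obtain ⟨x, y, hx⟩ := h.hex 0 (by omega)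
          have := h.hC y x
          rw [hx] at this
          have : C ((0 : ℕ) : ℤ) = 0 := by
            rw [← this]
            simp
          rw [this]; simp
        · have := ih i (by omega) (by omega)
          have e : (((i + 1 : ℕ) : ℤ) - 1) = i := by push_cast; ring
          rw [e, this]
      unfold Bop at e1 e2
      apply mul_left_cancel₀ hb
      push_cast
      linear_combination Θ 0 * e1 - f 0 * e2 - (k - C i - B i - θ) * i1 - i2
  intro u v
  rw [hf]
  exact key _ (h.hle u v)

theorem main (h : Sph d D p k C B) (b α s t g r : ℝ) (hb : b ≤ -2) (X K : ℤ → ℝ)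
    (hX : ∀ i, X (i + 1) = 1 + b * X i) (hK : ∀ i, K i = b * K (i + 1)) (hK0 : K 0 = 1)
    (hKX : ∀ i, K i * (1 + (b - 1) * X i) = 1)
    (hC : ∀ i, C i = X i * (1 + α * X (i - 1)))
    (hB : ∀ i, B i = (s - X i) * (1 + α - α * s - α * X i))
    (hk : k = s * (1 + α - α * s)) (hk1 : 1 ≤ k) (ht : t = b + b⁻¹ + 1) (hg : g = α * (1 + b) / b)
    (hr : r = k * (t + 1) + (s - 1) * (1 - α * s) * ((1 + b) * (1 + α)) * (1 - t / b)) (w u v : V) :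
    ∑ y, K (d w y) * EI (Am d) (qq t g r) y u v = 0 := by
  have hb0 : b ≠ 0 := by intro h; linarith
  have hX' : ∀ i, X (i - 1) = (X i - 1) / b := by
    intro i
    have := hX (i - 1)
    rw [sub_add_cancel] at this
    rw [this]; field_simp; ring
  set θ := k / b - 1 - 1 / b with hθ
  set η := 1 + 1 / b with hη
  have hθk : θ - k ≠ 0 := by
    have : θ = (k - 1) / b - 1 := by rw [hθ]; ring
    have h2 : (k - 1) / b ≤ 0 := div_nonpos_of_nonneg_of_nonpos (by linarith) (by linarith)
    intro h; linarith
  set ξ := η / (θ - k) with hξ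
  have hξ' : ξ * (θ - k) = η := by rw [hξ]; field_simp
  have hΘ : ∀ i, Bop k C B (fun i => K i + ξ) i = θ * (K i + ξ) := by
    intro i
    unfold Bop
    have k1 := hK (i - 1)
    rw [sub_add_cancel] at k1
    have k2 := hK i
    have k2 : K (i + 1) = K i / b := by rw [k2]; field_simp
    have k3 := hKX i
    have : k * K i + C i * (K (i - 1) - K i) + B i * (K (i + 1) - K i) = θ * K i + η := by
      rw [k1, k2, hC, hB, hX', hk, hθ, hη, hk]
      field_simp
      linear_combination (b + 1) * k3
    linear_combination this - hξ'
  have hΘ0 : K 0 + ξ ≠ 0 := by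
    intro h0
    have e := hΘ 0
    have c0 : Bop k C B (fun i => K i + ξ) 0 = k * (K 1 + ξ) := by
      unfold Bop
      have x0 : X 0 = 0 := by
        have := hKX 0
        rw [hK0] at this
        have : (b - 1) * X 0 = 0 := by linarith
        exact (mul_eq_zero.1 this).resolve_left (by intro h; linarith)
      rw [hC, hB, x0, hk]
      ring_nf
    rw [c0, h0, mul_zero] at e
    have := (mul_eq_zero.1 e).resolve_left (by linarith)
    have k2 := hK 0
    rw [zero_add] at k2
    have : K 1 = 1 := by linarith
    rw [this] at k2
    linarith
  obtain ⟨μ, hμ⟩ := eig_sq h (fun i => K i + ξ) θ hΘ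
  have lin : ∀ w u v : V, TT (Am d) (qq t g r) (fun s => K (d w s) + ξ) u v =
      TT (Am d) (qq t g r) (fun s => K (d w s)) u v := by
    intro w u v
    simp only [TT_apply, add_mul, Finset.sum_add_distrib, ← Finset.mul_sum, EI_sum]
    ring
  have := tz (Am d) (qq t g r) (by
      ext u v
      simp [Am, h.cm]) (fun w s => K (d w s) + ξ) (by
      intro u v
      rw [h.cm]) (K 0 + ξ) μ hΘ0 (by
      intro u v
      rw [← hμ]
      simp only [h.cm v]) (by
      intro w n u
      simp only [lin, pow_entry h]
      rw [TT_sph h]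
      exact alg b α s k t g r hb0 C B X K _ hX hK hC hB hk ht hg hr _) w u v
  rw [lin, TT_apply] at this
  exact this

end TD


namespace TD
open Matrix

variable {V : Type*} [Fintype V] {d : V → V → ℕ} {D : ℕ} {p : ℕ → ℕ → ℕ → ℕ} {k : ℝ} {C B : ℤ → ℝ}

section
variable [DecidableEq V]

theorem TT_mat (A : Matrix V V ℝ) (t g r : ℝ) (κ : V → ℝ) : TT A (qq t g r) κ =
    A ^ 3 * diagonal κ - t • (A ^ 2 * diagonal κ * A) + t • (A * diagonal κ * A ^ 2)
    - diagonal κ * A ^ 3 - g • (A ^ 2 * diagonal κ - diagonal κ * A ^ 2)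
    - r • (A * diagonal κ - diagonal κ * A) := by
  simp [TT, Finset.sum_range_succ, qq]
  module

theorem TT_mat2 (A : Matrix V V ℝ) (t g r : ℝ) (κ : V → ℝ) :
    A * TT A (qq t g r) κ + TT A (qq t g r) κ * A =
    A ^ 4 * diagonal κ - (t - 1) • (A ^ 3 * diagonal κ * A) + (t - 1) • (A * diagonal κ * A ^ 3)
    - diagonal κ * A ^ 4 - g • (A ^ 3 * diagonal κ - diagonal κ * A ^ 3
      + A ^ 2 * diagonal κ * A - A * diagonal κ * A ^ 2)
    - r • (A ^ 2 * diagonal κ - diagonal κ * A ^ 2) := by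
  rw [TT_mat]
  simp only [mul_add, add_mul, mul_sub, sub_mul, smul_mul_assoc, mul_smul_comm, pow_succ, pow_zero,
    one_mul, mul_assoc]
  module

theorem S1 (κ : V → ℝ) (M : Matrix V V ℝ) (u v : V) :
    (Am d * diagonal κ * M) u v = ∑ y with d u y = 1, κ y * M y v := by
  rw [Matrix.mul_apply, Finset.sum_filter]
  apply Finset.sum_congr rfl
  intro y _
  rw [Matrix.mul_diagonal]
  simp [Am]

theorem S2 (hcm : ∀ x y, d x y = d y x) (κ : V → ℝ) (M : Matrix V V ℝ) (u v : V) :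
    (M * diagonal κ * Am d) u v = ∑ y with d v y = 1, κ y * M u y := by
  rw [Matrix.mul_apply, Finset.sum_filter]
  apply Finset.sum_congr rfl
  intro y _
  rw [Matrix.mul_diagonal]
  simp [Am, hcm y v, mul_comm]

end

theorem F1_0 (hC0 : C 0 = 0) (hB0 : B 0 = k) : (Bop k C B)^[1] δ 0 = 0 := by
  simp [Bop, δ, hC0, hB0]
theorem F1_1 (hC1 : C 1 = 1) : (Bop k C B)^[1] δ 1 = 1 := by
  simp [Bop, δ, hC1]
theorem F1_g (i : ℤ) (hi : 2 ≤ i) : (Bop k C B)^[1] δ i = 0 := by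
  have h1 : i ≠ 0 := by omega
  have h2 : i - 1 ≠ 0 := by omega
  have h3 : i + 1 ≠ 0 := by omega
  simp [Bop, δ, h1, h2, h3]
theorem F2_1 (hC0 : C 0 = 0) (hB0 : B 0 = k) (hC1 : C 1 = 1) (hB1 : B 1 = k - 1) :
    (Bop k C B)^[2] δ 1 = 0 := by
  rw [Function.iterate_succ_apply']
  unfold Bop
  have := F1_0 hC0 hB0
  have h2 := F1_1 (k := k) (B := B) hC1
  have h3 := F1_g (k := k) (C := C) (B := B) 2 (by norm_num)
  unfold Bop at this h2 h3
  norm_num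
  norm_num at this h2 h3
  rw [this, h2, h3, hC1, hB1]
  ring
theorem F2_2 (hC1 : C 1 = 1) : (Bop k C B)^[2] δ 2 = C 2 := by
  rw [Function.iterate_succ_apply']
  have h2 := F1_1 (k := k) (B := B) hC1
  have h3 := F1_g (k := k) (C := C) (B := B) 2 (by norm_num)
  have h4 := F1_g (k := k) (C := C) (B := B) 3 (by norm_num)
  rw [Bop]
  norm_num
  norm_num at h2 h3 h4
  rw [h2, h3, h4]
  ring
theorem Fg (n : ℕ) : ∀ (i : ℤ), n < i → (Bop k C B)^[n] δ i = 0 := by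
  induction n with
  | zero =>
    intro i hi
    have : i ≠ 0 := by rintro rfl; simp at hi
    simp [δ, this]
  | succ n ih =>
    intro i hi
    push_cast at hi
    rw [Function.iterate_succ_apply', Bop, ih _ (by omega), ih _ (by omega), ih _ (by omega)]
    ring
theorem F3_2 (hC0 : C 0 = 0) (hB0 : B 0 = k) (hC1 : C 1 = 1) (hB1 : B 1 = k - 1) :
    (Bop k C B)^[3] δ 2 = (k - C 2 - B 2) * C 2 := by
  rw [Function.iterate_succ_apply']
  have h2 := F2_1 hC0 hB0 hC1 hB1
  have h3 := F2_2 (k := k) (B := B) hC1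
  have h4 := Fg (k := k) (C := C) (B := B) 2 3 (by norm_num)
  rw [Bop, show (2 : ℤ) - 1 = 1 by norm_num, show (2 : ℤ) + 1 = 3 by norm_num, h2, h3, h4]
  ring
theorem F3_3 (hC1 : C 1 = 1) : (Bop k C B)^[3] δ 3 = C 3 * C 2 := by
  rw [Function.iterate_succ_apply']
  have h3 := F2_2 (k := k) (B := B) hC1
  have h4 := Fg (k := k) (C := C) (B := B) 2 3 (by norm_num)
  have h5 := Fg (k := k) (C := C) (B := B) 2 4 (by norm_num)
  rw [Bop, show (3 : ℤ) - 1 = 2 by norm_num, show (3 : ℤ) + 1 = 4 by norm_num, h3, h4, h5]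
  ring
theorem F4_3 (hC0 : C 0 = 0) (hB0 : B 0 = k) (hC1 : C 1 = 1) (hB1 : B 1 = k - 1) :
    (Bop k C B)^[4] δ 3 = C 3 * ((k - C 2 - B 2) * C 2) + (k - C 3 - B 3) * (C 3 * C 2) := by
  rw [Function.iterate_succ_apply']
  have h3 := F3_2 hC0 hB0 hC1 hB1
  have h4 := F3_3 (k := k) (B := B) hC1
  have h5 := Fg (k := k) (C := C) (B := B) 3 4 (by norm_num)
  rw [Bop, show (3 : ℤ) - 1 = 2 by norm_num, show (3 : ℤ) + 1 = 4 by norm_num, h3, h4, h5]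
  ring
theorem F4_4 (hC1 : C 1 = 1) : (Bop k C B)^[4] δ 4 = C 4 * (C 3 * C 2) := by
  rw [Function.iterate_succ_apply']
  have h4 := F3_3 (k := k) (B := B) hC1
  have h5 := Fg (k := k) (C := C) (B := B) 3 4 (by norm_num)
  have h6 := Fg (k := k) (C := C) (B := B) 3 5 (by norm_num)
  rw [Bop, show (4 : ℤ) - 1 = 3 by norm_num, show (4 : ℤ) + 1 = 5 by norm_num, h4, h5, h6]
  ring

end TD


namespace TD
open Matrix

variable {V : Type*} [Fintype V] {d : V → V → ℕ} {D : ℕ} {p : ℕ → ℕ → ℕ → ℕ} {k : ℝ} {C B : ℤ → ℝ}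

theorem HS (q : V → Prop) [DecidablePred q] (f M : V → ℝ) (w : V) (e2 e3 : ℝ)
    (h : ∀ y, q y → M y = (if d w y = 2 then e2 else 0) + (if d w y = 3 then e3 else 0)) :
    ∑ y with q y, f y * M y = e2 * (∑ y with (q y ∧ d w y = 2), f y)
      + e3 * (∑ y with (q y ∧ d w y = 3), f y) := by
  simp only [Finset.sum_filter, Finset.mul_sum]
  rw [← Finset.sum_add_distrib]
  apply Finset.sum_congr rfl
  intro y _
  by_cases hq : q y
  · rw [if_pos hq, h y hq]
    by_cases h2 : d w y = 2
    · simp [hq, h2]; ring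
    · by_cases h3 : d w y = 3
      · simp [hq, h3]; ring
      · simp [hq, h2, h3]
  · simp [hq]

variable [DecidableEq V]

theorem V2 (hC0 : C 0 = 0) (hB0 : B 0 = k) (hC1 : C 1 = 1) (hB1 : B 1 = k - 1) (j : ℕ) (hj : 1 ≤ j) :
    (Bop k C B)^[2] δ j = (if j = 2 then C 2 else 0) + (if j = 3 then 0 else 0) := by
  rcases (show j = 1 ∨ j = 2 ∨ 2 < j by omega) with rfl | rfl | h
  · simpa using F2_1 hC0 hB0 hC1 hB1
  · simpa using F2_2 hC1
  · rw [Fg 2 j (by exact_mod_cast h), if_neg (by omega)]; simp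

theorem V3 (hC0 : C 0 = 0) (hB0 : B 0 = k) (hC1 : C 1 = 1) (hB1 : B 1 = k - 1) (j : ℕ) (hj : 2 ≤ j) :
    (Bop k C B)^[3] δ j = (if j = 2 then (k - C 2 - B 2) * C 2 else 0)
      + (if j = 3 then C 3 * C 2 else 0) := by
  rcases (show j = 2 ∨ j = 3 ∨ 3 < j by omega) with rfl | rfl | h
  · simpa using F3_2 hC0 hB0 hC1 hB1
  · simpa using F3_3 hC1
  · rw [Fg 3 j (by exact_mod_cast h), if_neg (by omega), if_neg (by omega)]; simp

theorem V3' (hC1 : C 1 = 1) (j : ℕ) (hj : 3 ≤ j) :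
    (Bop k C B)^[3] δ j = (if j = 2 then 0 else 0)
      + (if j = 3 then C 3 * C 2 else 0) := by
  rcases (show j = 3 ∨ 3 < j by omega) with rfl | h
  · simpa using F3_3 hC1
  · rw [Fg 3 j (by exact_mod_cast h)]; simp [show j ≠ 3 by omega]

theorem ent1 (h : Sph d D p k C B) (κ : V → ℝ) (t g r : ℝ) (hT : TT (Am d) (qq t g r) κ = 0)
    (u v : V) : (Bop k C B)^[3] δ (d u v) * (κ v - κ u) - g * ((Bop k C B)^[2] δ (d u v) * (κ v - κ u))
      - r * ((Bop k C B)^[1] δ (d u v) * (κ v - κ u))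
      + t * ((∑ y with d u y = 1, κ y * (Bop k C B)^[2] δ (d v y)) -
        ∑ y with d v y = 1, κ y * (Bop k C B)^[2] δ (d u y)) = 0 := by
  have e := congrFun (congrFun hT u) v
  rw [TT_mat] at e
  simp only [Matrix.sub_apply, Matrix.add_apply, Matrix.smul_apply, S1, S2 h.cm, pow_entry h,
    smul_eq_mul, Matrix.mul_diagonal, Matrix.diagonal_mul, Matrix.zero_apply] at e
  have a1 : Am d u v = (Bop k C B)^[1] δ (d v u) := by rw [← pow_entry h, pow_one]
  rw [a1, h.cm v u] at e
  have e2 : ∀ y, d y u = d u y := fun y => h.cm y u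
  simp only [e2] at e
  linear_combination e

theorem ent2 (h : Sph d D p k C B) (κ : V → ℝ) (t g r : ℝ) (hT : TT (Am d) (qq t g r) κ = 0)
    (u v : V) : (Bop k C B)^[4] δ (d u v) * (κ v - κ u) - g * ((Bop k C B)^[3] δ (d u v) * (κ v - κ u))
      - r * ((Bop k C B)^[2] δ (d u v) * (κ v - κ u))
      + (t - 1) * ((∑ y with d u y = 1, κ y * (Bop k C B)^[3] δ (d v y)) -
        ∑ y with d v y = 1, κ y * (Bop k C B)^[3] δ (d u y))
      - g * ((∑ y with d v y = 1, κ y * (Bop k C B)^[2] δ (d u y)) -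
        ∑ y with d u y = 1, κ y * (Bop k C B)^[2] δ (d v y)) = 0 := by
  have e := TT_mat2 (Am d) t g r κ
  rw [hT, mul_zero, zero_mul, add_zero] at e
  have e := congrFun (congrFun e u) v
  simp only [Matrix.sub_apply, Matrix.add_apply, Matrix.smul_apply, S1, S2 h.cm, pow_entry h,
    smul_eq_mul, Matrix.mul_diagonal, Matrix.diagonal_mul, Matrix.zero_apply] at e
  rw [h.cm v u] at e
  have e2 : ∀ y, d y u = d u y := fun y => h.cm y u
  simp only [e2] at e
  linear_combination -e

theorem near (h : Sph d D p k C B) {u v y : V} (hy : d u y = 1) : d u v ≤ d v y + 1 := by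
  have := h.tr u y v
  have := h.cm v y
  omega

theorem rel2 (h : Sph d D p k C B) (κ : V → ℝ) (t g r : ℝ) (hT : TT (Am d) (qq t g r) κ = 0)
    (hC0 : C 0 = 0) (hB0 : B 0 = k) (hC1 : C 1 = 1) (hB1 : B 1 = k - 1) (hC2 : C 2 ≠ 0)
    {u v : V} (uv : d u v = 2) :
    t * ((∑ y with (d u y = 1 ∧ d v y = 2), κ y) - ∑ y with (d v y = 1 ∧ d u y = 2), κ y)
      = (k - C 2 - B 2 - g) * (κ u - κ v) := by
  have e := ent1 h κ t g r hT u v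
  have vu : d v u = 2 := by rw [h.cm]; exact uv
  rw [HS (d := d) _ _ _ v _ _ (fun y hy => V2 hC0 hB0 hC1 hB1 _ (by have := near (v := v) h hy; omega)),
    HS (d := d) _ _ _ u _ _ (fun y hy => V2 hC0 hB0 hC1 hB1 _ (by have := near (v := u) h hy; omega)),
    uv, show ((2 : ℕ) : ℤ) = 2 by norm_num, F3_2 hC0 hB0 hC1 hB1, F2_2 hC1, F1_g _ (by norm_num)] at e
  apply mul_left_cancel₀ hC2
  linear_combination e

theorem rel3 (h : Sph d D p k C B) (κ : V → ℝ) (t g r : ℝ) (hT : TT (Am d) (qq t g r) κ = 0)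
    (hC0 : C 0 = 0) (hB0 : B 0 = k) (hC1 : C 1 = 1) (hB1 : B 1 = k - 1) (hC2 : C 2 ≠ 0)
    {u v : V} (uv : d u v = 3) :
    t * ((∑ y with (d v y = 1 ∧ d u y = 2), κ y) - ∑ y with (d u y = 1 ∧ d v y = 2), κ y)
      = C 3 * (κ v - κ u) := by
  have e := ent1 h κ t g r hT u v
  have vu : d v u = 3 := by rw [h.cm]; exact uv
  rw [HS (d := d) _ _ _ v _ _ (fun y hy => V2 hC0 hB0 hC1 hB1 _ (by have := near (v := v) h hy; omega)),
    HS (d := d) _ _ _ u _ _ (fun y hy => V2 hC0 hB0 hC1 hB1 _ (by have := near (v := u) h hy; omega)),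
    uv, show ((3 : ℕ) : ℤ) = 3 by norm_num, F3_3 hC1, Fg 2 _ (by norm_num), Fg 1 _ (by norm_num)] at e
  apply mul_left_cancel₀ hC2
  linear_combination -e

theorem rel3A (h : Sph d D p k C B) (κ : V → ℝ) (t g r : ℝ) (hT : TT (Am d) (qq t g r) κ = 0)
    (hC0 : C 0 = 0) (hB0 : B 0 = k) (hC1 : C 1 = 1) (hB1 : B 1 = k - 1) (hC2 : C 2 ≠ 0)
    {u v : V} (uv : d u v = 3) :
    (t - 1) * C 3 * ((∑ y with (d u y = 1 ∧ d v y = 3), κ y) - ∑ y with (d v y = 1 ∧ d u y = 3), κ y)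
      = C 3 * ((k - C 2 - B 2) + (k - C 3 - B 3) - g) * (κ u - κ v) +
        ((t - 1) * (k - C 2 - B 2) + g) *
        ((∑ y with (d v y = 1 ∧ d u y = 2), κ y) - ∑ y with (d u y = 1 ∧ d v y = 2), κ y) := by
  have e := ent2 h κ t g r hT u v
  have vu : d v u = 3 := by rw [h.cm]; exact uv
  rw [HS (d := d) _ _ _ v _ _ (fun y hy => V2 hC0 hB0 hC1 hB1 _ (by have := near (v := v) h hy; omega)),
    HS (d := d) _ _ _ u _ _ (fun y hy => V2 hC0 hB0 hC1 hB1 _ (by have := near (v := u) h hy; omega)),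
    HS (d := d) _ _ _ v _ _ (fun y hy => V3 hC0 hB0 hC1 hB1 _ (by have := near (v := v) h hy; omega)),
    HS (d := d) _ _ _ u _ _ (fun y hy => V3 hC0 hB0 hC1 hB1 _ (by have := near (v := u) h hy; omega)),
    uv, show ((3 : ℕ) : ℤ) = 3 by norm_num, F3_3 hC1, F4_3 hC0 hB0 hC1 hB1, Fg 2 _ (by norm_num)] at e
  apply mul_left_cancel₀ hC2
  linear_combination e

theorem rel4 (h : Sph d D p k C B) (κ : V → ℝ) (t g r : ℝ) (hT : TT (Am d) (qq t g r) κ = 0)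
    (hC0 : C 0 = 0) (hB0 : B 0 = k) (hC1 : C 1 = 1) (hB1 : B 1 = k - 1) (hC2 : C 2 ≠ 0)
    (hC3 : C 3 ≠ 0) {u v : V} (uv : d u v = 4) :
    (t - 1) * ((∑ y with (d v y = 1 ∧ d u y = 3), κ y) - ∑ y with (d u y = 1 ∧ d v y = 3), κ y)
      = C 4 * (κ v - κ u) := by
  have e := ent2 h κ t g r hT u v
  have vu : d v u = 4 := by rw [h.cm]; exact uv
  have z : ∀ {y a b: V}, d a b = 4 → d a y = 1 → (Bop k C B)^[2] δ (d b y) =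
      (if d b y = 2 then 0 else 0) + (if d b y = 3 then 0 else 0) := by
    intro y a b' hab hy
    have := near (v := b') h hy
    rw [Fg 2 _ (by have : 2 < d b' y := by omega
                   exact_mod_cast this)]
    simp
  rw [HS (d := d) _ _ _ v _ _ (fun y hy => z uv hy),
    HS (d := d) _ _ _ u _ _ (fun y hy => z vu hy),
    HS (d := d) _ _ _ v _ _ (fun y hy => V3' hC1 _ (by have := near (v := v) h hy; omega)),
    HS (d := d) _ _ _ u _ _ (fun y hy => V3' hC1 _ (by have := near (v := u) h hy; omega)),
    uv, show ((4 : ℕ) : ℤ) = 4 by norm_num, F4_4 hC1, Fg 3 _ (by norm_num), Fg 2 _ (by norm_num)] at e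
  apply mul_left_cancel₀ (mul_ne_zero hC3 hC2)
  linear_combination -e

end TD


namespace TD
variable {V : Type*} [Fintype V] {d : V → V → ℕ} {D : ℕ} {p : ℕ → ℕ → ℕ → ℕ} {k : ℝ} {C B : ℤ → ℝ}

theorem Pgen (h : Sph d D p k C B) (nt : ∀ {x y z : V}, d x y = 1 → d y z = 1 → d x z = 1 → False)
    (K : ℤ → ℝ) (i : ℕ) (ρ : ℝ)
    {x y z u : V} (xy : d x y = 1) (zu : d z u = 1) (xu : d x u = i + 1)
    (xz : d x z = i) (yz : d y z = i) (yu : d y u = i)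
    (rel : (∑ v with (d u v = 1 ∧ d x v = i), K (d y v)) -
      ∑ v with (d x v = 1 ∧ d u v = i), K (d y v) = ρ * (K (d y u) - K (d y x)))
    (hK : K i ≠ K (i + 1))
    (eqn : C i * (K (i - 1) - K (i + 1)) + C (i + 1) * K (i + 1) - K 0 - (C (i + 1) - 1) * K 2
      = ρ * (K i - K 1)) : False := by
  classical
  have yx : d y x = 1 := by rw [h.cm]; exact xy
  have ux : d u x = i + 1 := by rw [h.cm]; exact xu
  have uz : d u z = 1 := by rw [h.cm]; exact zu
  have uy : d u y = i := by rw [h.cm]; exact yu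
  have s1 : ∀ v, (if d u v = 1 ∧ d x v = i then K (d y v) else 0) =
      (if d u v = 1 ∧ d x v + 1 = d x u then K (i + 1) else 0) +
      (if d u v = 1 ∧ d y v + 1 = d y u then K (i - 1) - K (i + 1) else 0) +
      (if d u v = 1 ∧ d x v = i ∧ d y v = i then K i - K (i + 1) else 0) := by
    intro v
    by_cases h1 : d u v = 1
    · have t1 := h.tr y u v
      have t2 := h.tr y v u
      have t3 := h.cm u v
      have t4 := h.tr x v u
      have t5 := h.tr x y v
      rcases (show d y v + 1 = i ∨ d y v = i ∨ d y v = i + 1 by omega) with c | c | c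
      · have e : d x v = i := by omega
        have : ((i : ℤ) - 1) = d y v := by omega
        have n : d y v ≠ i := by omega
        rw [if_pos ⟨h1, e⟩, if_pos ⟨h1, by omega⟩, if_pos ⟨h1, by omega⟩, if_neg (by omega), this]
        ring
      · by_cases e : d x v = i
        · rw [if_pos ⟨h1, e⟩, if_pos ⟨h1, by omega⟩, if_neg (by omega), if_pos ⟨h1, e, c⟩, c]
          ring
        · rw [if_neg (by omega), if_neg (by omega), if_neg (by omega), if_neg (by omega)]
          ring
      · have : ((i : ℤ) + 1) = d y v := by omega
        by_cases e : d x v = i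
        · rw [if_pos ⟨h1, e⟩, if_pos ⟨h1, by omega⟩, if_neg (by omega), if_neg (by omega), this]
          ring
        · rw [if_neg (by omega), if_neg (by omega), if_neg (by omega), if_neg (by omega)]
          ring
    · simp [h1]
  have s2 : ∀ v, (if d x v = 1 ∧ d u v = i then K (d y v) else 0) =
      (if d x v = 1 ∧ d u v + 1 = d u x then K 2 else 0) +
      (if v = y then K 0 - K 2 else 0) := by
    intro v
    by_cases e : v = y
    · subst e
      rw [if_pos ⟨xy, uy⟩, if_pos ⟨xy, by omega⟩, if_pos rfl, h.dd]
      simp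
    · rw [if_neg e]
      by_cases c : d x v = 1 ∧ d u v = i
      · have t1 := h.tr y x v
        have t2 : d y v ≠ 1 := fun hh => nt yx c.1 hh
        have t3 : d y v ≠ 0 := fun hh => e (h.d0 hh).symm
        have : d y v = 2 := by omega
        rw [if_pos c, if_pos ⟨c.1, by omega⟩, this]
        simp
      · rw [if_neg c, if_neg (by omega)]; simp
  have c1 := h.hC u x
  have c2 := h.hC u y
  have c3 := h.hC x u
  simp only [Finset.sum_filter, s1, s2, Finset.sum_add_distrib] at rel
  simp only [← Finset.sum_filter, Finset.sum_const, nsmul_eq_mul, c1, c2, c3] at rel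
  have cy : (Finset.univ.filter fun a => a = y).card = 1 := by
    rw [Finset.card_eq_one]
    exact ⟨y, by ext; simp⟩
  rw [cy, xu, yu, ux, yx] at rel
  push_cast at rel
  have fin : ((Finset.univ.filter fun v => d u v = 1 ∧ d x v = i ∧ d y v = i).card : ℝ) *
    (K i - K (i + 1)) = 0 := by linear_combination rel - eqn
  have := (mul_eq_zero.1 fin).resolve_right (sub_ne_zero.2 hK)
  have := Finset.card_eq_zero.1 (Nat.cast_eq_zero.1 this)
  have hz : z ∈ (Finset.univ.filter fun v => d u v = 1 ∧ d x v = i ∧ d y v = i) := by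
    simp [uz, xz, yz]
  rw [this] at hz
  simp at hz

theorem b_int (a c a3 c3 : ℕ) (b : ℝ) (ha : 0 < a) (hc3 : 0 < c3) (hb1 : b ≠ -1)
    (pa : (a : ℝ) = (1 + b) * (1 + b - c)) (pa3 : (a3 : ℝ) = (1 + b + b ^ 2) * a)
    (pc3 : (c3 : ℝ) = (1 + b + b ^ 2) * (c - b)) : b ≤ -2 := by
  have h3 : 0 < 1 + b + b ^ 2 := by nlinarith [sq_nonneg (b + 1 / 2)]
  have ha' : (0 : ℝ) < a := by exact_mod_cast ha
  have hc' : (0 : ℝ) < c3 := by exact_mod_cast hc3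
  have ha3 : (0 : ℝ) < a3 := by rw [pa3]; positivity
  obtain ⟨q, hq⟩ : ∃ q : ℚ, b = q := by
    refine ⟨c - c3 * a / a3, ?_⟩
    push_cast
    field_simp
    rw [pa3, pc3]; ring
  have hq2 : q ^ 2 + (2 - c) * q + (1 - c - a) = 0 := by
    have : (b ^ 2 + (2 - c) * b + (1 - c - a) : ℝ) = 0 := by rw [pa]; ring
    rw [hq] at this
    exact_mod_cast this
  have hi : IsIntegral ℤ q := by
    refine ⟨Polynomial.X ^ 2 + Polynomial.C ((2 : ℤ) - c) * Polynomial.X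
      + Polynomial.C ((1 : ℤ) - c - a), ?_, ?_⟩
    · monicity!
    · simp [Polynomial.eval₂_add, Polynomial.eval₂_mul, Polynomial.eval₂_pow]
      linarith
  obtain ⟨m, hm⟩ := IsIntegrallyClosed.isIntegral_iff.1 hi
  have hbm : b = m := by rw [hq, ← hm]; simp
  have hcb : 0 < (c : ℝ) - b := by
    by_contra hh
    have := mul_nonpos_of_nonneg_of_nonpos h3.le (not_lt.1 hh)
    linarith
  subst hbm
  have hcb : m < c := by
    have : (m : ℝ) < c := by linarith
    exact_mod_cast this
  have pa' : (a : ℤ) = (1 + m) * (1 + m - c) := by exact_mod_cast pa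
  have hm1 : m ≠ -1 := by
    rintro rfl
    simp at hb1
  have : m ≤ -2 := by
    by_contra hh
    have h1 : 0 < 1 + m := by omega
    have h2 : 1 + m - c ≤ 0 := by omega
    have := mul_nonpos_of_nonneg_of_nonpos h1.le h2
    omega
  exact_mod_cast this

end TD


namespace TD

theorem gstp {V : Type*} (G : SimpleGraph V) (hconn : G.Connected) {x y : V} {n : ℕ}
    (h : G.dist x y = n + 1) : ∃ z, G.dist x z = 1 ∧ G.dist z y = n := by
  obtain ⟨w, hw⟩ := hconn.exists_walk_length_eq_dist x y
  cases w with
  | nil => simp at h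
  | @cons _ z _ a w =>
    have h1 : G.dist x z = 1 := SimpleGraph.dist_eq_one_iff_adj.2 a
    refine ⟨z, h1, ?_⟩
    have h2 := SimpleGraph.dist_le w
    have h3 := hconn.dist_triangle (u := x) (v := z) (w := y)
    simp at hw
    omega

theorem gex {V : Type*} (G : SimpleGraph V) (hconn : G.Connected) (m : ℕ) : ∀ n,
    (∃ x y : V, G.dist x y = n + m) → ∃ x y : V, G.dist x y = n := by
  induction m with
  | zero => intro n h; exact h
  | succ m ih =>
    rintro n ⟨x, y, h⟩
    obtain ⟨z, h1, h2⟩ := gstp G hconn (n := n + m) h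
    exact ih n ⟨z, y, h2⟩

structure Ctx {V : Type*} [Fintype V] (G : SimpleGraph V) (D : ℕ) (p : ℕ → ℕ → ℕ → ℕ)
    (b α β : ℝ) : Prop where
  hconn : G.Connected
  hD : 3 ≤ D
  hle : ∀ x y : V, G.dist x y ≤ D
  hdiam : ∃ x y : V, G.dist x y = D
  hdr : G.IsDistRegularWith D p
  hcp : HasClassicalParams D p b α β
  ha1 : p 1 1 1 = 0
  ha2 : p 2 1 2 ≠ 0

section
variable {V : Type*} [Fintype V] {G : SimpleGraph V} {D : ℕ} {p : ℕ → ℕ → ℕ → ℕ} {b α β : ℝ}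

theorem Ctx.ex (h : Ctx G D p b α β) (i : ℕ) (hi : i ≤ D) : ∃ x y : V, G.dist x y = i := by
  apply gex G h.hconn (D - i) i
  rw [Nat.add_sub_cancel' hi]
  exact h.hdiam

theorem Ctx.cnt (h : Ctx G D p b α β) (x y : V) (i j : ℕ) (hi : i ≤ D) (hj : j ≤ D) :
    (Finset.univ.filter fun z => G.dist x z = i ∧ G.dist y z = j).card = p (G.dist x y) i j := by
  rw [← h.hdr _ i j (h.hle x y) hi hj x y rfl, ← Set.ncard_coe_finset]
  congr 1
  ext z
  simp

theorem Ctx.cntB (h : Ctx G D p b α β) (x y : V) :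
    (Finset.univ.filter fun z => G.dist x z = 1 ∧ G.dist y z = G.dist x y + 1).card
      = p (G.dist x y) 1 (G.dist x y + 1) := by
  have := h.hD
  rcases (h.hle x y).eq_or_lt with e | e
  · have e2 : (p D 1 (D + 1) : ℝ) = 0 := by rw [h.hcp.2.2.2 D le_rfl]; ring
    rw [e, Nat.cast_eq_zero.1 e2, Finset.card_eq_zero, Finset.filter_eq_empty_iff]
    rintro z - ⟨_, hz⟩
    have := h.hle y z
    omega
  · exact h.cnt x y 1 _ (by omega) (by omega)

theorem Ctx.cntk (h : Ctx G D p b α β) (x : V) :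
    (Finset.univ.filter fun z => G.dist x z = 1).card = p 0 1 1 := by
  have := h.hD
  have := h.cnt x x 1 1 (by omega) (by omega)
  simpa only [and_self, SimpleGraph.dist_self] using this

theorem Ctx.val (h : Ctx G D p b α β) (i : ℕ) (hi : 1 ≤ i) (hiD : i ≤ D) :
    p i 1 (i - 1) + p i 1 i + p i 1 (i + 1) = p 0 1 1 := by
  have hD := h.hD
  obtain ⟨x, y, xy⟩ := h.ex i hiD
  have e := h.cntB x y
  rw [xy] at e
  rw [← e, ← h.cntk x]
  have e1 := h.cnt x y 1 (i - 1) (by omega) (by omega)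
  have e2 := h.cnt x y 1 i (by omega) (by omega)
  rw [xy] at e1 e2
  rw [← e1, ← e2]
  simp only [Finset.card_filter]
  rw [← Finset.sum_add_distrib, ← Finset.sum_add_distrib]
  apply Finset.sum_congr rfl
  intro v _
  have t1 := h.hconn.dist_triangle (u := y) (v := x) (w := v)
  have t2 := h.hconn.dist_triangle (u := y) (v := v) (w := x)
  have t3 := G.dist_comm (u := x) (v := v)
  have t4 := G.dist_comm (u := x) (v := y)
  split_ifs <;> omega

theorem gb0 : gaussBracket b 0 = 0 := by simp [gaussBracket]
theorem gb1 : gaussBracket b 1 = 1 := by simp [gaussBracket]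
theorem gb2 : gaussBracket b 2 = 1 + b := by simp [gaussBracket, Finset.sum_range_succ]
theorem gb3 : gaussBracket b 3 = 1 + b + b ^ 2 := by simp [gaussBracket, Finset.sum_range_succ]

theorem Ctx.hk (h : Ctx G D p b α β) : (p 0 1 1 : ℝ) = gaussBracket b D * β := by
  have := h.hcp.2.2.2 0 (by omega)
  rw [gb0] at this
  simpa using this

theorem Ctx.hβ (h : Ctx G D p b α β) : β = 1 + α - α * gaussBracket b D := by
  have hD := h.hD
  have e := h.val 1 (by omega) (by omega)
  have e : ((p 1 1 0 + p 1 1 1 + p 1 1 2 : ℕ) : ℝ) = (p 0 1 1 : ℕ) := by exact_mod_cast e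
  have c1 := h.hcp.2.2.1 1 (by omega)
  have b1 := h.hcp.2.2.2 1 (by omega)
  rw [gb1] at b1
  simp only [Nat.sub_self, gb1, gb0] at c1
  push_cast at e
  rw [h.hk, h.ha1, c1, b1] at e
  push_cast at e
  linear_combination -e

theorem Ctx.hc2 (h : Ctx G D p b α β) : (p 2 1 1 : ℝ) = (1 + b) * (1 + α) := by
  have hD := h.hD
  have := h.hcp.2.2.1 2 (by omega)
  norm_num [gb1, gb2] at this
  exact this

theorem Ctx.hc3 (h : Ctx G D p b α β) : (p 3 1 2 : ℝ) = (1 + b + b ^ 2) * (1 + α * (1 + b)) := by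
  have hD := h.hD
  have := h.hcp.2.2.1 3 (by omega)
  norm_num [gb3, gb2] at this
  exact this

theorem Ctx.ha2' (h : Ctx G D p b α β) : (p 2 1 2 : ℝ) = - α * (1 + b) ^ 2 := by
  have hD := h.hD
  have e := h.val 2 (by omega) (by omega)
  have e : ((p 2 1 1 + p 2 1 2 + p 2 1 3 : ℕ) : ℝ) = (p 0 1 1 : ℕ) := by exact_mod_cast e
  have b1 := h.hcp.2.2.2 2 (by omega)
  rw [gb2, h.hβ] at b1
  push_cast at e
  rw [h.hk, h.hc2, b1, h.hβ] at e
  linear_combination e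

theorem Ctx.ha3' (h : Ctx G D p b α β) : (p 3 1 3 : ℝ) = (1 + b + b ^ 2) * (p 2 1 2 : ℝ) := by
  have hD := h.hD
  have e := h.val 3 (by omega) (by omega)
  have e : ((p 3 1 2 + p 3 1 3 + p 3 1 4 : ℕ) : ℝ) = (p 0 1 1 : ℕ) := by exact_mod_cast e
  have b1 := h.hcp.2.2.2 3 (by omega)
  rw [gb3, h.hβ] at b1
  push_cast at e
  rw [h.hk, h.hc3, b1, h.hβ] at e
  rw [h.ha2']
  linear_combination e

theorem Ctx.posC (h : Ctx G D p b α β) (i : ℕ) (hi : i + 1 ≤ D) : 0 < p (i + 1) 1 i := by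
  have hD := h.hD
  obtain ⟨x, y, xy⟩ := h.ex (i + 1) hi
  obtain ⟨z, z1, z2⟩ := gstp G h.hconn xy
  have := h.cnt x y 1 i (by omega) (by omega)
  rw [xy] at this
  rw [← this, Finset.card_pos]
  exact ⟨z, by simp [z1, G.dist_comm (u := y), z2]⟩

theorem Ctx.posB (h : Ctx G D p b α β) (i : ℕ) (hi : i < D) : 0 < p i 1 (i + 1) := by
  have hD := h.hD
  obtain ⟨x, y, xy⟩ := h.ex (i + 1) (by omega)
  obtain ⟨z, z1, z2⟩ := gstp G h.hconn xy
  have := h.cnt z y 1 (i + 1) (by omega) (by omega)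
  rw [z2] at this
  rw [← this, Finset.card_pos]
  exact ⟨x, by simp [G.dist_comm (u := z), G.dist_comm (u := y), z1, xy]⟩

theorem Ctx.pa (h : Ctx G D p b α β) :
    ((p 2 1 2 : ℕ) : ℝ) = (1 + b) * (1 + b - (p 2 1 1 : ℕ)) := by
  rw [h.ha2', h.hc2]; ring

theorem Ctx.pc3 (h : Ctx G D p b α β) :
    ((p 3 1 2 : ℕ) : ℝ) = (1 + b + b ^ 2) * ((p 2 1 1 : ℕ) - b) := by
  rw [h.hc3, h.hc2]; ring

theorem Ctx.hb (h : Ctx G D p b α β) : b ≤ -2 :=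
  b_int (p 2 1 2) (p 2 1 1) (p 3 1 3) (p 3 1 2) b (Nat.pos_of_ne_zero h.ha2)
    (h.posC 2 h.hD) h.hcp.2.1 h.pa h.ha3' h.pc3

noncomputable def XX (b : ℝ) (i : ℤ) : ℝ := (b ^ i - 1) / (b - 1)
noncomputable def KK (b : ℝ) (i : ℤ) : ℝ := b ^ (-i)
noncomputable def CC (b α : ℝ) (i : ℤ) : ℝ := XX b i * (1 + α * XX b (i - 1))
noncomputable def BB (b α s : ℝ) (i : ℤ) : ℝ := (s - XX b i) * (1 + α - α * s - α * XX b i)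

theorem XX_nat (hb : b ≤ -2) (i : ℕ) : XX b i = gaussBracket b i := by
  unfold XX gaussBracket
  rw [geom_sum_eq (by intro h; linarith)]
  simp

theorem Ctx.sph (h : Ctx G D p b α β) : Sph G.dist D p
    (gaussBracket b D * (1 + α - α * gaussBracket b D)) (CC b α) (BB b α (gaussBracket b D)) where
  d0 := fun {x y} e => (h.hconn.dist_eq_zero_iff).1 e
  dd := fun x => by simp
  cm := fun x y => G.dist_comm
  tr := fun x y z => h.hconn.dist_triangle
  hk := fun u => by rw [h.cntk, h.hk, ← h.hβ]
  hC := fun u y => by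
    have hD := h.hD
    rcases e : G.dist y u with _ | i
    · simp [CC, XX]
    · have := h.cnt u y 1 i (by omega) (by have := h.hle y u; omega)
      rw [G.dist_comm (u := u), e] at this
      have e2 := h.hcp.2.2.1 (i + 1) (by have := h.hle y u; omega)
      rw [Nat.add_sub_cancel] at e2
      have e3 : ((i + 1 : ℕ) : ℤ) - 1 = (i : ℕ) := by push_cast; ring
      rw [CC, e3, XX_nat h.hb, XX_nat h.hb, ← e2, ← this]
      simp only [Nat.add_right_cancel_iff]
  hB := fun u y => by
    have := h.cntB u y
    rw [G.dist_comm (u := u) (v := y)] at this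
    rw [this, BB, XX_nat h.hb, h.hcp.2.2.2 _ (h.hle y u), ← h.hβ]
  hle := h.hle
  hp := fun x y i j hi hj => h.cnt x y i j hi hj
  hex := h.ex
  hB0 := fun i hi => by
    rw [BB, XX_nat h.hb, ← h.hβ, ← h.hcp.2.2.2 _ hi.le]
    exact_mod_cast (h.posB i hi).ne'

theorem Ctx.TT0 [DecidableEq V] (h : Ctx G D p b α β) : ∃ r, ∀ w : V,
    TT (Am G.dist) (qq (b + b⁻¹ + 1) (α * (1 + b) / b) r) (fun v => KK b (G.dist w v)) = 0 := by
  have hb := h.hb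
  have hb0 : b ≠ 0 := by intro h; linarith
  have hb1 : b - 1 ≠ 0 := by intro h; linarith
  refine ⟨gaussBracket b D*(1+α-α*gaussBracket b D)*((b+b⁻¹+1)+1) + (gaussBracket b D-1)*(1-α*gaussBracket b D)*((1+b)*(1+α))*(1 - (b+b⁻¹+1)/b), fun w => ?_⟩
  ext u v
  rw [TT_apply]
  refine main h.sph b α (gaussBracket b D) _ _ _ hb (XX b) (KK b) ?_ ?_ ?_ ?_ (fun _ => rfl)
    (fun _ => rfl) rfl ?_ rfl rfl rfl w u v
  · intro i
    unfold XX
    rw [zpow_add_one₀ hb0]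
    field_simp
    ring
  · intro i
    unfold KK
    rw [← zpow_one_add₀ hb0]
    congr 1; ring
  · simp [KK]
  · intro i
    unfold KK XX
    rw [mul_div_cancel₀ _ hb1, zpow_neg]
    have : b ^ i ≠ 0 := zpow_ne_zero _ hb0
    field_simp
    ring
  · rw [← h.hβ, ← h.hk]
    have := h.val 1 le_rfl (by have := h.hD; omega)
    have h2 := h.posC 0 (by have := h.hD; omega)
    simp only [Nat.sub_self, zero_add] at *
    have : 1 ≤ p 0 1 1 := by omega
    exact_mod_cast this

end
end TD


namespace TD
theorem X0 {b : ℝ} : XX b 0 = 0 := by simp [XX]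
theorem X1 {b : ℝ} (hb : b ≤ -2) : XX b 1 = 1 := by
  have hb1 : b - 1 ≠ 0 := by intro h; linarith
  simp [XX, hb1]
theorem X2 {b : ℝ} (hb : b ≤ -2) : XX b 2 = 1 + b := by
  have := XX_nat hb 2
  rw [gb2] at this
  exact_mod_cast this
theorem X3 {b : ℝ} (hb : b ≤ -2) : XX b 3 = 1 + b + b ^ 2 := by
  have := XX_nat hb 3
  rw [gb3] at this
  exact_mod_cast this
theorem X4 {b : ℝ} (hb : b ≤ -2) : XX b 4 = 1 + b + b ^ 2 + b ^ 3 := by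
  have := XX_nat hb 4
  simp [gaussBracket, Finset.sum_range_succ] at this
  exact_mod_cast this

section
variable {V : Type*} [Fintype V] {G : SimpleGraph V} {D : ℕ} {p : ℕ → ℕ → ℕ → ℕ} {b α β : ℝ}

theorem pw {b : ℝ} (hb : b ≤ -2) {n : ℕ} (hn : n ≤ 5) : b ^ (5 - n) = b ^ 5 * KK b n := by
  have hb0 : b ≠ 0 := by intro h; linarith
  unfold KK
  rw [zpow_neg, zpow_natCast, ← div_eq_mul_inv, pow_sub₀ _ hb0 hn]
  rfl

theorem pwsum {b : ℝ} (hb : b ≤ -2) (hconn : G.Connected) {x y w : V} (i : ℕ) (hw : G.dist w x ≤ 4) :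
    (∑ v with (G.dist x v = 1 ∧ G.dist y v = i), b ^ (5 - G.dist w v)) =
      b ^ 5 * ∑ v with (G.dist x v = 1 ∧ G.dist y v = i), KK b (G.dist w v) := by
  rw [Finset.mul_sum]
  apply Finset.sum_congr rfl
  intro v hv
  simp only [Finset.mem_filter, Finset.mem_univ, true_and] at hv
  apply pw hb
  have := hconn.dist_triangle (u := w) (v := x) (w := v)
  omega

theorem Ctx.nt (h : Ctx G D p b α β) {x y z : V} (h1 : G.dist x y = 1) (h2 : G.dist y z = 1)
    (h3 : G.dist x z = 1) : False := by
  have hD := h.hD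
  have := h.cnt x y 1 1 (by omega) (by omega)
  rw [h1, h.ha1, Finset.card_eq_zero, Finset.filter_eq_empty_iff] at this
  exact this (Finset.mem_univ z) ⟨h3, h2⟩

structure Rels (G : SimpleGraph V) (b α : ℝ) : Prop where
  r2 : ∀ w : V, ∀ {u v : V}, G.dist u v = 2 →
    (b + b⁻¹ + 1) * ((∑ y with (G.dist u y = 1 ∧ G.dist v y = 2), KK b (G.dist w y)) -
      ∑ y with (G.dist v y = 1 ∧ G.dist u y = 2), KK b (G.dist w y))
      = (- α * (1 + b) ^ 2 - α * (1 + b) / b) * (KK b (G.dist w u) - KK b (G.dist w v))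
  r3 : ∀ w : V, ∀ {u v : V}, G.dist u v = 3 →
    (b + b⁻¹ + 1) * ((∑ y with (G.dist v y = 1 ∧ G.dist u y = 2), KK b (G.dist w y)) -
      ∑ y with (G.dist u y = 1 ∧ G.dist v y = 2), KK b (G.dist w y))
      = (1 + b + b ^ 2) * (1 + α * (1 + b)) * (KK b (G.dist w v) - KK b (G.dist w u))
  r3A : ∀ w : V, ∀ {u v : V}, G.dist u v = 3 →
    (b + b⁻¹) * ((1 + b + b ^ 2) * (1 + α * (1 + b))) *
      ((∑ y with (G.dist u y = 1 ∧ G.dist v y = 3), KK b (G.dist w y)) -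
        ∑ y with (G.dist v y = 1 ∧ G.dist u y = 3), KK b (G.dist w y))
      = ((1 + b + b ^ 2) * (1 + α * (1 + b))) * (- α * (1 + b) ^ 2 +
        (1 + b + b ^ 2) * (- α * (1 + b) ^ 2) - α * (1 + b) / b) *
          (KK b (G.dist w u) - KK b (G.dist w v)) +
        ((b + b⁻¹) * (- α * (1 + b) ^ 2) + α * (1 + b) / b) *
      ((∑ y with (G.dist v y = 1 ∧ G.dist u y = 2), KK b (G.dist w y)) -
        ∑ y with (G.dist u y = 1 ∧ G.dist v y = 2), KK b (G.dist w y))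
  r4 : ∀ w : V, ∀ {u v : V}, G.dist u v = 4 →
    (b + b⁻¹) * ((∑ y with (G.dist v y = 1 ∧ G.dist u y = 3), KK b (G.dist w y)) -
      ∑ y with (G.dist u y = 1 ∧ G.dist v y = 3), KK b (G.dist w y))
      = (1 + b + b ^ 2 + b ^ 3) * (1 + α * (1 + b + b ^ 2)) * (KK b (G.dist w v) - KK b (G.dist w u))

theorem cC0 {b α : ℝ} : CC b α 0 = 0 := by simp [CC, X0]
theorem cC1 {b α : ℝ} (hb : b ≤ -2) : CC b α 1 = 1 := by
  simp [CC, X0, X1 hb]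
theorem cC2 {b α : ℝ} (hb : b ≤ -2) : CC b α 2 = (1 + b) * (1 + α) := by
  rw [CC, X2 hb, show (2 : ℤ) - 1 = 1 by norm_num, X1 hb]; ring
theorem cC3 {b α : ℝ} (hb : b ≤ -2) : CC b α 3 = (1 + b + b ^ 2) * (1 + α * (1 + b)) := by
  rw [CC, X3 hb, show (3 : ℤ) - 1 = 2 by norm_num, X2 hb]
theorem cC4 {b α : ℝ} (hb : b ≤ -2) :
    CC b α 4 = (1 + b + b ^ 2 + b ^ 3) * (1 + α * (1 + b + b ^ 2)) := by
  rw [CC, X4 hb, show (4 : ℤ) - 1 = 3 by norm_num, X3 hb]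

theorem Ctx.rels (h : Ctx G D p b α β) : Rels G b α := by
  classical
  have hb := h.hb
  have hD := h.hD
  obtain ⟨r, hr⟩ := h.TT0
  set s := gaussBracket b D with hs
  have hC0 : CC b α 0 = 0 := cC0
  have hB0 : BB b α s 0 = s * (1 + α - α * s) := by simp [BB, X0]
  have hC1 : CC b α 1 = 1 := cC1 hb
  have hB1 : BB b α s 1 = s * (1 + α - α * s) - 1 := by rw [BB, X1 hb]; ring
  have hC2 : CC b α 2 ≠ 0 := by
    rw [cC2 hb, ← h.hc2]; exact_mod_cast (h.posC 1 (by omega)).ne'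
  have hC3 : CC b α 3 ≠ 0 := by
    rw [cC3 hb, ← h.hc3]; exact_mod_cast (h.posC 2 (by omega)).ne'
  have a2 : s * (1 + α - α * s) - CC b α 2 - BB b α s 2 = - α * (1 + b) ^ 2 := by
    rw [cC2 hb, BB, X2 hb]; ring
  have a3 : s * (1 + α - α * s) - CC b α 3 - BB b α s 3 = (1 + b + b ^ 2) * (- α * (1 + b) ^ 2) := by
    rw [cC3 hb, BB, X3 hb]; ring
  have tm : b + b⁻¹ + 1 - 1 = b + b⁻¹ := by ring
  refine ⟨fun w u v uv => ?_, fun w u v uv => ?_, fun w u v uv => ?_, fun w u v uv => ?_⟩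
  · have := rel2 h.sph _ _ _ _ (hr w) hC0 hB0 hC1 hB1 hC2 uv
    rw [a2] at this
    exact this
  · have := rel3 h.sph _ _ _ _ (hr w) hC0 hB0 hC1 hB1 hC2 uv
    rw [cC3 hb] at this
    exact this
  · have := rel3A h.sph _ _ _ _ (hr w) hC0 hB0 hC1 hB1 hC2 uv
    rw [a2, a3, cC3 hb, tm] at this
    exact this
  · have := rel4 h.sph _ _ _ _ (hr w) hC0 hB0 hC1 hB1 hC2 hC3 uv
    rw [cC4 hb, tm] at this
    exact this

theorem kkne {b : ℝ} (hb : b ≤ -2) (i : ℤ) : KK b i ≠ KK b (i + 1) := by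
  have hb0 : b ≠ 0 := by intro h; linarith
  have hb1 : b - 1 ≠ 0 := by intro h; linarith
  intro e
  have : KK b i = b * KK b (i + 1) := by
    unfold KK
    rw [← zpow_one_add₀ hb0]
    congr 1; ring
  have n : KK b (i + 1) ≠ 0 := zpow_ne_zero _ hb0
  rw [this] at e
  apply mul_ne_zero hb1 n
  linear_combination e

theorem Ctx.P (h : Ctx G D p b α β) (i : ℕ) (hi : i = 2 ∨ i = 3) {x y z u : V}
    (xy : G.dist x y = 1) (zu : G.dist z u = 1) (xu : G.dist x u = i + 1)
    (xz : G.dist x z = i) (yz : G.dist y z = i) (yu : G.dist y u = i) : False := by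
  have hb := h.hb
  have hb0 : b ≠ 0 := by intro h; linarith
  have ht : b ^ 2 + 1 + b ≠ 0 := by intro e; nlinarith
  have ht' : b + b⁻¹ + 1 ≠ 0 := by
    intro e; field_simp at e; apply ht; linear_combination e
  have hu : b ^ 2 + 1 ≠ 0 := by positivity
  have hu' : b + b⁻¹ ≠ 0 := by
    intro e; field_simp at e; apply hu; linear_combination e
  have R := h.rels
  rcases hi with rfl | rfl
  · refine Pgen h.sph (fun {x y z} => h.nt) (KK b) 2 ((1 + b + b ^ 2) * (1 + α * (1 + b)) / (b + b⁻¹ + 1)) xy zu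
      xu xz yz yu ?_ (kkne hb _) ?_
    · have := R.r3 y (u := x) (v := u) (by omega)
      field_simp at this ⊢
      linear_combination this
    · simp only [Nat.cast_ofNat]
      norm_num only
      rw [cC2 hb, cC3 hb]
      simp only [KK, zpow_neg, neg_zero, zpow_zero, zpow_one, zpow_ofNat]
      have ht2 : 1 + b + b ^ 2 ≠ 0 := by intro e; nlinarith
      field_simp
      ring
  · refine Pgen h.sph (fun {x y z} => h.nt) (KK b) 3
      ((1 + b + b ^ 2 + b ^ 3) * (1 + α * (1 + b + b ^ 2)) / (b + b⁻¹)) xy zu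
      xu xz yz yu ?_ (kkne hb _) ?_
    · have := R.r4 y (u := x) (v := u) (by omega)
      field_simp at this ⊢
      linear_combination this
    · simp only [Nat.cast_ofNat]
      norm_num only
      rw [cC3 hb, cC4 hb]
      simp only [KK, zpow_neg, neg_zero, zpow_zero, zpow_one, zpow_ofNat]
      have ht2 : 1 + b + b ^ 2 ≠ 0 := by intro e; nlinarith
      field_simp
      ring

theorem Ctx.R2 (h : Ctx G D p b α β) {x y : V} (w : V) (xy : G.dist x y = 2)
    (wx : G.dist w x ≤ 4) (wy : G.dist w y ≤ 4) :
    (∑ v with (G.dist x v = 1 ∧ G.dist y v = 2), b ^ (5 - G.dist w v)) -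
      (∑ v with (G.dist y v = 1 ∧ G.dist x v = 2), b ^ (5 - G.dist w v))
      = (1 + b - (p 2 1 1 : ℕ)) * (b ^ (5 - G.dist w x) - b ^ (5 - G.dist w y)) := by
  have hb := h.hb
  have hb0 : b ≠ 0 := by intro h; linarith
  have ht : b ^ 2 + 1 + b ≠ 0 := by intro e; nlinarith
  have ht' : b + b⁻¹ + 1 ≠ 0 := by
    intro e; field_simp at e; apply ht; linear_combination e
  rw [pwsum hb h.hconn _ wx, pwsum hb h.hconn _ wy, pw hb (by omega), pw hb (by omega), h.hc2]
  have := h.rels.r2 w xy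
  apply mul_left_cancel₀ ht'
  have q : (- α * (1 + b) ^ 2 - α * (1 + b) / b) = (b + b⁻¹ + 1) * (1 + b - (1 + b) * (1 + α)) := by
      field_simp; ring
  linear_combination b ^ 5 * this + b ^ 5 * (KK b (G.dist w x) - KK b (G.dist w y)) * q

theorem Ctx.R3' (h : Ctx G D p b α β) {x y : V} (w : V) (xy : G.dist x y = 3) :
    (∑ v with (G.dist y v = 1 ∧ G.dist x v = 2), KK b (G.dist w v)) -
      (∑ v with (G.dist x v = 1 ∧ G.dist y v = 2), KK b (G.dist w v))
      = b * (1 + α * (1 + b)) * (KK b (G.dist w y) - KK b (G.dist w x)) := by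
  have hb := h.hb
  have hb0 : b ≠ 0 := by intro h; linarith
  have ht : b ^ 2 + 1 + b ≠ 0 := by intro e; nlinarith
  have ht' : b + b⁻¹ + 1 ≠ 0 := by
    intro e; field_simp at e; apply ht; linear_combination e
  have := h.rels.r3 w xy
  apply mul_left_cancel₀ ht'
  have q : (1 + b + b ^ 2) * (1 + α * (1 + b)) = (b + b⁻¹ + 1) * (b * (1 + α * (1 + b))) := by
      field_simp; ring
  linear_combination this + (KK b (G.dist w y) - KK b (G.dist w x)) * q

theorem Ctx.R3 (h : Ctx G D p b α β) {x y : V} (w : V) (xy : G.dist x y = 3)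
    (wx : G.dist w x ≤ 4) (wy : G.dist w y ≤ 4) :
    (∑ v with (G.dist y v = 1 ∧ G.dist x v = 2), b ^ (5 - G.dist w v)) -
      (∑ v with (G.dist x v = 1 ∧ G.dist y v = 2), b ^ (5 - G.dist w v))
      = ((p 2 1 1 : ℕ) - b) * b * (b ^ (5 - G.dist w y) - b ^ (5 - G.dist w x)) := by
  have hb := h.hb
  rw [pwsum hb h.hconn _ wx, pwsum hb h.hconn _ wy, pw hb (by omega), pw hb (by omega), h.hc2]
  linear_combination b ^ 5 * h.R3' w xy

theorem Ctx.R3A (h : Ctx G D p b α β) {x y : V} (w : V) (xy : G.dist x y = 3)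
    (wx : G.dist w x ≤ 4) (wy : G.dist w y ≤ 4) :
    (∑ v with (G.dist x v = 1 ∧ G.dist y v = 3), b ^ (5 - G.dist w v)) -
      (∑ v with (G.dist y v = 1 ∧ G.dist x v = 3), b ^ (5 - G.dist w v))
      = (p 2 1 2 : ℕ) * (b + 1) * (b ^ (5 - G.dist w x) - b ^ (5 - G.dist w y)) := by
  have hb := h.hb
  have hD := h.hD
  have hb0 : b ≠ 0 := by intro h; linarith
  have hu : b ^ 2 + 1 ≠ 0 := by positivity
  have hu' : b + b⁻¹ ≠ 0 := by
    intro e; field_simp at e; apply hu; linear_combination e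
  have hC3 : (1 + b + b ^ 2) * (1 + α * (1 + b)) ≠ 0 := by
    rw [← h.hc3]; exact_mod_cast (h.posC 2 (by omega)).ne'
  rw [pwsum hb h.hconn _ wx, pwsum hb h.hconn _ wy, pw hb (by omega), pw hb (by omega), h.ha2']
  have := h.rels.r3A w xy
  rw [h.R3' w xy] at this
  apply mul_left_cancel₀ (mul_ne_zero hu' hC3)
  have q : ((1 + b + b ^ 2) * (1 + α * (1 + b))) * (- α * (1 + b) ^ 2 +
        (1 + b + b ^ 2) * (- α * (1 + b) ^ 2) - α * (1 + b) / b) -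
        ((b + b⁻¹) * (- α * (1 + b) ^ 2) + α * (1 + b) / b) * (b * (1 + α * (1 + b)))
        = (b + b⁻¹) * ((1 + b + b ^ 2) * (1 + α * (1 + b))) * (- α * (1 + b) ^ 2 * (b + 1)) := by
      field_simp; ring
  linear_combination b ^ 5 * this + b ^ 5 * (KK b (G.dist w x) - KK b (G.dist w y)) * q

@[reducible] noncomputable def Ctx.drg (h : Ctx G D p b α β) : DRG V where
  d := G.dist
  d0 := fun {x y} e => (h.hconn.dist_eq_zero_iff).1 e
  dd := fun x => by simp
  cm := fun x y => G.dist_comm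
  tr := fun x y z => h.hconn.dist_triangle
  stp := fun {x y n} e => gstp G h.hconn e
  b := b
  c := p 2 1 1
  a := p 2 1 2
  c3 := p 3 1 2
  a3 := p 3 1 3
  hb := h.hb
  hc := h.posC 1 (by have := h.hD; omega)
  ha := Nat.pos_of_ne_zero h.ha2
  pa := h.pa
  pa3 := h.ha3'
  pc3 := h.pc3
  nt := h.nt
  P := fun i hi {x y z u} => h.P i hi
  kC2 := fun {x y} e => by
    have hD := h.hD
    rw [h.cnt x y 1 1 (by omega) (by omega), e]
  kA2 := fun {x y} e => by
    have hD := h.hD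
    rw [h.cnt x y 1 2 (by omega) (by omega), e]
  kC3 := fun {x y} e => by
    have hD := h.hD
    rw [h.cnt x y 1 2 (by omega) (by omega), e]
  kA3 := fun {x y} e => by
    have hD := h.hD
    rw [h.cnt x y 1 3 (by omega) (by omega), e]
  kB := fun {x y x' y'} e => by
    rw [h.cntB, h.cntB, e]
  R2 := h.R2
  R3 := h.R3
  R3A := h.R3A

end
end TD

/-- Under the classical-parameter hypotheses with `D ≥ 3`, `a₁ = 0`,
`a₂ ≠ 0`, for `∂(x,y) = 3` the subgraph induced on `Δ = [x, C]` is regular with valency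
`a₃ + c₃` (`= p³₁₃ + p³₁₂`), weak-geodetically closed, has diameter `3`, and contains
`x` and `y`. -/
theorem delta_is_regular_wgc [Fintype V] (G : SimpleGraph V) (hconn : G.Connected)
    (D : ℕ) (hD : 3 ≤ D)
    (hdiam_le : ∀ x y : V, G.dist x y ≤ D) (hdiam : ∃ x y : V, G.dist x y = D)
    (p : ℕ → ℕ → ℕ → ℕ) (hdr : G.IsDistRegularWith D p)
    (b α β : ℝ) (hcp : HasClassicalParams D p b α β)
    (ha1 : p 1 1 1 = 0) (ha2 : p 2 1 2 ≠ 0)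
    (x y : V) (hxy : G.dist x y = 3) :
    -- Δ induces a regular subgraph with valency a₃ + c₃
    (∀ u ∈ Delta G x y, {w | w ∈ Delta G x y ∧ G.Adj u w}.ncard = p 3 1 3 + p 3 1 2) ∧
    -- Δ is weak-geodetically closed
    (∀ u v w : V, u ∈ Delta G x y → w ∈ Delta G x y →
      G.dist u v + G.dist v w ≤ G.dist u w + 1 → v ∈ Delta G x y) ∧
    -- the induced subgraph on Δ has diameter 3
    (∀ u v : Delta G x y, (G.induce (Delta G x y)).dist u v ≤ 3) ∧
    (∃ u v : Delta G x y, (G.induce (Delta G x y)).dist u v = 3) ∧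
    x ∈ Delta G x y ∧ y ∈ Delta G x y := by
  have h : TD.Ctx G D p b α β := ⟨hconn, hD, hdiam_le, hdiam, hdr, hcp, ha1, ha2⟩
  letI : DRG V := h.drg
  exact DRG.final G (fun _ _ => rfl) x y hxy
end

section
/- Let Γ be a distance-regular graph with classical parameters (D, b, α, β), D ≥ 3, and intersection numbers a₁ = 0 and a₂ ≠ 0. Then for any vertex x, any 1 ≤ i ≤ D, and any adjacent vertices z, z′ ∈ Γ_i(x), one has B(x,z) = B(x,z′). -/
/-!
Common definitions: distance-regular graphs (via an intersection-number function `p`),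
classical parameters, and the sets `B(x,y)`, `A(x,y)`, `C(x,y)`.
The distance `∂` is `SimpleGraph.dist`.
-/

variable {V : Type*}

open Polynomial in
/-- orthogonal polynomials for a discrete weight -/
theorem bq_exists_orth (D : ℕ) (w τ : ℕ → ℝ) (hw : ∀ h ≤ D, 0 < w h)
    (hτ : ∀ i ≤ D, ∀ j ≤ D, τ i = τ j → i = j) :
    ∃ P : ℕ → ℝ[X], (∀ j, (P j).Monic ∧ (P j).natDegree = j) ∧
      (∀ j ≤ D, ∀ i < j,
        ∑ h ∈ Finset.range (D+1), w h * (P j).eval (τ h) * (P i).eval (τ h) = 0) ∧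
      ∀ j ≤ D, 0 < ∑ h ∈ Finset.range (D+1), w h * (P j).eval (τ h) * (P j).eval (τ h) := by
  classical
  -- positivity
  have hpos : ∀ Q : ℝ[X], Q ≠ 0 → Q.natDegree ≤ D →
      0 < ∑ h ∈ Finset.range (D+1), w h * Q.eval (τ h) * Q.eval (τ h) := by
    intro Q hQ hd
    have hnn : ∀ h ∈ Finset.range (D+1), 0 ≤ w h * Q.eval (τ h) * Q.eval (τ h) := by
      intro h hh
      have := hw h (by simpa [Nat.lt_succ_iff] using hh)
      rw [mul_assoc]
      exact mul_nonneg this.le (mul_self_nonneg _)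
    rcases (Finset.sum_nonneg hnn).lt_or_eq with h | h
    · exact h
    · exfalso
      have h0 := (Finset.sum_eq_zero_iff_of_nonneg hnn).1 h.symm
      apply hQ
      apply Polynomial.eq_zero_of_natDegree_lt_card_of_eval_eq_zero' Q
        ((Finset.range (D+1)).image τ)
      · intro r hr
        obtain ⟨i, hi, rfl⟩ := Finset.mem_image.1 hr
        have h1 := h0 i hi
        have h2 := hw i (by simpa [Nat.lt_succ_iff] using hi)
        rcases mul_eq_zero.1 h1 with h3 | h3
        · rcases mul_eq_zero.1 h3 with h4 | h4
          · exact absurd h4 h2.ne'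
          · exact h4
        · exact h3
      · rw [Finset.card_image_of_injOn]
        · simp; omega
        · intro i hi j hj hij
          simp at hi hj
          exact hτ i (by omega) j (by omega) hij
  have key : ∀ m : ℕ, ∃ P : ℕ → ℝ[X], (∀ j, (P j).Monic ∧ (P j).natDegree = j) ∧
      ∀ j < m, j ≤ D → ∀ i < j,
        ∑ h ∈ Finset.range (D+1), w h * (P j).eval (τ h) * (P i).eval (τ h) = 0 := by
    intro m
    induction m with
    | zero => exact ⟨fun j => X ^ j, fun j => ⟨monic_X_pow j, natDegree_X_pow j⟩, by simp⟩
    | succ m ih =>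
      obtain ⟨P, hP, ho⟩ := ih
      let ip : ℝ[X] → ℝ[X] → ℝ := fun A B =>
        ∑ h ∈ Finset.range (D+1), w h * A.eval (τ h) * B.eval (τ h)
      let S : ℝ[X] := ∑ i ∈ Finset.range m, C (ip (X^m) (P i) / ip (P i) (P i)) * P i
      have hS : S.degree < m := by
        refine lt_of_le_of_lt (degree_sum_le _ _) ?_
        rw [Finset.sup_lt_iff (by exact WithBot.bot_lt_coe m)]
        intro i hi
        rw [← smul_eq_C_mul]
        refine lt_of_le_of_lt (degree_smul_le _ _) ?_
        rw [degree_eq_natDegree (hP i).1.ne_zero, (hP i).2]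
        exact_mod_cast Finset.mem_range.1 hi
      have hmon : (X ^ m - S).Monic := by
        rw [sub_eq_add_neg]
        exact monic_X_pow_add (by rwa [degree_neg])
      have hdeg : (X ^ m - S).natDegree = m := by
        apply natDegree_eq_of_degree_eq_some
        rw [degree_sub_eq_left_of_degree_lt (by rwa [degree_X_pow]), degree_X_pow]
      refine ⟨Function.update P m (X ^ m - S), ?_, ?_⟩
      · intro j
        by_cases hj : j = m
        · subst hj; simp [hmon, hdeg]
        · simp [hj, hP j]
      · intro j hj hjD i hij
        have him : i ≠ m := by omega
        by_cases hjm : j = m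
        · subst hjm
          rw [Function.update_self, Function.update_of_ne him]
          have e1 : ∑ h ∈ Finset.range (D+1), w h * (X ^ j - S).eval (τ h) * (P i).eval (τ h)
              = ip (X^j) (P i) - ∑ k ∈ Finset.range j,
                (ip (X^j) (P k) / ip (P k) (P k)) * ip (P k) (P i) := by
            have : ∀ k, (ip (X^j) (P k) / ip (P k) (P k)) * ip (P k) (P i) =
              ∑ h ∈ Finset.range (D+1), (ip (X^j) (P k) / ip (P k) (P k)) *
                (w h * (P k).eval (τ h) * (P i).eval (τ h)) := by
              intro k; rw [Finset.mul_sum]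
            rw [Finset.sum_congr rfl (fun k _ => this k), Finset.sum_comm,
              ← Finset.sum_sub_distrib]
            refine Finset.sum_congr rfl fun h _ => ?_
            rw [eval_sub, eval_finsetSum, mul_sub, sub_mul, Finset.mul_sum, Finset.sum_mul]
            congr 1
            refine Finset.sum_congr rfl fun k _ => ?_
            rw [eval_mul, eval_C]; ring
          rw [e1, Finset.sum_eq_single i]
          · have : ip (P i) (P i) ≠ 0 :=
              (hpos (P i) (hP i).1.ne_zero (by rw [(hP i).2]; omega)).ne'
            field_simp; ring
          · intro k hk hki
            have hk := Finset.mem_range.1 hk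
            rcases lt_or_gt_of_ne hki with h | h
            · have h1 := ho i hij (by omega) k h
              have : ip (P k) (P i) = 0 := by
                rw [← h1]; exact Finset.sum_congr rfl fun h _ => by ring
              rw [this, mul_zero]
            · have : ip (P k) (P i) = 0 := ho k hk (by omega) i h
              rw [this, mul_zero]
          · intro h; exact absurd (Finset.mem_range.2 hij) h
        · rw [Function.update_of_ne hjm, Function.update_of_ne him]
          exact ho j (by omega) hjD i hij
  obtain ⟨P, h1, h2⟩ := key (D+1)
  exact ⟨P, h1, fun j hj i hi => h2 j (by omega) hj i hi,
    fun j hj => hpos (P j) (h1 j).1.ne_zero (by rw [(h1 j).2]; exact hj)⟩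

open Polynomial in
theorem bq_poly_span (P : ℕ → ℝ[X]) (hP : ∀ j, (P j).Monic ∧ (P j).natDegree = j) :
    ∀ (m : ℕ) (Q : ℝ[X]), Q.degree < m →
      ∃ c : ℕ → ℝ, Q = ∑ i ∈ Finset.range m, C (c i) * P i := by
  intro m
  induction m with
  | zero =>
    intro Q hQ
    refine ⟨0, ?_⟩
    simpa [Nat.WithBot.lt_zero_iff, degree_eq_bot] using hQ
  | succ m ih =>
    intro Q hQ
    have : (Q - C (Q.coeff m) * P m).degree < m := by
      rw [degree_lt_iff_coeff_zero] at hQ ⊢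
      intro k hk
      rcases hk.eq_or_lt with h | h
      · subst h
        have := (hP m).1.coeff_natDegree
        rw [(hP m).2] at this
        simp [this]
      · rw [coeff_sub, coeff_C_mul, hQ k h,
          coeff_eq_zero_of_natDegree_lt (p := P m) (by rw [(hP m).2]; exact h)]
        simp
    obtain ⟨c, hc⟩ := ih _ this
    refine ⟨Function.update c m (Q.coeff m), ?_⟩
    rw [Finset.sum_range_succ, Function.update_self]
    rw [Finset.sum_congr rfl (g := fun i => C (c i) * P i), ← hc]
    · ring
    · intro i hi
      rw [Function.update_of_ne (Finset.mem_range.1 hi).ne]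

open Polynomial in
theorem bq_complete (D : ℕ) (τ : ℕ → ℝ) (hτ : ∀ i ≤ D, ∀ j ≤ D, τ i = τ j → i = j)
    (P : ℕ → ℝ[X]) (hP : ∀ j, (P j).Monic ∧ (P j).natDegree = j) (f : ℕ → ℝ) :
    ∃ c : ℕ → ℝ, ∀ h ≤ D, f h = ∑ i ∈ Finset.range (D+1), c i * (P i).eval (τ h) := by
  have hinj : Set.InjOn τ (Finset.range (D+1) : Set ℕ) := by
    intro i hi j hj hij
    simp at hi hj
    exact hτ i (by omega) j (by omega) hij
  obtain ⟨c, hc⟩ := bq_poly_span P hP (D+1) (Lagrange.interpolate (Finset.range (D+1)) τ f)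
    (by simpa using Lagrange.degree_interpolate_lt f hinj)
  refine ⟨c, fun h hh => ?_⟩
  rw [← Lagrange.eval_interpolate_at_node f hinj (Finset.mem_range.2 (by omega : h < D+1)), hc,
    eval_finsetSum]
  simp

theorem bq_geod (G : SimpleGraph V) (hconn : G.Connected) (x y : V) (j : ℕ)
    (hj : j ≤ G.dist x y) : ∃ v, G.dist x v = j ∧ G.dist v y = G.dist x y - j := by
  obtain ⟨w, hw⟩ := hconn.exists_walk_length_eq_dist x y
  refine ⟨w.getVert j, ?_⟩
  have h1 : G.dist x (w.getVert j) ≤ j := by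
    refine (SimpleGraph.dist_le (w.take j)).trans ?_
    simp
  have h2 : G.dist (w.getVert j) y ≤ G.dist x y - j := by
    refine (SimpleGraph.dist_le (w.drop j)).trans ?_
    simp [hw]
  have h3 := hconn.dist_triangle (u := x) (v := w.getVert j) (w := y)
  omega

/-- the matrix with entries `f (dist y z)` -/
noncomputable def bqM (G : SimpleGraph V) (f : ℕ → ℝ) : Matrix V V ℝ :=
  Matrix.of fun y z => f (G.dist y z)

/-- convolution of functions of the distance -/
noncomputable def bqConv (D : ℕ) (p : ℕ → ℕ → ℕ → ℕ) (f g : ℕ → ℝ) (h : ℕ) : ℝ :=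
  ∑ i ∈ Finset.range (D+1), ∑ j ∈ Finset.range (D+1), f i * g j * (p h i j : ℝ)

theorem bqM_apply (G : SimpleGraph V) (f : ℕ → ℝ) (y z : V) : bqM G f y z = f (G.dist y z) := rfl

theorem bq_count [Fintype V] (G : SimpleGraph V) (D : ℕ)
    (p : ℕ → ℕ → ℕ → ℕ) (hdr : G.IsDistRegularWith D p) (h i j : ℕ) (hh : h ≤ D) (hi : i ≤ D)
    (hj : j ≤ D) (y z : V) (hyz : G.dist y z = h) :
    (p h i j : ℝ) = ∑ v : V, if G.dist y v = i ∧ G.dist v z = j then (1:ℝ) else 0 := by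
  classical
  rw [← hdr h i j hh hi hj y z hyz, Set.ncard_eq_toFinset_card']
  rw [Finset.sum_boole]
  congr 2
  ext v
  simp [SimpleGraph.dist_comm (u := v)]

theorem bqM_mul [Fintype V] (G : SimpleGraph V) (D : ℕ)
    (hdiam_le : ∀ x y : V, G.dist x y ≤ D)
    (p : ℕ → ℕ → ℕ → ℕ) (hdr : G.IsDistRegularWith D p) (f g : ℕ → ℝ) :
    bqM G f * bqM G g = bqM G (bqConv D p f g) := by
  classical
  ext y z
  rw [Matrix.mul_apply]
  simp only [bqM_apply, bqConv]
  have : ∀ i ∈ Finset.range (D+1), ∀ j ∈ Finset.range (D+1),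
      f i * g j * (p (G.dist y z) i j : ℝ) =
      ∑ v : V, if G.dist y v = i ∧ G.dist v z = j then f i * g j else 0 := by
    intro i hi j hj
    simp only [Finset.mem_range] at hi hj
    rw [bq_count G D p hdr _ i j (hdiam_le y z) (by omega) (by omega) y z rfl, Finset.mul_sum]
    simp
  rw [Finset.sum_congr rfl fun i hi => Finset.sum_congr rfl fun j hj => this i hi j hj]
  rw [Finset.sum_congr rfl fun i hi => Finset.sum_comm, Finset.sum_comm]
  refine Finset.sum_congr rfl fun v _ => ?_
  rw [Finset.sum_eq_single (G.dist y v), Finset.sum_eq_single (G.dist v z)]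
  · simp
  · intro j _ hj; simp [hj.symm]
  · intro h; exact absurd (Finset.mem_range.2 (Nat.lt_succ_of_le (hdiam_le v z))) h
  · intro i _ hi; simp [hi.symm]
  · intro h; exact absurd (Finset.mem_range.2 (Nat.lt_succ_of_le (hdiam_le y v))) h

theorem bqM_transpose (G : SimpleGraph V) (f : ℕ → ℝ) : (bqM G f).transpose = bqM G f := by
  ext y z
  simp [bqM_apply, SimpleGraph.dist_comm]

theorem bqM_comm [Fintype V] (G : SimpleGraph V) (D : ℕ)
    (hdiam_le : ∀ x y : V, G.dist x y ≤ D)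
    (p : ℕ → ℕ → ℕ → ℕ) (hdr : G.IsDistRegularWith D p) (f g : ℕ → ℝ) :
    bqM G f * bqM G g = bqM G g * bqM G f := by
  have h := bqM_transpose G (bqConv D p f g)
  rw [← bqM_mul G D hdiam_le p hdr, Matrix.transpose_mul, bqM_transpose, bqM_transpose] at h
  exact h.symm

/-- the tridiagonal operator -/
noncomputable def bqL (p : ℕ → ℕ → ℕ → ℕ) (f : ℕ → ℝ) (h : ℕ) : ℝ :=
  (p 0 1 1 : ℝ) * f h + (p h 1 (h-1) : ℝ) * (f (h-1) - f h) + (p h 1 (h+1) : ℝ) * (f (h+1) - f h)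

/-- indicator of distance `i` -/
noncomputable def bqδ (i : ℕ) (h : ℕ) : ℝ := if h = i then 1 else 0

theorem bqM_one [DecidableEq V] (G : SimpleGraph V) (hconn : G.Connected) :
    bqM G (bqδ 0) = 1 := by
  ext y z
  rw [bqM_apply, bqδ, Matrix.one_apply]
  simp [hconn.dist_eq_zero_iff]

theorem bqM_A_mul [Fintype V] (G : SimpleGraph V) (hconn : G.Connected) (D : ℕ) (hD : 1 ≤ D)
    (hdiam_le : ∀ x y : V, G.dist x y ≤ D)
    (p : ℕ → ℕ → ℕ → ℕ) (hdr : G.IsDistRegularWith D p) (hbD : p D 1 (D+1) = 0) (f : ℕ → ℝ) :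
    bqM G (bqδ 1) * bqM G f = bqM G (bqL p f) := by
  classical
  ext y z
  rw [Matrix.mul_apply]
  simp only [bqM_apply, bqL, bqδ]
  set h := G.dist y z with hh
  have e0 : (p 0 1 1 : ℝ) = ∑ v : V, if G.dist y v = 1 then (1:ℝ) else 0 := by
    rw [bq_count G D p hdr 0 1 1 (by omega) hD hD y y (by simp)]
    refine Finset.sum_congr rfl fun v _ => ?_
    simp [SimpleGraph.dist_comm (u := v)]
  have e1 := bq_count G D p hdr h 1 (h-1) (hdiam_le y z) hD
    (by have := hdiam_le y z; omega) y z hh.symm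
  have e2 : (p h 1 (h+1) : ℝ) =
      ∑ v : V, if G.dist y v = 1 ∧ G.dist v z = h+1 then (1:ℝ) else 0 := by
    rcases (hdiam_le y z).eq_or_lt with h1 | h1
    · rw [← hh] at h1
      rw [h1, hbD, Finset.sum_eq_zero]
      · simp
      · intro v _
        have := hdiam_le v z
        rw [if_neg]; omega
    · exact bq_count G D p hdr h 1 (h+1) (hdiam_le y z) hD (by omega) y z hh.symm
  rw [e0, e1, e2, Finset.sum_mul, Finset.sum_mul, Finset.sum_mul, ← Finset.sum_add_distrib,
    ← Finset.sum_add_distrib]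
  refine Finset.sum_congr rfl fun v _ => ?_
  by_cases hv : G.dist y v = 1
  · have t1 := hconn.dist_triangle (u := y) (v := v) (w := z)
    have t2 := hconn.dist_triangle (u := v) (v := y) (w := z)
    rw [SimpleGraph.dist_comm (u := v) (v := y)] at t2
    rw [← hh] at t1 t2
    have : G.dist v z = h ∨ G.dist v z = h + 1 ∨ (G.dist v z = h - 1 ∧ 1 ≤ h) := by omega
    rcases this with h1 | h1 | ⟨h1, h2⟩
    · simp only [hv, h1, true_and]
      by_cases h0 : h = 0
      · simp [h0]
      · rw [if_neg (by omega : ¬ h = h - 1), if_neg (by omega : ¬ h = h+1)]; simp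
    · simp only [hv, h1, true_and]
      rw [if_neg (by omega : ¬ h + 1 = h - 1)]; simp
    · simp only [hv, h1, true_and]
      rw [if_neg (by omega : ¬ h - 1 = h + 1)]; simp
  · simp [hv]

theorem bq_pos [Fintype V] (G : SimpleGraph V) (hconn : G.Connected) (D : ℕ) 
    (hdiam : ∃ x y : V, G.dist x y = D)
    (p : ℕ → ℕ → ℕ → ℕ) (hdr : G.IsDistRegularWith D p) :
    (∀ h ≤ D, 0 < p 0 h h) ∧ (∀ h < D, 0 < p h 1 (h+1)) ∧ (∀ h ≤ D, 1 ≤ h → 0 < p h 1 (h-1)) := by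
  obtain ⟨x, y, hxy⟩ := hdiam
  refine ⟨fun h hh => ?_, fun h hh => ?_, fun h hh h1 => ?_⟩
  · obtain ⟨v, hv, -⟩ := bq_geod G hconn x y h (by omega)
    rw [← hdr 0 h h (by omega) hh hh x x (by simp), Set.ncard_pos (Set.toFinite _)]
    exact ⟨v, hv, hv⟩
  · obtain ⟨v, hv, hv2⟩ := bq_geod G hconn y x (h+1) (by rw [SimpleGraph.dist_comm]; omega)
    obtain ⟨u, hu, hu2⟩ := bq_geod G hconn v y 1 (by rw [SimpleGraph.dist_comm]; omega)
    rw [SimpleGraph.dist_comm] at hv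
    rw [← hdr h 1 (h+1) (by omega) (by omega) (by omega) u y (by omega),
      Set.ncard_pos (Set.toFinite _)]
    exact ⟨v, by rw [SimpleGraph.dist_comm]; exact hu, by rw [SimpleGraph.dist_comm]; exact hv⟩
  · obtain ⟨v, hv, hv2⟩ := bq_geod G hconn y x h (by rw [SimpleGraph.dist_comm]; omega)
    obtain ⟨u, hu, hu2⟩ := bq_geod G hconn v y 1 (by rw [SimpleGraph.dist_comm]; omega)
    rw [SimpleGraph.dist_comm] at hv
    rw [← hdr h 1 (h-1) (by omega) (by omega) (by omega) v y (by omega),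
      Set.ncard_pos (Set.toFinite _)]
    exact ⟨u, hu, by rw [SimpleGraph.dist_comm]; omega⟩

theorem bqConv_zero [Fintype V] (G : SimpleGraph V) (hconn : G.Connected) (D : ℕ) 
    (p : ℕ → ℕ → ℕ → ℕ) (hdr : G.IsDistRegularWith D p) (f g : ℕ → ℝ) :
    bqConv D p f g 0 = ∑ h ∈ Finset.range (D+1), (p 0 h h : ℝ) * f h * g h := by
  classical
  obtain ⟨x⟩ := hconn.nonempty
  refine Finset.sum_congr rfl fun i hi => ?_
  rw [Finset.sum_eq_single i]
  · ring
  · intro j hj hij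
    simp only [Finset.mem_range] at hi hj
    rw [bq_count G D p hdr 0 i j (by omega) (by omega) (by omega) x x (by simp),
      Finset.sum_eq_zero, mul_zero]
    intro v _
    rw [if_neg]
    rw [SimpleGraph.dist_comm (u := v)]
    omega
  · intro h; exact absurd hi h

theorem bqM_congr (G : SimpleGraph V) (D : ℕ) (hdiam_le : ∀ x y : V, G.dist x y ≤ D)
    (f g : ℕ → ℝ) (h : ∀ i ≤ D, f i = g i) : bqM G f = bqM G g := by
  ext y z; exact h _ (hdiam_le y z)

theorem bqM_inj (G : SimpleGraph V) (hconn : G.Connected) (D : ℕ)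
    (hdiam : ∃ x y : V, G.dist x y = D)
    (f g : ℕ → ℝ) (h : bqM G f = bqM G g) : ∀ i ≤ D, f i = g i := by
  obtain ⟨x, y, hxy⟩ := hdiam
  intro i hi
  obtain ⟨v, hv, -⟩ := bq_geod G hconn x y i (by omega)
  have := congrFun (congrFun h x) v
  rwa [bqM_apply, bqM_apply, hv] at this

open Polynomial in
theorem bq_eigen [Fintype V] (G : SimpleGraph V) (hconn : G.Connected) (D : ℕ) (hD : 1 ≤ D)
    (hdiam_le : ∀ x y : V, G.dist x y ≤ D) (hdiam : ∃ x y : V, G.dist x y = D)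
    (p : ℕ → ℕ → ℕ → ℕ) (hdr : G.IsDistRegularWith D p) (hbD : p D 1 (D+1) = 0)
    (τ : ℕ → ℝ)
    (hL : ∀ Q : ℝ[X], ∃ Q' : ℝ[X], Q'.natDegree ≤ Q.natDegree ∧
      ∀ h ≤ D, bqL p (fun h => Q.eval (τ h)) h = Q'.eval (τ h))
    (P : ℕ → ℝ[X]) (hP : ∀ j, (P j).Monic ∧ (P j).natDegree = j)
    (ho : ∀ j ≤ D, ∀ i < j,
      ∑ h ∈ Finset.range (D+1), (p 0 h h : ℝ) * (P j).eval (τ h) * (P i).eval (τ h) = 0)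
    (hpos : ∀ j ≤ D, 
      0 < ∑ h ∈ Finset.range (D+1), (p 0 h h : ℝ) * (P j).eval (τ h) * (P j).eval (τ h))
    (j : ℕ) (hj : j ≤ D) (f : ℕ → ℝ) :
    ∃ r : ℝ, bqM G f * bqM G (fun h => (P j).eval (τ h)) =
      r • bqM G (fun h => (P j).eval (τ h)) := by
  classical
  obtain ⟨hk, hb, -⟩ := bq_pos G hconn D hdiam p hdr
  -- orthogonality to lower degree
  have horth : ∀ Q : ℝ[X], Q.degree < j →
      ∑ h ∈ Finset.range (D+1), (p 0 h h : ℝ) * (P j).eval (τ h) * Q.eval (τ h) = 0 := by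
    intro Q hQ
    obtain ⟨c, rfl⟩ := bq_poly_span P hP j Q hQ
    simp only [eval_finsetSum, Finset.mul_sum, eval_mul, eval_C]
    rw [Finset.sum_comm]
    refine Finset.sum_eq_zero fun i hi => ?_
    have := ho j hj i (Finset.mem_range.1 hi)
    rw [← mul_zero (c i), ← this, Finset.mul_sum]
    exact Finset.sum_congr rfl fun h _ => by ring
  obtain ⟨Q, hQd, hQ⟩ := hL (P j)
  rw [(hP j).2] at hQd
  obtain ⟨c, hc⟩ := bq_poly_span P hP (j+1) Q (by
    refine lt_of_le_of_lt degree_le_natDegree ?_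
    exact_mod_cast Nat.lt_succ_of_le hQd)
  obtain ⟨x⟩ := hconn.nonempty
  -- self-adjointness
  have hsa : ∀ f g : ℕ → ℝ, ∑ h ∈ Finset.range (D+1), (p 0 h h : ℝ) * bqL p f h * g h =
      ∑ h ∈ Finset.range (D+1), (p 0 h h : ℝ) * f h * bqL p g h := by
    intro f g
    rw [← bqConv_zero G hconn D p hdr, ← bqConv_zero G hconn D p hdr]
    have : bqM G (bqL p f) * bqM G g = bqM G f * bqM G (bqL p g) := by
      rw [← bqM_A_mul G hconn D hD hdiam_le p hdr hbD, ← bqM_A_mul G hconn D hD hdiam_le p hdr hbD,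
        ← Matrix.mul_assoc, bqM_comm G D hdiam_le p hdr f]
    rw [bqM_mul G D hdiam_le p hdr, bqM_mul G D hdiam_le p hdr] at this
    simpa [bqM_apply] using congrFun (congrFun this x) x
  have hc0 : ∀ i < j, c i = 0 := by
    intro i hi
    obtain ⟨Q', hQd', hQ'⟩ := hL (P i)
    rw [(hP i).2] at hQd'
    have h1 := hsa (fun h => (P j).eval (τ h)) (fun h => (P i).eval (τ h))
    have h2 : ∑ h ∈ Finset.range (D+1), (p 0 h h : ℝ) * (P j).eval (τ h) *
        bqL p (fun h => (P i).eval (τ h)) h = 0 := by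
      rw [← horth Q' (by
        refine lt_of_le_of_lt degree_le_natDegree ?_
        exact_mod_cast lt_of_le_of_lt hQd' hi)]
      refine Finset.sum_congr rfl fun h hh => ?_
      rw [hQ' h (by simp at hh; omega)]
    have h3 : ∑ h ∈ Finset.range (D+1), (p 0 h h : ℝ) *
        bqL p (fun h => (P j).eval (τ h)) h * (P i).eval (τ h) =
        ∑ k ∈ Finset.range (j+1), c k * 
        ∑ h ∈ Finset.range (D+1), (p 0 h h : ℝ) * (P k).eval (τ h) * (P i).eval (τ h) := by
      simp only [Finset.mul_sum]
      rw [Finset.sum_comm]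
      refine Finset.sum_congr rfl fun h hh => ?_
      rw [hQ h (by simp at hh; omega), hc, eval_finsetSum, Finset.mul_sum, Finset.sum_mul]
      refine Finset.sum_congr rfl fun k _ => ?_
      rw [eval_mul, eval_C]; ring
    have h3 := (h1.trans h2).symm.trans h3
    rw [Finset.sum_eq_single i] at h3
    · exact (mul_eq_zero.1 h3.symm).resolve_right (hpos i (by omega)).ne'
    · intro k hk' hki
      have hk' := Finset.mem_range.1 hk'
      rcases lt_or_gt_of_ne hki with h | h
      · have h5 := ho i (by omega) k h
        rw [← mul_zero (c k), ← h5]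
        congr 1
        exact Finset.sum_congr rfl fun h _ => by ring
      · rw [ho k (by omega) i h, mul_zero]
    · intro h; exact absurd (Finset.mem_range.2 (by omega)) h
  have hθ : ∀ h ≤ D, bqL p (fun h => (P j).eval (τ h)) h = c j * (P j).eval (τ h) := by
    intro h hh
    rw [hQ h hh, hc, Finset.sum_range_succ, Finset.sum_eq_zero]
    · simp
    · intro i hi
      rw [hc0 i (Finset.mem_range.1 hi)]; simp
  -- eigenfunctions vanishing at zero vanish
  have hvan : ∀ g : ℕ → ℝ, (∀ h ≤ D, bqL p g h = c j * g h) → g 0 = 0 → ∀ h ≤ D, g h = 0 := by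
    intro g hg h0 h
    induction h using Nat.strong_induction_on with
    | _ h ih =>
      intro hh
      rcases Nat.eq_zero_or_pos h with h1 | h1
      · rw [h1, h0]
      · obtain ⟨m, rfl⟩ : ∃ m, h = m + 1 := ⟨h-1, by omega⟩
        have h2 := hg m (by omega)
        rw [bqL, ih m (by omega) (by omega), ih (m-1) (by omega) (by omega)] at h2
        have h3 := hb m (by omega)
        have h4 : (p m 1 (m+1) : ℝ) ≠ 0 := by exact_mod_cast h3.ne'
        simpa [h4] using h2
  set e : ℕ → ℝ := fun h => (P j).eval (τ h) with he
  have he0 : e 0 ≠ 0 := by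
    intro h0
    have := hvan e hθ h0
    refine (hpos j hj).ne' (Finset.sum_eq_zero fun h hh => ?_)
    have h1 := this h (by simp at hh; omega)
    simp only [he] at h1
    rw [h1]; simp
  set g := bqConv D p f e with hg
  refine ⟨g 0 / e 0, ?_⟩
  rw [bqM_mul G D hdiam_le p hdr]
  have hMθ : bqM G (bqL p e) = c j • bqM G e := by
    ext y z
    simp only [bqM_apply, Matrix.smul_apply, smul_eq_mul]
    exact hθ _ (hdiam_le y z)
  have hgL : bqM G (bqL p g) = c j • bqM G g := by
    rw [← bqM_A_mul G hconn D hD hdiam_le p hdr hbD, hg, ← bqM_mul G D hdiam_le p hdr,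
      ← Matrix.mul_assoc, bqM_comm G D hdiam_le p hdr _ f, Matrix.mul_assoc,
      bqM_A_mul G hconn D hD hdiam_le p hdr hbD, hMθ, Matrix.mul_smul]
  have hgL' : ∀ h ≤ D, bqL p g h = c j * g h :=
    bqM_inj G hconn D hdiam _ (fun h => c j * g h) hgL
  have := hvan (fun h => g h - g 0 / e 0 * e h) (by
    intro h hh
    have h1 := hgL' h hh
    have h2 := hθ h hh
    simp only [bqL] at h1 h2 ⊢
    linear_combination h1 - g 0 / e 0 * h2) (by field_simp; ring)
  ext y z
  simp only [bqM_apply, Matrix.smul_apply, smul_eq_mul]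
  have := this _ (hdiam_le y z)
  linarith

theorem bq_sum_dist [Fintype V] (G : SimpleGraph V) (hconn : G.Connected) (D : ℕ)
    (hdiam_le : ∀ x y : V, G.dist x y ≤ D)
    (p : ℕ → ℕ → ℕ → ℕ) (hdr : G.IsDistRegularWith D p) (F H : ℕ → ℝ) (u : V) :
    ∑ v : V, F (G.dist u v) * H (G.dist u v) =
      ∑ h ∈ Finset.range (D+1), (p 0 h h : ℝ) * F h * H h := by
  rw [← bqConv_zero G hconn D p hdr]
  have := congrFun (congrFun (bqM_mul G D hdiam_le p hdr F H) u) u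
  rw [Matrix.mul_apply, bqM_apply, SimpleGraph.dist_self] at this
  rw [← this]
  refine Finset.sum_congr rfl fun v _ => ?_
  rw [bqM_apply, bqM_apply, SimpleGraph.dist_comm (u := v)]

theorem bq_triple_zero [Fintype V] [DecidableEq V] (G : SimpleGraph V) (hconn : G.Connected) (D : ℕ)
    (hdiam_le : ∀ x y : V, G.dist x y ≤ D)
    (p : ℕ → ℕ → ℕ → ℕ) (hdr : G.IsDistRegularWith D p) (f g e : ℕ → ℝ) (rf rg re : ℝ)
    (hf : bqM G f * bqM G f = rf • bqM G f) (hg : bqM G g * bqM G g = rg • bqM G g)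
    (he : bqM G e * bqM G e = re • bqM G e)
    (h0 : ∑ h ∈ Finset.range (D+1), (p 0 h h : ℝ) * f h * (g h * e h) = 0) (x : V) :
    bqM G f * Matrix.diagonal (fun v => e (G.dist x v)) * bqM G g = 0 := by
  let A : V → Matrix V V ℝ := fun x => Matrix.diagonal (fun v => e (G.dist x v))
  let T : V → Matrix V V ℝ := fun x => bqM G f * A x * bqM G g
  have htr : ∀ x, (T x * (T x).transpose).trace = rf * rg *
      ∑ u : V, ∑ v : V, f (G.dist u v) * g (G.dist u v) * (e (G.dist u x) * e (G.dist x v)) := by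
    intro x
    have hA : (A x).transpose = A x := Matrix.diagonal_transpose _
    have h1 : T x * (T x).transpose = rg • (bqM G f * (A x * bqM G g * A x * bqM G f)) := by
      simp only [T, Matrix.transpose_mul, bqM_transpose, hA]
      calc bqM G f * A x * bqM G g * (bqM G g * (A x * bqM G f))
          = bqM G f * A x * (bqM G g * bqM G g) * (A x * bqM G f) := by
            simp only [Matrix.mul_assoc]
        _ = _ := by
            rw [hg]; simp only [Matrix.mul_assoc, Matrix.mul_smul, Matrix.smul_mul]
    rw [h1, Matrix.trace_smul, Matrix.trace_mul_comm, Matrix.mul_assoc, hf, Matrix.mul_smul,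
      Matrix.trace_smul, smul_eq_mul, smul_eq_mul, Matrix.trace]
    have : ∀ u, (A x * bqM G g * A x * bqM G f).diag u =
        ∑ v : V, f (G.dist u v) * g (G.dist u v) * (e (G.dist u x) * e (G.dist x v)) := by
      intro u
      rw [Matrix.diag_apply, Matrix.mul_apply]
      refine Finset.sum_congr rfl fun v _ => ?_
      simp only [A, Matrix.mul_diagonal, Matrix.diagonal_mul, bqM_apply]
      rw [SimpleGraph.dist_comm (u := v) (v := u), SimpleGraph.dist_comm (u := u) (v := x)]
      ring
    rw [Finset.sum_congr rfl fun u _ => this u]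
    ring
  have hsum : ∑ x, (T x * (T x).transpose).trace = 0 := by
    rw [Finset.sum_congr rfl fun x _ => htr x, ← Finset.mul_sum]
    rw [Finset.sum_comm, Finset.sum_congr rfl fun u _ => Finset.sum_comm]
    have : ∀ u v : V, ∑ x, f (G.dist u v) * g (G.dist u v) * (e (G.dist u x) * e (G.dist x v)) =
        re * (f (G.dist u v) * (g (G.dist u v) * e (G.dist u v))) := by
      intro u v
      have h1 := congrFun (congrFun he u) v
      rw [Matrix.mul_apply, Matrix.smul_apply, bqM_apply, smul_eq_mul] at h1
      simp only [bqM_apply] at h1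
      rw [← Finset.mul_sum, h1]; ring
    rw [Finset.sum_congr rfl fun u _ => Finset.sum_congr rfl fun v _ => this u v]
    have : ∀ u : V, ∑ v, re * (f (G.dist u v) * (g (G.dist u v) * e (G.dist u v))) = 0 := by
      intro u
      rw [← Finset.mul_sum, bq_sum_dist G hconn D hdiam_le p hdr f (fun h => g h * e h) u, h0,
        mul_zero]
    rw [Finset.sum_congr rfl fun u _ => this u]
    simp
  have hnn : ∀ x ∈ Finset.univ, 0 ≤ (T x * (T x).transpose).trace := by
    intro x _
    rw [Matrix.trace]
    refine Finset.sum_nonneg fun u _ => ?_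
    rw [Matrix.diag_apply, Matrix.mul_apply]
    exact Finset.sum_nonneg fun v _ => mul_self_nonneg _
  have := (Finset.sum_eq_zero_iff_of_nonneg hnn).1 hsum x (Finset.mem_univ _)
  rw [← Matrix.conjTranspose_eq_transpose_of_trivial] at this
  exact Matrix.trace_mul_conjTranspose_self_eq_zero_iff.1 this

open Polynomial in
theorem bq_balanced [Fintype V] (G : SimpleGraph V) (hconn : G.Connected) (D : ℕ) (hD : 1 ≤ D)
    (hdiam_le : ∀ x y : V, G.dist x y ≤ D) (hdiam : ∃ x y : V, G.dist x y = D)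
    (p : ℕ → ℕ → ℕ → ℕ) (hdr : G.IsDistRegularWith D p) (hbD : p D 1 (D+1) = 0)
    (τ : ℕ → ℝ) (hτ : ∀ i ≤ D, ∀ j ≤ D, τ i = τ j → i = j)
    (hL : ∀ Q : ℝ[X], ∃ Q' : ℝ[X], Q'.natDegree ≤ Q.natDegree ∧
      ∀ h ≤ D, bqL p (fun h => Q.eval (τ h)) h = Q'.eval (τ h)) :
    ∃ c : ℝ, ∀ f g : ℕ → ℝ, ∃ ζ : ℕ → ℝ, ∀ x y z : V,
      ∑ v : V, f (G.dist y v) * (τ (G.dist x v) + c) * g (G.dist v z) -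
      ∑ v : V, g (G.dist y v) * (τ (G.dist x v) + c) * f (G.dist v z) =
      ζ (G.dist y z) * (τ (G.dist x z) - τ (G.dist x y)) := by
  classical
  obtain ⟨hk, hb, -⟩ := bq_pos G hconn D hdiam p hdr
  obtain ⟨P, hP, ho, hpos⟩ := bq_exists_orth D (fun h => (p 0 h h : ℝ)) τ
    (fun h hh => by exact_mod_cast hk h hh) hτ
  have heig := bq_eigen G hconn D hD hdiam_le hdiam p hdr hbD τ hL P hP ho hpos
  have hP1 : P 1 = X + C ((P 1).coeff 0) := (hP 1).1.eq_X_add_C (hP 1).2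
  refine ⟨(P 1).coeff 0, fun f g => ?_⟩
  set c := (P 1).coeff 0 with hc
  have he1 : ∀ h, (P 1).eval (τ h) = τ h + c := by
    intro h; rw [hP1]; simp
  let N : ℕ → Matrix V V ℝ := fun j => bqM G (fun h => (P j).eval (τ h))
  let A : V → Matrix V V ℝ := fun x => Matrix.diagonal (fun v => (P 1).eval (τ (G.dist x v)))
  have horth : ∀ j ≤ D, ∀ Q : ℝ[X], Q.degree < j →
      ∑ h ∈ Finset.range (D+1), (p 0 h h : ℝ) * (P j).eval (τ h) * Q.eval (τ h) = 0 := by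
    intro j hj Q hQ
    obtain ⟨c, rfl⟩ := bq_poly_span P hP j Q hQ
    simp only [eval_finsetSum, Finset.mul_sum, eval_mul, eval_C]
    rw [Finset.sum_comm]
    refine Finset.sum_eq_zero fun i hi => ?_
    have := ho j hj i (Finset.mem_range.1 hi)
    rw [← mul_zero (c i), ← this, Finset.mul_sum]
    exact Finset.sum_congr rfl fun h _ => by ring
  have hint : ∀ j ≤ D, ∀ i, i + 1 < j → ∑ h ∈ Finset.range (D+1),
      (p 0 h h : ℝ) * (P j).eval (τ h) * ((P i).eval (τ h) * (P 1).eval (τ h)) = 0 := by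
    intro j hj i hij
    have := horth j hj (P i * P 1) (by
      refine lt_of_le_of_lt degree_le_natDegree ?_
      rw [(hP i).1.natDegree_mul (hP 1).1, (hP i).2, (hP 1).2]
      exact_mod_cast hij)
    simpa only [eval_mul] using this
  have htri : ∀ i ≤ D, ∀ j ≤ D, (i + 1 < j ∨ j + 1 < i) → ∀ x, N i * A x * N j = 0 := by
    intro i hi j hj hij x
    obtain ⟨r1, h1⟩ := heig i hi (fun h => (P i).eval (τ h))
    obtain ⟨r2, h2⟩ := heig j hj (fun h => (P j).eval (τ h))
    obtain ⟨r3, h3⟩ := heig 1 hD (fun h => (P 1).eval (τ h))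
    refine bq_triple_zero G hconn D hdiam_le p hdr _ _ (fun h => (P 1).eval (τ h)) r1 r2 r3
      h1 h2 h3 ?_ x
    rcases hij with h | h
    · rw [← hint j hj i h]
      exact Finset.sum_congr rfl fun h _ => by ring
    · exact hint i hi j h
  -- decomposition of the identity
  obtain ⟨u, hu⟩ := bq_complete D τ hτ P hP (bqδ 0)
  have hone : (1 : Matrix V V ℝ) = ∑ i ∈ Finset.range (D+1), u i • N i := by
    rw [← bqM_one G hconn]
    ext y z
    rw [bqM_apply, hu _ (hdiam_le y z), Matrix.sum_apply]
    simp [N, bqM_apply]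
  choose! r hr using fun j hj => heig j hj f
  choose! s hs using fun j hj => heig j hj g
  let zc : ℕ → ℝ := fun i => - ∑ k ∈ Finset.range i, (r k * s (k+1) - s k * r (k+1))
  let ζ : ℕ → ℝ := fun h => ∑ i ∈ Finset.range (D+1), zc i * u i * (P i).eval (τ h)
  let E : ℕ → Matrix V V ℝ := fun i => u i • N i
  have hmul : ∀ (t : ℕ → ℝ) (a : ℕ → ℝ), (∀ j ≤ D, bqM G t * N j = a j • N j) →
      bqM G t = ∑ i ∈ Finset.range (D+1), a i • E i := by
    intro t a h
    rw [← Matrix.mul_one (bqM G t), hone, Matrix.mul_sum]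
    refine Finset.sum_congr rfl fun i hi => ?_
    rw [Matrix.mul_smul, h i (by simp at hi; omega), smul_comm]
  have hf : bqM G f = ∑ i ∈ Finset.range (D+1), r i • E i := hmul f r hr
  have hg : bqM G g = ∑ i ∈ Finset.range (D+1), s i • E i := hmul g s hs
  have hζ : bqM G ζ = ∑ i ∈ Finset.range (D+1), zc i • E i := by
    ext y z
    rw [bqM_apply, Matrix.sum_apply]
    simp [ζ, E, N, bqM_apply, mul_assoc]
  have hexp : ∀ (a b : ℕ → ℝ) (x : V), (∑ i ∈ Finset.range (D+1), a i • E i) * A x *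
      (∑ i ∈ Finset.range (D+1), b i • E i) =
      ∑ i ∈ Finset.range (D+1), ∑ j ∈ Finset.range (D+1), (a i * b j) • (E i * A x * E j) := by
    intro a b x
    rw [Finset.sum_mul, Finset.sum_mul]
    refine Finset.sum_congr rfl fun i _ => ?_
    rw [Finset.mul_sum]
    refine Finset.sum_congr rfl fun j _ => ?_
    rw [Matrix.smul_mul, Matrix.smul_mul, Matrix.mul_smul, smul_smul]
  have hone' : (1 : Matrix V V ℝ) = ∑ i ∈ Finset.range (D+1), (1:ℝ) • E i := by
    simp only [one_smul]; exact hone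
  have hmain : ∀ x, bqM G f * A x * bqM G g - bqM G g * A x * bqM G f =
      bqM G ζ * A x * 1 - 1 * A x * bqM G ζ := by
    intro x
    rw [hf, hg, hζ, hone', hexp, hexp, hexp, hexp, ← Finset.sum_sub_distrib,
      ← Finset.sum_sub_distrib]
    refine Finset.sum_congr rfl fun i hi => ?_
    rw [← Finset.sum_sub_distrib, ← Finset.sum_sub_distrib]
    refine Finset.sum_congr rfl fun j hj => ?_
    rw [← sub_smul, ← sub_smul]
    have hi : i ≤ D := by simp at hi; omega
    have hj : j ≤ D := by simp at hj; omega
    by_cases hij : i + 1 < j ∨ j + 1 < i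
    · have : E i * A x * E j = 0 := by
        simp only [E, Matrix.smul_mul, Matrix.mul_smul, htri i hi j hj hij x, smul_zero]
      rw [this, smul_zero, smul_zero]
    · congr 1
      have : j = i + 1 ∨ i = j + 1 ∨ i = j := by omega
      rcases this with h | h | h
      · subst h
        simp only [zc, Finset.sum_range_succ]; ring
      · subst h
        simp only [zc, Finset.sum_range_succ]; ring
      · subst h; ring
  refine ⟨ζ, fun x y z => ?_⟩
  have := congrFun (congrFun (hmain x) y) z
  rw [Matrix.mul_one, Matrix.one_mul, Matrix.sub_apply, Matrix.sub_apply, Matrix.mul_apply,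
    Matrix.mul_apply] at this
  simp only [A, Matrix.mul_diagonal, Matrix.diagonal_mul, bqM_apply, he1] at this
  rw [this]; ring

theorem bq_a [Fintype V] (G : SimpleGraph V) (hconn : G.Connected) (D : ℕ) (hD : 1 ≤ D)
    (hdiam_le : ∀ x y : V, G.dist x y ≤ D) (hdiam : ∃ x y : V, G.dist x y = D)
    (p : ℕ → ℕ → ℕ → ℕ) (hdr : G.IsDistRegularWith D p) (hbD : p D 1 (D+1) = 0)
    (h : ℕ) (h1 : 1 ≤ h) (hh : h ≤ D) :
    (p h 1 h : ℝ) = p 0 1 1 - p h 1 (h-1) - p h 1 (h+1) := by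
  have e1 := bqM_A_mul G hconn D hD hdiam_le p hdr hbD (bqδ h)
  rw [bqM_mul G D hdiam_le p hdr] at e1
  have e2 := bqM_inj G hconn D hdiam _ _ e1 h hh
  have e3 : bqConv D p (bqδ 1) (bqδ h) h = p h 1 h := by
    rw [bqConv, Finset.sum_eq_single 1, Finset.sum_eq_single h]
    · simp [bqδ]
    · intro j _ hj; simp [bqδ, hj]
    · intro h; exact absurd (Finset.mem_range.2 (by omega)) h
    · intro j _ hj; simp [bqδ, hj]
    · intro h; exact absurd (Finset.mem_range.2 (by omega)) h
  rw [e3] at e2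
  rw [e2, bqL, bqδ, bqδ, bqδ, if_pos rfl, if_neg (by omega), if_neg (by omega)]
  ring

theorem bq_gauss (b : ℝ) (hb : b ≠ 1) (i : ℕ) : gaussBracket b i = (b ^ i - 1) / (b - 1) :=
  geom_sum_eq hb i

theorem bq_ne_one [Fintype V] (G : SimpleGraph V) (hconn : G.Connected) (D : ℕ) (hD : 3 ≤ D)
    (hdiam_le : ∀ x y : V, G.dist x y ≤ D) (hdiam : ∃ x y : V, G.dist x y = D)
    (p : ℕ → ℕ → ℕ → ℕ) (hdr : G.IsDistRegularWith D p) (hbD : p D 1 (D+1) = 0)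
    (b α β : ℝ) (hcp : HasClassicalParams D p b α β)
    (ha1 : p 1 1 1 = 0) (ha2 : p 2 1 2 ≠ 0) : b ≠ 1 := by
  rintro rfl
  obtain ⟨-, -, hc, hb⟩ := hcp
  have hg : ∀ i, gaussBracket 1 i = i := by intro i; simp [gaussBracket]
  simp only [hg] at hc hb
  have a1 := bq_a G hconn D (by omega) hdiam_le hdiam p hdr hbD 1 (by omega) (by omega)
  have a2 := bq_a G hconn D (by omega) hdiam_le hdiam p hdr hbD 2 (by omega) (by omega)
  have c1 := hc 1 (by omega)
  have c2 := hc 2 (by omega)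
  have c3 := hc 3 (by omega)
  have b0 := hb 0 (by omega)
  have b1 := hb 1 (by omega)
  have b2 := hb 2 (by omega)
  have p3 := (bq_pos G hconn D hdiam p hdr).2.2 3 (by omega) (by omega)
  have p3' : (0:ℝ) < p 3 1 (3-1) := by exact_mod_cast p3
  have q2 : (0:ℝ) < p 2 1 2 := by exact_mod_cast Nat.pos_of_ne_zero ha2
  norm_num at a1 a2 c1 c2 c3 b0 b1 b2
  norm_num only at p3'
  rw [ha1] at a1
  norm_num at a1
  have ha : (p 2 1 2 : ℝ) = -4 * α := by
    rw [a2, c2, b0, b2]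
    rw [c1, b0, b1] at a1
    push_cast at a1
    linarith
  have hα : α < 0 := by linarith
  have hα2 : -1 < 2 * α := by linarith
  have l1 : (1:ℝ) < p 2 1 1 := by linarith
  have l2 : (p 2 1 1 : ℝ) < 2 := by linarith
  have l1' : 1 < p 2 1 1 := by exact_mod_cast l1
  have l2' : p 2 1 1 < 2 := by exact_mod_cast l2
  omega

open Polynomial in
theorem bq_L_poly (D : ℕ) (p : ℕ → ℕ → ℕ → ℕ) (b α β : ℝ) (hcp : HasClassicalParams D p b α β)
    (hb1 : b ≠ 1) :
    ∀ Q : ℝ[X], ∃ Q' : ℝ[X], Q'.natDegree ≤ Q.natDegree ∧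
      ∀ h ≤ D, bqL p (fun h => Q.eval ((b⁻¹) ^ h)) h = Q'.eval ((b⁻¹) ^ h) := by
  obtain ⟨hb0, hbm, hc, hb⟩ := hcp
  have hd : b - 1 ≠ 0 := sub_ne_zero.2 hb1
  simp only [bq_gauss b hb1] at hc hb
  have hmono : ∀ m : ℕ, ∃ R : ℝ[X], R.natDegree ≤ m ∧
      ∀ h ≤ D, bqL p (fun h => ((b⁻¹) ^ h) ^ m) h = R.eval ((b⁻¹) ^ h) := by
    intro m
    have hform : ∀ h ≤ D, bqL p (fun h => ((b⁻¹) ^ h) ^ m) h = ((b⁻¹)^h)^m * ((p 0 1 1 : ℝ) +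
        ((b ^ h - 1) / (b-1) * (1 + α * ((b ^ h / b - 1) / (b - 1)))) * (b^m - 1) +
        (((b^D - b^h) / (b-1)) * (β - α * ((b^h - 1) / (b-1)))) * ((b⁻¹)^m - 1)) := by
      intro h hh
      rw [bqL, hc h hh, hb h hh]
      have e1 : (b ^ D - 1) / (b - 1) - (b ^ h - 1) / (b - 1) = (b^D - b^h) / (b-1) := by
        field_simp; ring
      rw [e1]
      have e2 : ((b⁻¹) ^ (h+1)) ^ m = ((b⁻¹)^h)^m * (b⁻¹)^m := by rw [pow_succ, mul_pow]
      rw [e2]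
      rcases Nat.eq_zero_or_pos h with h0 | h0
      · subst h0; simp
      · obtain ⟨n, rfl⟩ : ∃ n, h = n + 1 := ⟨h-1, by omega⟩
        have e3 : b ^ (n+1) / b = b ^ n := by rw [pow_succ]; field_simp
        have e4 : ((b⁻¹) ^ n) ^ m = ((b⁻¹)^(n+1))^m * b^m := by
          rw [← mul_pow, pow_succ, mul_assoc, inv_mul_cancel₀ hb0, mul_one]
        rw [e3, Nat.add_sub_cancel, e4]
        ring
    have hB : ∀ h : ℕ, ∃ B : ℝ, B ≠ 0 ∧ b ^ h = B ∧ (b⁻¹)^h = B⁻¹ :=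
      fun h => ⟨b^h, pow_ne_zero _ hb0, rfl, inv_pow _ _⟩
    match m with
    | 0 =>
      refine ⟨C (p 0 1 1 : ℝ), by simp, fun h hh => ?_⟩
      rw [hform h hh]; simp
    | 1 =>
      refine ⟨C ((p 0 1 1 : ℝ) - 1 + α / (b-1) - (b^D / b) * (β + α / (b-1))) * X +
        C (1 - α / (b-1) - α / (b * (b-1)) + (1/b) * (b^D * α / (b-1) + β + α / (b-1))),
        natDegree_linear_le, fun h hh => ?_⟩
      rw [hform h hh]
      obtain ⟨B, h1, h2, h3⟩ := hB h
      simp only [eval_add, eval_mul, eval_C, eval_X]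
      rw [h2, h3]
      generalize b ^ D = K
      field_simp
      ring
    | m + 2 =>
      refine ⟨X ^ m * (C (p 0 1 1 : ℝ) * X ^ 2 +
        C ((b^(m+2) - 1) / (b-1)) * ((1 - X) * (X + C (α/(b-1)) * (C (1/b) - X))) +
        C (((b⁻¹)^(m+2) - 1)/(b-1)) *
          ((C (b^D) * X - 1) * (C β * X - C (α / (b-1)) * (1 - X)))), ?_, fun h hh => ?_⟩
      · compute_degree
      · rw [hform h hh]
        obtain ⟨B, h1, h2, h3⟩ := hB h
        simp only [eval_add, eval_mul, eval_C, eval_X, eval_pow, eval_sub, eval_one]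
        rw [h2, h3]
        generalize b ^ D = K
        generalize (b⁻¹) ^ (m+2) = L
        generalize b ^ (m+2) = L'
        rw [pow_add (B⁻¹) m 2]
        generalize (B⁻¹) ^ m = Y
        field_simp
  choose R hR1 hR2 using hmono
  intro Q
  refine ⟨∑ m ∈ Finset.range (Q.natDegree + 1), C (Q.coeff m) * R m, ?_, fun h hh => ?_⟩
  · refine natDegree_sum_le_of_forall_le _ _ fun m hm => ?_
    refine (natDegree_C_mul_le _ _).trans ((hR1 m).trans ?_)
    simp at hm; omega
  · rw [eval_finsetSum]
    simp only [eval_mul, eval_C]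
    rw [Finset.sum_congr rfl fun m _ => by rw [← hR2 m h hh]]
    simp only [bqL, eval_eq_sum_range, Finset.mul_sum, ← Finset.sum_sub_distrib,
      ← Finset.sum_add_distrib]
    exact Finset.sum_congr rfl fun m _ => by ring

theorem bq_half [Fintype V] (G : SimpleGraph V) (hconn : G.Connected)
    (D : ℕ) (hD : 3 ≤ D)
    (hdiam_le : ∀ x y : V, G.dist x y ≤ D) (hdiam : ∃ x y : V, G.dist x y = D)
    (p : ℕ → ℕ → ℕ → ℕ) (hdr : G.IsDistRegularWith D p)
    (b α β : ℝ) (hcp : HasClassicalParams D p b α β)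
    (ha1 : p 1 1 1 = 0) (ha2 : p 2 1 2 ≠ 0)
    (x : V) (i : ℕ) (hi1 : 1 ≤ i) (hiD : i ≤ D)
    (z z' : V) (hz : G.dist x z = i) (hz' : G.dist x z' = i) (hadj : G.Adj z z') (w : V)
    (hw : G.dist x w = 1) (hzw : G.dist z w = i + 1) : G.dist z' w = i + 1 := by
  classical
  have hbD : p D 1 (D+1) = 0 := by
    have := hcp.2.2.2 D le_rfl
    rw [sub_self, zero_mul] at this
    exact_mod_cast this
  have hb1 := bq_ne_one G hconn D hD hdiam_le hdiam p hdr hbD b α β hcp ha1 ha2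
  have hb0 := hcp.1
  have hbm := hcp.2.1
  have ht0 : b⁻¹ ≠ 0 := inv_ne_zero hb0
  have habs : |b⁻¹| ≠ 1 := by
    intro h
    rw [abs_inv, inv_eq_one, abs_eq zero_le_one] at h
    tauto
  have hinj : ∀ i j : ℕ, (b⁻¹)^i = (b⁻¹)^j → i = j := by
    intro i j h
    have := congrArg abs h
    rw [abs_pow, abs_pow] at this
    exact pow_right_injective₀ (abs_pos.2 ht0) habs this
  obtain ⟨c, hbal⟩ := bq_balanced G hconn D (by omega) hdiam_le hdiam p hdr hbD
    (fun h => (b⁻¹)^h) (fun i _ j _ h => hinj i j h) (bq_L_poly D p b α β hcp hb1)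
  obtain ⟨ζ, hζ⟩ := hbal (bqδ 1) (bqδ i)
  have hzz : G.dist z z' = 1 := SimpleGraph.dist_eq_one_iff_adj.2 hadj
  by_contra hcon
  have hz'w : G.dist z' w = i := by
    have t1 := hconn.dist_triangle (u := z) (v := z') (w := w)
    have t2 := hconn.dist_triangle (u := z') (v := x) (w := w)
    rw [SimpleGraph.dist_comm (u := z') (v := x)] at t2
    omega
  -- notations
  generalize ht : b⁻¹ = t at *
  have hwx : G.dist w x = 1 := by rw [SimpleGraph.dist_comm]; exact hw
  have hwz : G.dist w z = i + 1 := by rw [SimpleGraph.dist_comm]; exact hzw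
  have E1 := hζ w x z
  have E2 := hζ x x z
  rw [hwx, hwz, hz] at E1
  rw [hz, SimpleGraph.dist_self] at E2
  have cnt1 := bq_count G D p hdr i 1 i hiD (by omega) hiD x z hz
  have cnt2 : (p i 1 i : ℝ) = ∑ v : V, bqδ i (G.dist x v) * bqδ 1 (G.dist v z) := by
    rw [bq_count G D p hdr i 1 i hiD (by omega) hiD z x (by rw [SimpleGraph.dist_comm]; exact hz)]
    refine Finset.sum_congr rfl fun v _ => ?_
    rw [SimpleGraph.dist_comm (u := z) (v := v), SimpleGraph.dist_comm (u := v) (v := x)]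
    simp only [bqδ]
    by_cases h1 : G.dist v z = 1 <;> by_cases h2 : G.dist x v = i <;> simp [h1, h2]
  have F1 : ∑ v : V, bqδ 1 (G.dist x v) * (t ^ (G.dist w v) + c) * bqδ i (G.dist v z) =
      p i 1 i * (t^2 + c) := by
    rw [cnt1, Finset.sum_mul]
    refine Finset.sum_congr rfl fun v _ => ?_
    simp only [bqδ]
    by_cases h1 : G.dist x v = 1
    · by_cases h2 : G.dist v z = i
      · have : G.dist w v = 2 := by
          have t1 := hconn.dist_triangle (u := w) (v := x) (w := v)
          have hne : G.dist w v ≠ 0 := by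
            intro h
            rw [hconn.dist_eq_zero_iff] at h
            subst h
            rw [SimpleGraph.dist_comm] at h2
            omega
          have hne1 : G.dist w v ≠ 1 := by
            intro h
            have h3 := hdr 1 1 1 (by omega) (by omega) (by omega) x w hw
            rw [ha1, Set.ncard_eq_zero (Set.toFinite _)] at h3
            have : v ∈ {z | G.dist x z = 1 ∧ G.dist w z = 1} := ⟨h1, h⟩
            rw [h3] at this
            exact this
          omega
        simp [h1, h2, this]
      · simp [h1, h2]
    · simp [h1]
  have F2 : ∑ v : V, bqδ 1 (G.dist x v) * (t ^ (G.dist x v) + c) * bqδ i (G.dist v z) =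
      p i 1 i * (t^1 + c) := by
    rw [cnt1, Finset.sum_mul]
    refine Finset.sum_congr rfl fun v _ => ?_
    simp only [bqδ]
    by_cases h1 : G.dist x v = 1
    · by_cases h2 : G.dist v z = i <;> simp [h1, h2]
    · simp [h1]
  have F3 : ∑ v : V, bqδ i (G.dist x v) * (t ^ (G.dist x v) + c) * bqδ 1 (G.dist v z) =
      p i 1 i * (t^i + c) := by
    rw [cnt2, Finset.sum_mul]
    refine Finset.sum_congr rfl fun v _ => ?_
    simp only [bqδ]
    by_cases h1 : G.dist x v = i
    · by_cases h2 : G.dist v z = 1 <;> simp [h1, h2]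
    · simp [h1]
  have F4 : ∑ v : V, bqδ i (G.dist x v) * (t ^ (G.dist w v) + c) * bqδ 1 (G.dist v z) =
      p i 1 i * (t^(i+1) + c) + (t^i - t^(i+1)) *
      ∑ v : V, bqδ i (G.dist x v) * bqδ 1 (G.dist v z) * bqδ i (G.dist w v) := by
    rw [cnt2, Finset.sum_mul, Finset.mul_sum, ← Finset.sum_add_distrib]
    refine Finset.sum_congr rfl fun v _ => ?_
    simp only [bqδ]
    by_cases h1 : G.dist x v = i
    · by_cases h2 : G.dist v z = 1
      · have t1 := hconn.dist_triangle (u := w) (v := x) (w := v)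
        have t2 := hconn.dist_triangle (u := w) (v := v) (w := z)
        have : G.dist w v = i ∨ G.dist w v = i + 1 := by omega
        rcases this with h | h
        · simp [h1, h2, h]; ring
        · simp [h1, h2, h]
      · simp [h2]
    · simp [h1]
  have hS : 0 < ∑ v : V, bqδ i (G.dist x v) * bqδ 1 (G.dist v z) * bqδ i (G.dist w v) := by
    refine Finset.sum_pos' (fun v _ => ?_) ⟨z', Finset.mem_univ _, ?_⟩
    · simp only [bqδ]; positivity
    · rw [hz', SimpleGraph.dist_comm (u := z'), hzz, SimpleGraph.dist_comm (u := w), hz'w]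
      simp [bqδ]
  generalize (∑ v : V, bqδ i (G.dist x v) * bqδ 1 (G.dist v z) * bqδ i (G.dist w v)) = S at *
  rw [F1, F4] at E1
  rw [F2, F3] at E2
  have n1 : t^i - t^0 ≠ 0 := fun h => by have := hinj i 0 (sub_eq_zero.1 h); omega
  have n2 : t^i - t^(i+1) ≠ 0 := fun h => by have := hinj i (i+1) (sub_eq_zero.1 h); omega
  have : S * ((t^i - t^(i+1)) * (t^i - t^0)) = 0 := by
    obtain ⟨m, rfl⟩ : ∃ m, i = m + 1 := ⟨i-1, by omega⟩
    simp only [pow_succ, pow_zero, one_mul] at E1 E2 ⊢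
    linear_combination (-(t^m*t - 1)) * E1 + (t^m*t*t - t) * E2
  exact (mul_ne_zero hS.ne' (mul_ne_zero n2 n1)) this

/-- In a distance-regular graph with classical parameters `(D, b, α, β)`,
`D ≥ 3`, `a₁ = 0` and `a₂ ≠ 0`: for any vertex `x`, any `1 ≤ i ≤ D`, and any adjacent
vertices `z, z' ∈ Γ_i(x)`, one has `B(x,z) = B(x,z')`. -/
theorem Bset_eq_of_adj [Fintype V] (G : SimpleGraph V) (hconn : G.Connected)
    (D : ℕ) (hD : 3 ≤ D)
    (hdiam_le : ∀ x y : V, G.dist x y ≤ D) (hdiam : ∃ x y : V, G.dist x y = D)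
    (p : ℕ → ℕ → ℕ → ℕ) (hdr : G.IsDistRegularWith D p)
    (b α β : ℝ) (hcp : HasClassicalParams D p b α β)
    (ha1 : p 1 1 1 = 0) (ha2 : p 2 1 2 ≠ 0)
    (x : V) (i : ℕ) (hi1 : 1 ≤ i) (hiD : i ≤ D)
    (z z' : V) (hz : G.dist x z = i) (hz' : G.dist x z' = i) (hadj : G.Adj z z') :
    Bset G x z = Bset G x z' := by
  ext w
  simp only [Bset, Set.mem_ofPred_eq, hz, hz']
  constructor
  · rintro ⟨h1, h2⟩
    exact ⟨h1, bq_half G hconn D hD hdiam_le hdiam p hdr b α β hcp ha1 ha2 x i hi1 hiD z z' hz hz'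
      hadj w h1 h2⟩
  · rintro ⟨h1, h2⟩
    exact ⟨h1, bq_half G hconn D hD hdiam_le hdiam p hdr b α β hcp ha1 ha2 x i hi1 hiD z' z hz' hz
      hadj.symm w h1 h2⟩
end
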